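/- arXiv:0712.1725 — 6 statements merged into one kernel-verified Lean document; each statement's English description precedes it below -/
import Mathlib

section
/- Let Φ be a reduced crystallographic root system in a finite-dimensional vector space over a field of characteristic zero, Δ a base of Φ, and γ an automorphism of Φ which maps Δ onto Δ. Let α ∈ Φ and let l be the cardinality of the γ-orbit (α) = {γ^i(α) : i ∈ ℤ}. Then one of the following two cases occurs: (i) any two distinct roots in (α) are orthogonal, i.e. ⟨γ^i α, (γ^j α)^∨⟩ = 0 whenever γ^i α ≠ γ^j α; or (ii) l is even and, for all 0 ≤ i < j < l, the pairing ⟨γ^i α, (γ^j α)^∨⟩ equals −1 if j − i = l/2 and equals 0 otherwise — in particular ⟨α, (γ^{l/2} α)^∨⟩ = −1, so that the roots of (α) generate a subsystem of type A₂^{l/2}. -/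
/-- The trace map sends a coroot to a multiple of its root. -/
lemma aux_trace {k V : Type*} [Field k] [CharZero k] [AddCommGroup V] [Module k V]
    (F : Finset V) (f : V →ₗ[k] k) (a : V) (hfa : f a = 2)
    (hrefl : ∀ β ∈ F, β - f β • a ∈ F) :
    (2 : k) • ∑ β ∈ F, f β • β = (∑ β ∈ F, f β * f β) • a := by
  have hinv : ∀ β, (β - f β • a) - f (β - f β • a) • a = β := by
    intro β
    simp only [map_sub, map_smul, hfa, smul_eq_mul]
    module
  have h : ∑ β ∈ F, f β • β = ∑ β ∈ F, f (β - f β • a) • (β - f β • a) := by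
    refine Finset.sum_bij' (fun β _ => β - f β • a) (fun β _ => β - f β • a) ?_ ?_ ?_ ?_ ?_
    · exact hrefl
    · exact hrefl
    · intro β _; exact hinv β
    · intro β _; exact hinv β
    · intro β _
      simp only [hinv]
  have h2 : ∑ β ∈ F, f (β - f β • a) • (β - f β • a)
      = (∑ β ∈ F, f β * f β) • a - ∑ β ∈ F, f β • β := by
    rw [Finset.sum_smul, ← Finset.sum_sub_distrib]
    refine Finset.sum_congr rfl fun β _ => ?_
    simp only [map_sub, map_smul, hfa, smul_eq_mul]
    module
  rw [two_smul]
  nth_rewrite 1 [h]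
  rw [h2]
  abel

/-- Positivity of the form on integral functionals. -/
lemma aux_pos {k V : Type*} [Field k] [CharZero k] [AddCommGroup V] [Module k V]
    (F : Finset V) (f : V →ₗ[k] k) (hint : ∀ β ∈ F, ∃ z : ℤ, f β = (z : k))
    (hne : ∑ β ∈ F, f β • β ≠ 0) :
    ∃ n : ℤ, 0 < n ∧ f (∑ β ∈ F, f β • β) = (n : k) := by
  choose! z hz using hint
  refine ⟨∑ β ∈ F, z β * z β, ?_, ?_⟩
  · obtain ⟨β, hβ, hb⟩ := Finset.exists_ne_zero_of_sum_ne_zero hne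
    refine Finset.sum_pos' (fun i _ => mul_self_nonneg _) ⟨β, hβ, ?_⟩
    have : z β ≠ 0 := by
      intro h
      apply hb
      rw [hz β hβ, h]; simp
    exact mul_self_pos.2 this
  · rw [map_sum]
    push_cast
    refine Finset.sum_congr rfl fun β hβ => ?_
    rw [map_smul, smul_eq_mul, hz β hβ]

lemma aux_norm {k V : Type*} [Field k] [CharZero k] [AddCommGroup V] [Module k V]
    (F : Finset V) (f : V →ₗ[k] k) (hint : ∀ β ∈ F, ∃ z : ℤ, f β = (z : k))
    (hne : ∃ β ∈ F, f β ≠ 0) :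
    ∃ n : ℤ, 0 < n ∧ ∑ β ∈ F, f β * f β = (n : k) := by
  choose! z hz using hint
  refine ⟨∑ β ∈ F, z β * z β, ?_, ?_⟩
  · obtain ⟨β, hβ, hb⟩ := hne
    refine Finset.sum_pos' (fun i _ => mul_self_nonneg _) ⟨β, hβ, ?_⟩
    have : z β ≠ 0 := by
      intro h
      apply hb
      rw [hz β hβ, h]; simp
    exact mul_self_pos.2 this
  · push_cast
    refine Finset.sum_congr rfl fun β hβ => ?_
    rw [hz β hβ]

/-- The height functional. -/
lemma aux_height {k V : Type*} [Field k] [CharZero k] [AddCommGroup V] [Module k V]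
    (Φ : Set V) (h0 : (0 : V) ∉ Φ) (hspan : Submodule.span k Φ = ⊤)
    (Δ : Set V)
    (hΔli : LinearIndependent k (fun δ : Δ => (δ : V)))
    (hbase : ∀ β ∈ Φ, ∃ c : V →₀ ℤ, (c.support : Set V) ⊆ Δ ∧
      β = c.sum (fun δ z => (z : k) • δ) ∧ ((∀ δ, 0 ≤ c δ) ∨ (∀ δ, c δ ≤ 0)))
    (γ : V ≃ₗ[k] V) (hγΔ : γ '' Δ = Δ) :
    ∃ h : V →ₗ[k] k, (∀ x, h (γ x) = h x) ∧ ∀ β ∈ Φ, h β ≠ 0 := by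
  have hsp : ⊤ ≤ Submodule.span k (Set.range (fun δ : Δ => (δ : V))) := by
    rw [← hspan, Submodule.span_le]
    intro β hβ
    obtain ⟨c, hc, hb, -⟩ := hbase β hβ
    rw [hb]
    refine Submodule.sum_mem _ fun δ hδ => Submodule.smul_mem _ _ (Submodule.subset_span ?_)
    exact ⟨⟨δ, hc hδ⟩, rfl⟩
  let b := Module.Basis.mk hΔli hsp
  let h : V →ₗ[k] k := b.constr k (fun _ => (1 : k))
  have h1 : ∀ δ ∈ Δ, h δ = 1 := by
    intro δ hδ
    have := b.constr_basis k (fun _ => (1 : k)) ⟨δ, hδ⟩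
    simpa [b] using this
  refine ⟨h, ?_, ?_⟩
  · have : h ∘ₗ γ.toLinearMap = h := by
      refine b.ext fun i => ?_
      have hb : b i = (i : V) := by simp [b]
      rw [hb]
      have : γ i ∈ Δ := hγΔ.subset ⟨_, i.2, rfl⟩
      simp [h1 _ this, h1 _ i.2]
    intro x
    exact LinearMap.congr_fun this x
  · intro β hβ hz
    obtain ⟨c, hc, hb, hs⟩ := hbase β hβ
    have e : h β = ((∑ δ ∈ c.support, c δ : ℤ) : k) := by
      rw [hb, Finsupp.sum, map_sum]
      push_cast
      refine Finset.sum_congr rfl fun δ hδ => ?_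
      rw [map_smul, h1 δ (hc hδ), smul_eq_mul, mul_one]
    rw [e, Int.cast_eq_zero] at hz
    have hc0 : ∀ δ ∈ c.support, c δ = 0 := by
      rcases hs with hs | hs
      · exact (Finset.sum_eq_zero_iff_of_nonneg fun i _ => hs i).1 hz
      · exact (Finset.sum_eq_zero_iff_of_nonpos fun i _ => hs i).1 hz
    apply h0
    have : β = 0 := by
      rw [hb, Finsupp.sum]
      refine Finset.sum_eq_zero fun δ hδ => ?_
      rw [hc0 δ hδ]; simp
    exact this ▸ hβ

lemma aux_zpow {k V : Type*} [Field k] [AddCommGroup V] [Module k V]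
    (Φ : Set V) (coroot : V → (V →ₗ[k] k))
    (γ : V ≃ₗ[k] V) (hγΦ : γ '' Φ = Φ)
    (hγpair : ∀ α ∈ Φ, ∀ β ∈ Φ, coroot (γ α) (γ β) = coroot α β) (i : ℤ) :
    (∀ x ∈ Φ, (γ ^ i) x ∈ Φ) ∧
      ∀ x ∈ Φ, ∀ y ∈ Φ, coroot ((γ ^ i) x) ((γ ^ i) y) = coroot x y := by
  have m1 : ∀ x ∈ Φ, γ x ∈ Φ := fun x hx => by rw [← hγΦ]; exact ⟨x, hx, rfl⟩
  have m2 : ∀ x ∈ Φ, (γ⁻¹ : V ≃ₗ[k] V) x ∈ Φ := fun x hx => by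
    rw [← hγΦ] at hx
    obtain ⟨y, hy, rfl⟩ := hx
    have : (γ⁻¹ : V ≃ₗ[k] V) (γ y) = y := γ.symm_apply_apply y
    rwa [this]
  have e2 : ∀ x, γ ((γ⁻¹ : V ≃ₗ[k] V) x) = x := fun x => γ.apply_symm_apply x
  induction i using Int.induction_on with
  | zero => simp
  | succ n ih =>
    rw [zpow_add_one]
    refine ⟨fun x hx => ih.1 _ (m1 x hx), fun x hx y hy => ?_⟩
    exact (ih.2 _ (m1 x hx) _ (m1 y hy)).trans (hγpair x hx y hy)
  | pred n ih =>
    rw [zpow_sub_one]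
    refine ⟨fun x hx => ih.1 _ (m2 x hx), fun x hx y hy => ?_⟩
    refine (ih.2 _ (m2 x hx) _ (m2 y hy)).trans ?_
    rw [← hγpair _ (m2 x hx) _ (m2 y hy), e2, e2]

lemma aux_period {k V : Type*} [Field k] [AddCommGroup V] [Module k V]
    (γ : V ≃ₗ[k] V) (α : V) (i : ℤ)
    (hf : (Set.range fun i : ℤ => (γ ^ i) α).Finite) :
    (γ ^ i) α = α ↔ ((Nat.card (Set.range fun i : ℤ => (γ ^ i) α) : ℕ) : ℤ) ∣ i := by
  have hr : (Set.range fun i : ℤ => (γ ^ i) α) = MulAction.orbit (Subgroup.zpowers γ) α := by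
    ext x
    constructor
    · rintro ⟨i, rfl⟩
      exact ⟨⟨γ ^ i, i, rfl⟩, rfl⟩
    · rintro ⟨⟨_, i, rfl⟩, rfl⟩
      exact ⟨i, rfl⟩
  rw [hr] at hf ⊢
  have := hf.fintype
  rw [Nat.card_eq_fintype_card, ← MulAction.minimalPeriod_eq_card,
    ← MulAction.zpow_smul_eq_iff_minimalPeriod_dvd]
  rfl



/-- let `Φ` be a reduced crystallographic root system (over a field
of characteristic zero) with base `Δ`, and `γ` an automorphism of `Φ` mapping
`Δ` onto `Δ`.  For `α ∈ Φ` with `γ`-orbit of cardinality `l`, either any two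
distinct roots in the orbit are orthogonal, or `l` is even and for
`0 ≤ i < j < l` the pairing `⟨γ^i α, (γ^j α)^∨⟩` equals `-1` if `j - i = l/2`
and `0` otherwise (so the orbit generates a subsystem of type `A₂^{l/2}`). -/
theorem stmt2 {k V : Type*} [Field k] [CharZero k] [AddCommGroup V] [Module k V]
    [FiniteDimensional k V]
    (Φ : Set V) (hfin : Φ.Finite) (h0 : (0 : V) ∉ Φ)
    (hspan : Submodule.span k Φ = ⊤)
    (coroot : V → (V →ₗ[k] k))
    (hself : ∀ α ∈ Φ, coroot α α = 2)
    (hrefl : ∀ α ∈ Φ, ∀ β ∈ Φ, β - coroot α β • α ∈ Φ)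
    (hcrys : ∀ α ∈ Φ, ∀ β ∈ Φ, ∃ z : ℤ, coroot α β = (z : k))
    (hred : ∀ α ∈ Φ, ∀ t : k, t • α ∈ Φ → t = 1 ∨ t = -1)
    (Δ : Set V) (hΔΦ : Δ ⊆ Φ)
    (hΔli : LinearIndependent k (fun δ : Δ => (δ : V)))
    (hbase : ∀ β ∈ Φ, ∃ c : V →₀ ℤ, (c.support : Set V) ⊆ Δ ∧
      β = c.sum (fun δ z => (z : k) • δ) ∧ ((∀ δ, 0 ≤ c δ) ∨ (∀ δ, c δ ≤ 0)))
    (γ : V ≃ₗ[k] V) (hγΦ : γ '' Φ = Φ)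
    (hγpair : ∀ α ∈ Φ, ∀ β ∈ Φ, coroot (γ α) (γ β) = coroot α β)
    (hγΔ : γ '' Δ = Δ)
    (α : V) (hα : α ∈ Φ)
    (l : ℕ) (hl : l = Nat.card (Set.range fun i : ℤ => (γ ^ i) α)) :
    (∀ i j : ℤ, (γ ^ i) α ≠ (γ ^ j) α → coroot ((γ ^ j) α) ((γ ^ i) α) = 0) ∨
    (Even l ∧ ∀ i j : ℕ, i < j → j < l →
      coroot ((γ ^ j) α) ((γ ^ i) α) = if j - i = l / 2 then (-1 : k) else 0) := by
  classical
  obtain ⟨h, hhγ, hhne⟩ := aux_height Φ h0 hspan Δ hΔli hbase γ hγΔ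
  have hz := aux_zpow Φ coroot γ hγΦ hγpair
  have hhz : ∀ (i : ℤ) x, h ((γ ^ i) x) = h x := by
    have e2 : ∀ x, γ ((γ⁻¹ : V ≃ₗ[k] V) x) = x := fun x => γ.apply_symm_apply x
    intro i
    induction i using Int.induction_on with
    | zero => simp
    | succ n ih => intro x; rw [zpow_add_one]; exact (ih _).trans (hhγ x)
    | pred n ih =>
      intro x; rw [zpow_sub_one]; refine (ih _).trans ?_
      rw [← hhγ]; exact congrArg h (e2 x)
  have hadd : ∀ (i j : ℤ) x, (γ ^ i) ((γ ^ j) x) = (γ ^ (i + j)) x := by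
    intro i j x; rw [zpow_add]; rfl
  set F := hfin.toFinset with hF
  have memF : ∀ x, x ∈ F ↔ x ∈ Φ := fun x => hfin.mem_toFinset
  have hOfin : (Set.range fun i : ℤ => (γ ^ i) α).Finite :=
    hfin.subset (by rintro _ ⟨i, rfl⟩; exact (hz i).1 α hα)
  have hper := fun i => aux_period γ α i hOfin
  rw [← hl] at hper
  have hlpos : 0 < l := by
    rw [hl]
    have := hOfin.to_subtype
    have : Nonempty (Set.range fun i : ℤ => (γ ^ i) α) := ⟨⟨_, 0, rfl⟩⟩
    exact Nat.card_pos
  set O := hOfin.toFinset with hO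
  have memO : ∀ x, x ∈ O ↔ ∃ i : ℤ, (γ ^ i) α = x := fun x => hOfin.mem_toFinset
  have hOΦ : ∀ x ∈ O, x ∈ Φ := by
    intro x hx
    obtain ⟨i, rfl⟩ := (memO x).1 hx
    exact (hz i).1 α hα
  have hOcard : O.card = l := by
    rw [hl, Nat.card_coe_set_eq, Set.ncard_eq_toFinset_card _ hOfin]
  have hOh : ∀ x ∈ O, h x = h α := by
    intro x hx
    obtain ⟨i, rfl⟩ := (memO x).1 hx
    exact hhz i α
  have hαO : α ∈ O := (memO α).2 ⟨0, by simp⟩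
  obtain ⟨M, hM, hMα⟩ := aux_norm F (coroot α)
    (fun β hβ => hcrys α hα β ((memF β).1 hβ))
    ⟨α, (memF α).2 hα, by rw [hself α hα]; exact two_ne_zero⟩
  have hMk : (M : k) ≠ 0 := by exact_mod_cast hM.ne'
  have hN : ∀ x ∈ O, ∑ β ∈ F, coroot x β * coroot x β = (M : k) := by
    intro x hx
    obtain ⟨i, rfl⟩ := (memO x).1 hx
    rw [← hMα]
    refine Finset.sum_bij' (fun β _ => (γ ^ (-i)) β) (fun β _ => (γ ^ i) β) ?_ ?_ ?_ ?_ ?_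
    · intro β hβ; exact (memF _).2 ((hz _).1 _ ((memF _).1 hβ))
    · intro β hβ; exact (memF _).2 ((hz _).1 _ ((memF _).1 hβ))
    · intro β hβ; simp only [hadd]; simp
    · intro β hβ; simp only [hadd]; simp
    · intro β hβ
      have hb := (memF _).1 hβ
      have e := (hz i).2 α hα _ ((hz (-i)).1 β hb)
      rw [hadd] at e
      simp only [add_neg_cancel, zpow_zero, LinearEquiv.coe_one, id] at e
      rw [e]
  have hT : ∀ x ∈ O, (2 : k) • ∑ β ∈ F, coroot x β • β = (M : k) • x := by
    intro x hx
    rw [← hN x hx]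
    refine aux_trace F (coroot x) x (hself x (hOΦ x hx)) ?_
    intro β hβ
    exact (memF _).2 (hrefl x (hOΦ x hx) β ((memF β).1 hβ))
  have hint : ∀ x ∈ O, ∀ β ∈ F, ∃ z : ℤ, coroot x β = (z : k) :=
    fun x hx β hβ => hcrys x (hOΦ x hx) β ((memF β).1 hβ)
  have hOF : ∀ x ∈ O, x ∈ F := fun x hx => (memF x).2 (hOΦ x hx)
  have key : ∀ (f : V →ₗ[k] k) (v : V), (∀ β ∈ F, ∃ z : ℤ, f β = (z : k)) →
      (2 : k) • ∑ β ∈ F, f β • β = (M : k) • v → v ≠ 0 → ∀ q : ℤ, f v = q → 0 < q := by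
    intro f v hf hv hv0 q hq
    have hne : ∑ β ∈ F, f β • β ≠ 0 := by
      intro h'
      rw [h', smul_zero] at hv
      exact (smul_ne_zero hMk hv0) hv.symm
    obtain ⟨n, hn, hfn⟩ := aux_pos F f hf hne
    have e := congrArg f hv
    rw [map_smul, map_smul, hfn, hq, smul_eq_mul, smul_eq_mul] at e
    have e' : 2 * n = M * q := by exact_mod_cast e
    by_contra hcon
    push Not at hcon
    nlinarith
  have hsymm : ∀ x ∈ O, ∀ y ∈ O, coroot x y = coroot y x := by
    intro x hx y hy
    have e1 := congrArg (coroot y) (hT x hx)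
    have e2 := congrArg (coroot x) (hT y hy)
    rw [map_smul, map_smul, map_sum] at e1 e2
    have e3 : ∑ β ∈ F, coroot y (coroot x β • β) = ∑ β ∈ F, coroot x (coroot y β • β) := by
      refine Finset.sum_congr rfl fun β _ => ?_
      rw [map_smul, map_smul, smul_eq_mul, smul_eq_mul, mul_comm]
    rw [e3, e2] at e1
    exact smul_right_injective k hMk e1
  have hval : ∀ x ∈ O, ∀ y ∈ O, x ≠ y → coroot x y = 0 ∨ coroot x y = -1 := by
    intro x hx y hy hxy
    obtain ⟨a, ha⟩ := hint x hx y (hOF y hy)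
    have ha' : coroot y x = a := by rw [← hsymm x hx y hy, ha]
    have h1 : 0 < 4 - 2 * a := by
      refine key (coroot x - coroot y) (x - y) ?_ ?_ (sub_ne_zero.2 hxy) _ ?_
      · intro β hβ
        obtain ⟨u, hu⟩ := hint x hx β hβ
        obtain ⟨w, hw⟩ := hint y hy β hβ
        exact ⟨u - w, by simp [hu, hw]⟩
      · rw [smul_sub, ← hT x hx, ← hT y hy, ← smul_sub, ← Finset.sum_sub_distrib]
        simp only [LinearMap.sub_apply, sub_smul]
      · simp only [LinearMap.sub_apply, map_sub, ha, ha', hself x (hOΦ x hx), hself y (hOΦ y hy)]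
        push_cast; ring
    have h2 : 0 < 4 + 2 * a := by
      refine key (coroot x + coroot y) (x + y) ?_ ?_ ?_ _ ?_
      · intro β hβ
        obtain ⟨u, hu⟩ := hint x hx β hβ
        obtain ⟨w, hw⟩ := hint y hy β hβ
        exact ⟨u + w, by simp [hu, hw]⟩
      · rw [smul_add, ← hT x hx, ← hT y hy, ← smul_add, ← Finset.sum_add_distrib]
        simp only [LinearMap.add_apply, add_smul]
      · intro h'
        have := congrArg h h'
        rw [map_add, hOh x hx, hOh y hy, map_zero, ← two_mul] at this
        exact mul_ne_zero two_ne_zero (hhne α hα) this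
      · simp only [LinearMap.add_apply, map_add, ha, ha', hself x (hOΦ x hx), hself y (hOΦ y hy)]
        push_cast; ring
    have h3 : a ≠ 1 := by
      rintro rfl
      have := hrefl x (hOΦ x hx) y (hOΦ y hy)
      rw [ha, Int.cast_one, one_smul] at this
      apply hhne _ this
      rw [map_sub, hOh x hx, hOh y hy, sub_self]
    have h4 : a = 0 ∨ a = -1 := by omega
    rcases h4 with rfl | rfl
    · left; simpa using ha
    · right; simpa using ha
  -- the sum over the orbit
  have hrow : ∀ y ∈ O, ∑ x ∈ O, coroot x y = ∑ x ∈ O, coroot x α := by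
    intro y hy
    obtain ⟨i, rfl⟩ := (memO y).1 hy
    refine Finset.sum_bij' (fun β _ => (γ ^ (-i)) β) (fun β _ => (γ ^ i) β) ?_ ?_ ?_ ?_ ?_
    · intro β hβ
      obtain ⟨j, rfl⟩ := (memO β).1 hβ
      exact (memO _).2 ⟨-i + j, (hadd _ _ _).symm⟩
    · intro β hβ
      obtain ⟨j, rfl⟩ := (memO β).1 hβ
      exact (memO _).2 ⟨i + j, (hadd _ _ _).symm⟩
    · intro β hβ; simp only [hadd]; simp
    · intro β hβ; simp only [hadd]; simp
    · intro β hβ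
      have e := (hz i).2 _ ((hz (-i)).1 β (hOΦ β hβ)) α hα
      rw [hadd] at e
      simp only [add_neg_cancel, zpow_zero, LinearEquiv.coe_one, id] at e
      exact e
  have huniq : ∀ x ∈ O, ∀ y ∈ O, x ≠ α → y ≠ α → coroot x α = -1 → coroot y α = -1 → x = y := by
    intro x hx y hy hxα hyα hxc hyc
    by_contra hxy
    choose! z hzz using fun x hx => hint x hx α (hOF α hαO)
    have hs : 0 < (l : ℤ) * ∑ x ∈ O, z x := by
      refine key (∑ x ∈ O, coroot x) (∑ x ∈ O, x) ?_ ?_ ?_ _ ?_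
      · intro β hβ
        choose! u hu using fun x hx => hint x hx β hβ
        refine ⟨∑ x ∈ O, u x, ?_⟩
        rw [LinearMap.sum_apply]
        push_cast
        exact Finset.sum_congr rfl hu
      · simp only [LinearMap.sum_apply, Finset.sum_smul]
        rw [Finset.sum_comm, Finset.smul_sum, Finset.smul_sum]
        exact Finset.sum_congr rfl hT
      · intro h'
        have := congrArg h h'
        rw [map_sum, Finset.sum_congr rfl hOh, Finset.sum_const, hOcard, map_zero,
          nsmul_eq_mul] at this
        exact mul_ne_zero (by exact_mod_cast hlpos.ne') (hhne α hα) this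
      · rw [map_sum]
        simp only [LinearMap.sum_apply]
        rw [Finset.sum_congr rfl hrow, Finset.sum_const, hOcard, nsmul_eq_mul,
          Finset.sum_congr rfl hzz]
        push_cast
        rfl
    have hs' : 0 < ∑ x ∈ O, z x := pos_of_mul_pos_right hs (by positivity)
    have hzα : z α = 2 := by
      have := hzz α hαO
      rw [hself α hα] at this
      exact_mod_cast this.symm
    have hzx : z x = -1 := by
      have := hzz x hx
      rw [hxc] at this
      exact_mod_cast this.symm
    have hzy : z y = -1 := by
      have := hzz y hy
      rw [hyc] at this
      exact_mod_cast this.symm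
    have hy1 : y ∈ (O.erase α).erase x :=
      Finset.mem_erase.2 ⟨fun e => hxy e.symm, Finset.mem_erase.2 ⟨hyα, hy⟩⟩
    rw [← Finset.add_sum_erase O z hαO,
      ← Finset.add_sum_erase (O.erase α) z (Finset.mem_erase.2 ⟨hxα, hx⟩),
      ← Finset.add_sum_erase _ z hy1, hzα, hzx, hzy] at hs'
    have : ∑ x ∈ ((O.erase α).erase x).erase y, z x ≤ 0 := by
      refine Finset.sum_nonpos fun w hw => ?_
      simp only [Finset.mem_erase] at hw
      have h1 := hzz w hw.2.2.2
      rcases hval w hw.2.2.2 α hαO hw.2.2.1 with h2 | h2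
      · rw [h2] at h1
        have : z w = 0 := by exact_mod_cast h1.symm
        omega
      · rw [h2] at h1
        have : z w = -1 := by exact_mod_cast h1.symm
        omega
    omega
  have hmemO : ∀ i : ℤ, (γ ^ i) α ∈ O := fun i => (memO _).2 ⟨i, rfl⟩
  have hshift : ∀ i j : ℤ, coroot ((γ ^ j) α) ((γ ^ i) α) = coroot ((γ ^ (j - i)) α) α := by
    intro i j
    have e := (hz i).2 _ ((hz (j - i)).1 α hα) α hα
    rwa [hadd, add_sub_cancel] at e
  have hshift' : ∀ i j : ℤ, (γ ^ i) α = (γ ^ j) α ↔ (l : ℤ) ∣ j - i := by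
    intro i j
    rw [← hper]
    constructor
    · intro e
      have := congrArg (γ ^ (-i)) e
      rw [hadd, hadd] at this
      rw [neg_add_cancel, zpow_zero, neg_add_eq_sub] at this
      exact this.symm
    · intro e
      have := congrArg (γ ^ i) e
      rw [hadd, add_sub_cancel] at this
      exact this.symm
  by_cases hex : ∃ m : ℤ, (γ ^ m) α ≠ α ∧ coroot ((γ ^ m) α) α ≠ 0
  · right
    obtain ⟨m, hm, hm0⟩ := hex
    have hm1 := (hval _ (hmemO m) α hαO hm).resolve_left hm0
    have hmd : ¬ (l : ℤ) ∣ m := fun hd => hm ((hper m).2 hd)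
    have hneg : coroot ((γ ^ (-m)) α) α = -1 := by
      have := hshift m 0
      rw [zero_sub] at this
      rw [← this, hsymm _ (hmemO _) _ (hmemO _), hshift, sub_zero, hm1]
    have hnm : (γ ^ (-m)) α ≠ α := by
      rw [Ne, hper, dvd_neg]; exact hmd
    have e := huniq _ (hmemO _) _ (hmemO _) hnm hm hneg hm1
    rw [hshift', sub_neg_eq_add] at e
    obtain ⟨t, ht⟩ := e
    have hodd : ¬ Even t := by
      rintro ⟨r, rfl⟩
      exact hmd ⟨r, by linarith⟩
    rw [Int.not_even_iff_odd] at hodd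
    obtain ⟨r, rfl⟩ := hodd
    have hle : Even l := by
      have : Even (l : ℤ) := ⟨m - l * r, by linarith⟩
      exact_mod_cast this
    obtain ⟨n, hn⟩ := hle
    have hmn : m = n + l * r := by
      have : (l : ℤ) = n + n := by exact_mod_cast hn
      linarith
    refine ⟨⟨n, hn⟩, ?_⟩
    intro i j hij hjl
    have hsh := hshift i j
    simp only [zpow_natCast] at hsh
    rw [hsh]
    have hln : l / 2 = n := by omega
    rw [hln]
    split_ifs with hc
    · have : (γ ^ ((j : ℤ) - i)) α = (γ ^ m) α := by
        rw [hshift']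
        exact ⟨r, by rw [hmn]; omega⟩
      rw [this, hm1]
    · have hjiα : (γ ^ ((j : ℤ) - i)) α ≠ α := by
        rw [Ne, hper]
        intro hd
        have := Int.le_of_dvd (by omega) hd
        omega
      refine (hval _ (hmemO _) α hαO hjiα).resolve_right ?_
      intro h1
      have e := huniq _ (hmemO _) _ (hmemO _) hjiα hm h1 hm1
      rw [hshift', hmn] at e
      have e2 : (l : ℤ) ∣ n - (j - i) := by
        have := dvd_sub e (dvd_mul_right (l : ℤ) r)
        have e3 : (n : ℤ) + l * r - ((j : ℤ) - i) - l * r = n - (j - i) := by ring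
        rwa [e3] at this
      have := Int.eq_zero_of_abs_lt_dvd e2 (by rw [abs_lt]; constructor <;> omega)
      omega
  · left
    push Not at hex
    intro i j hij
    rw [hshift]
    apply hex
    rw [Ne, hshift'] at hij
    rwa [Ne, hper]
end

section
/- Let k be an algebraically closed field of characteristic ≠ 2 and n ≥ 1. Every semisimple (i.e. diagonalizable) element of the orthogonal group O(2n,k) is conjugate, by an element of O(2n,k), to an element of T ∪ J'·T, where T is the subgroup of diagonal matrices in O(2n,k) and J' is the permutation matrix of the transposition (n, n+1). -/
open Matrix

/-- The `N×N` matrix with `1` on the antidiagonal and `0` elsewhere. -/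
def antidiagJ (k : Type*) [Field k] (N : ℕ) : Matrix (Fin N) (Fin N) k :=
  Matrix.of fun i j => if (i : ℕ) + (j : ℕ) = N - 1 then 1 else 0

/-- The permutation matrix of the transposition swapping `a` and `b`. -/
def swapMat (k : Type*) [Field k] (N : ℕ) (a b : Fin N) : Matrix (Fin N) (Fin N) k :=
  Matrix.of fun i j => if j = Equiv.swap a b i then 1 else 0

section helpers

variable {k : Type*} [Field k]

lemma exists_isotropic_comb [IsAlgClosed k] {V : Type*} [AddCommGroup V] [Module k V]
    (B : V →ₗ[k] V →ₗ[k] k) (v w : V) (hw : B w w ≠ 0) :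
    ∃ t : k, B (v + t • w) (v + t • w) = 0 := by
  obtain ⟨t, ht⟩ := IsAlgClosed.exists_root
    (Polynomial.C (B w w) * Polynomial.X ^ 2 + Polynomial.C (B v w + B w v) * Polynomial.X
      + Polynomial.C (B v v)) (by
        rw [Polynomial.degree_quadratic hw]; decide)
  refine ⟨t, ?_⟩
  simp [Polynomial.IsRoot] at ht
  simp
  linear_combination ht

/-- From an isotropic eigenvector we get a hyperbolic pair of eigenvectors. -/
lemma exists_pair (hchar : (2 : k) ≠ 0) {V : Type*} [AddCommGroup V] [Module k V]
    (B : V →ₗ[k] V →ₗ[k] k) (hs : ∀ v w, B v w = B w v)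
    (hnd : ∀ v, (∀ w, B v w = 0) → v = 0)
    (f : V →ₗ[k] V) (hf : ∀ v w, B (f v) (f w) = B v w)
    (hspan : Submodule.span k {v | ∃ c : k, f v = c • v} = ⊤)
    (v : V) (hv0 : v ≠ 0) (hv : B v v = 0) (c : k) (hc : f v = c • v) :
    ∃ w, ∃ d : k, f w = d • w ∧ B v w = 1 ∧ B w w = 0 ∧ c * d = 1 := by
  have h1 : ∃ w, ∃ d : k, f w = d • w ∧ B v w ≠ 0 := by
    by_contra! h
    apply hv0
    apply hnd
    intro w
    have hw : w ∈ Submodule.span k {v | ∃ c : k, f v = c • v} := by rw [hspan]; trivial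
    induction hw using Submodule.span_induction with
    | mem x hx => obtain ⟨d, hd⟩ := hx; exact h x d hd
    | zero => simp
    | add x y _ _ hx hy => simp [hx, hy]
    | smul a x _ hx => simp [hx]
  obtain ⟨w, d, hd, hvw⟩ := h1
  have hcd : c * d = 1 := by
    have := hf v w
    rw [hc, hd] at this
    simp at this
    apply mul_right_cancel₀ hvw
    linear_combination this
  have hww : (d * d - 1) * B w w = 0 := by
    have := hf w w
    rw [hd] at this
    simp at this
    linear_combination this
  by_cases hw : B w w = 0
  · exact ⟨(B v w)⁻¹ • w, d, by simp [hd, smul_comm d], by simp [hvw], by simp [hw], hcd⟩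
  · have hdd : d * d = 1 := by
      have := (mul_eq_zero.1 hww).resolve_right hw
      linear_combination this
    have hcd' : c = d := by
      have hd0 : d ≠ 0 := by rintro rfl; simp at hdd
      apply mul_right_cancel₀ hd0
      rw [hcd, hdd]
    subst hcd'
    refine ⟨(B v w)⁻¹ • (w - (B w w / (2 * B v w)) • v), c, ?_, ?_, ?_, hcd⟩
    · simp [hc, hd, smul_sub, smul_comm c]
    · simp [hv, hvw]
    · simp [hv, hs w v]
      right
      field_simp
      ring

lemma no_isotropic [IsAlgClosed k] {V : Type*} [AddCommGroup V] [Module k V]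
    [FiniteDimensional k V]
    (B : V →ₗ[k] V →ₗ[k] k)
    (f : V →ₗ[k] V) (hf : ∀ v w, B (f v) (f w) = B v w)
    (hspan : Submodule.span k {v | ∃ c : k, f v = c • v} = ⊤)
    (hiso : ∀ v, ∀ c : k, f v = c • v → B v v = 0 → v = 0) (hdim : 2 ≤ Module.finrank k V) :
    Module.finrank k V = 2 ∧ ∃ v w, v ≠ 0 ∧ w ≠ 0 ∧ f v = v ∧ f w = - w := by
  have key : ∀ c : k, ∃ v, f v = c • v ∧ ∀ w, f w = c • w → w ∈ Submodule.span k {v} := by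
    intro c
    by_cases h : ∃ v, f v = c • v ∧ v ≠ 0
    · obtain ⟨v, hv, hv0⟩ := h
      refine ⟨v, hv, fun w hw => ?_⟩
      obtain ⟨t, ht⟩ := exists_isotropic_comb B w v (fun h => hv0 (hiso v c hv h))
      have := hiso (w + t • v) c (by simp [hv, hw, smul_comm c]) ht
      rw [Submodule.mem_span_singleton]
      exact ⟨-t, by rw [neg_smul]; exact (eq_neg_of_add_eq_zero_left this).symm⟩
    · push Not at h
      refine ⟨0, by simp, fun w hw => ?_⟩
      rw [h w hw]; exact Submodule.zero_mem _
  obtain ⟨v, hv, hv'⟩ := key 1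
  obtain ⟨w, hw, hw'⟩ := key (-1)
  have htop : Submodule.span k {v, w} = ⊤ := by
    rw [eq_top_iff, ← hspan, Submodule.span_le]
    rintro u ⟨c, hc⟩
    by_cases hu : u = 0
    · rw [hu]; exact Submodule.zero_mem _
    have hB : B u u ≠ 0 := fun h => hu (hiso u c hc h)
    have hcc : c * c = 1 := by
      have := hf u u
      rw [hc] at this
      simp at this
      apply mul_right_cancel₀ hB
      linear_combination this
    rcases mul_self_eq_one_iff.1 hcc with h | h
    · subst h
      exact Submodule.span_mono (by simp) (hv' u hc)
    · subst h
      exact Submodule.span_mono (by simp) (hw' u hc)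
  have hone : ∀ z : V, Submodule.span k {z} ≠ ⊤ := by
    intro z hz
    have := finrank_span_le_card (R := k) ({z} : Set V)
    rw [hz, finrank_top] at this
    simp at this
    omega
  have hle : Module.finrank k V ≤ 2 := by
    classical
    have := finrank_span_finset_le_card (R := k) ({v, w} : Finset V)
    have h2 := Finset.card_le_two (a := v) (b := w)
    rw [Set.finrank, show (({v, w} : Finset V) : Set V) = {v, w} by simp, htop, finrank_top] at this
    omega
  refine ⟨le_antisymm hle hdim, v, w, ?_, ?_, by simpa using hv, by simpa using hw⟩
  · rintro rfl
    apply hone w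
    rw [← htop, Submodule.span_insert_zero]
  · rintro rfl
    apply hone v
    rw [← htop, Set.pair_comm, Submodule.span_insert_zero]

/-- the normal form -/
def HasNF (n : ℕ) {V : Type*} [AddCommGroup V] [Module k V]
    (B : V →ₗ[k] V →ₗ[k] k) (f : V →ₗ[k] V) : Prop :=
  ∃ b : ℕ → V, (∀ i j, i < 2 * n → j < 2 * n →
      B (b i) (b j) = if i + j = 2 * n - 1 then 1 else 0) ∧
    ((∀ i, i < 2 * n → ∃ c : k, f (b i) = c • b i) ∨
      (f (b (n - 1)) = b n ∧ f (b n) = b (n - 1) ∧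
        ∀ i, i < 2 * n → i ≠ n - 1 → i ≠ n → ∃ c : k, f (b i) = c • b i))

lemma normal_form [IsAlgClosed k] (hchar : (2 : k) ≠ 0) (n : ℕ) :
    ∀ {V : Type*} [AddCommGroup V] [Module k V] [FiniteDimensional k V]
    (B : V →ₗ[k] V →ₗ[k] k) (_hs : ∀ v w, B v w = B w v)
    (_hnd : ∀ v, (∀ w, B v w = 0) → v = 0)
    (f : V →ₗ[k] V) (_hf : ∀ v w, B (f v) (f w) = B v w)
    (_hspan : Submodule.span k {v | ∃ c : k, f v = c • v} = ⊤)
    (_hdim : Module.finrank k V = 2 * n), HasNF n B f := by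
  induction n with
  | zero =>
    intros
    exact ⟨fun _ => 0, by intro i j hi; omega, Or.inl (by intro i hi; omega)⟩
  | succ n ih =>
    intro V _ _ _ B hs hnd f hf hspan hdim
    by_cases hiso : ∀ v, ∀ c : k, f v = c • v → B v v = 0 → v = 0
    · obtain ⟨h2, v, w, hv0, hw0, hv, hw⟩ := no_isotropic B f hf hspan hiso (by omega)
      have hn : n = 0 := by omega
      subst hn
      have hBv : B v v ≠ 0 := fun h => hv0 (hiso v 1 (by simpa using hv) h)
      have hBw : B w w ≠ 0 := fun h => hw0 (hiso w (-1) (by simpa using hw) h)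
      have hvw : B v w = 0 := by
        have := hf v w
        rw [hv, hw] at this
        simp at this
        have h3 : 2 * B v w = 0 := by linear_combination -this
        exact (mul_eq_zero.1 h3).resolve_left hchar
      have hwv : B w v = 0 := by rw [hs, hvw]
      obtain ⟨s, hs'⟩ := IsAlgClosed.exists_pow_nat_eq (1 / (2 * B v v)) (n := 2) (by norm_num)
      obtain ⟨t, ht'⟩ := IsAlgClosed.exists_pow_nat_eq (-1 / (2 * B w w)) (n := 2) (by norm_num)
      have e1 : s ^ 2 * B v v = 1 / 2 := by rw [hs']; field_simp
      have e2 : t ^ 2 * B w w = - 1 / 2 := by rw [ht']; field_simp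
      refine ⟨fun i => if i = 0 then s • v + t • w else s • v - t • w, ?_, Or.inr ?_⟩
      · intro i j hi hj
        have hi' : i = 0 ∨ i = 1 := by omega
        have hj' : j = 0 ∨ j = 1 := by omega
        rcases hi' with rfl | rfl <;> rcases hj' with rfl | rfl <;> simp [hvw, hwv]
        · linear_combination e1 + e2
        · have : (1 : k) = 1 / 2 + 1 / 2 := by field_simp; norm_num
          linear_combination e1 - e2 - this
        · have : (1 : k) = 1 / 2 + 1 / 2 := by field_simp; norm_num
          linear_combination e1 - e2 - this
        · linear_combination e1 + e2
      · refine ⟨?_, ?_, ?_⟩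
        · simp [hv, hw, sub_eq_add_neg]
        · simp [hv, hw]
        · intro i hi; omega
    · push Not at hiso
      obtain ⟨v, c, hc, hvv, hv0⟩ := hiso
      obtain ⟨w, d, hd, hvw, hww, hcd⟩ := exists_pair hchar B hs hnd f hf hspan v hv0 hvv c hc
      have hwv : B w v = 1 := by rw [hs, hvw]
      have hc0 : c ≠ 0 := by rintro rfl; simp at hcd
      have hd0 : d ≠ 0 := by rintro rfl; simp at hcd
      let φ : V →ₗ[k] k × k := (B v).prod (B w)
      let W := LinearMap.ker φ
      have hW : ∀ u, u ∈ W ↔ B v u = 0 ∧ B w u = 0 := by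
        intro u; simp [W, φ]
      have hWdim : Module.finrank k W = 2 * n := by
        have h := LinearMap.finrank_range_add_finrank_ker φ
        have hr : LinearMap.range φ = ⊤ := by
          rw [LinearMap.range_eq_top]
          rintro ⟨a, b⟩
          exact ⟨a • w + b • v, by simp [φ, hvw, hwv, hvv, hww]⟩
        rw [hr, finrank_top, Module.finrank_prod, Module.finrank_self] at h
        change _ + Module.finrank k W = _ at h
        omega
      have hfv : ∀ u, c * B v (f u) = B v u := by
        intro u; rw [← hf v u, hc]; simp
      have hfw : ∀ u, d * B w (f u) = B w u := by
        intro u; rw [← hf w u, hd]; simp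
      have hfW : ∀ u ∈ W, f u ∈ W := by
        intro u hu
        rw [hW] at hu ⊢
        have h1 := hfv u
        have h2 := hfw u
        rw [hu.1] at h1
        rw [hu.2] at h2
        exact ⟨(mul_eq_zero.1 h1).resolve_left hc0, (mul_eq_zero.1 h2).resolve_left hd0⟩
      let p0 : V →ₗ[k] V := LinearMap.id - (B v).smulRight w - (B w).smulRight v
      have hp0 : ∀ u, p0 u = u - B v u • w - B w u • v := by intro u; simp [p0]
      let p : V →ₗ[k] W := p0.codRestrict W (by
        intro u; rw [hW, hp0]; simp [hvw, hwv, hvv, hww])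
      have hp : ∀ u, (p u : V) = u - B v u • w - B w u • v := hp0
      have hpW : ∀ u : W, p u = u := by
        intro u
        apply Subtype.ext
        have := (hW u).1 u.2
        rw [hp, this.1, this.2]; simp
      let g : W →ₗ[k] W := f.restrict hfW
      have hg : ∀ u : W, (g u : V) = f u := fun u => rfl
      have hpspan : Submodule.span k {u : W | ∃ a : k, g u = a • u} = ⊤ := by
        rw [eq_top_iff]
        rintro u -
        have hu : (u : V) ∈ Submodule.span k {v | ∃ c : k, f v = c • v} := by
          rw [hspan]; trivial
        rw [← hpW u]
        have := Submodule.mem_map_of_mem (f := p) hu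
        rw [Submodule.map_span] at this
        refine Submodule.span_mono ?_ this
        rintro _ ⟨z, ⟨a, ha⟩, rfl⟩
        refine ⟨a, Subtype.ext ?_⟩
        rw [hg, hp, Submodule.coe_smul, hp]
        have h1 := hfv z
        have h2 := hfw z
        rw [ha] at h1 h2
        simp only [map_smul, smul_eq_mul] at h1 h2
        have h3 : B v z * d = a * B v z := by
          linear_combination (-d) * h1 + a * B v z * hcd
        have h4 : B w z * c = a * B w z := by
          linear_combination (-c) * h2 + a * B w z * hcd
        simp only [map_sub, map_smul, ha, hc, hd, smul_sub, smul_smul, h3, h4]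
      have hnf := ih (V := W) (B.domRestrict₁₂ W W) (by intro a b; exact hs a b) (by
          intro u hu
          apply Subtype.ext
          apply hnd
          intro z
          have h1 := hu (p z)
          have h2 := (hW u).1 u.2
          rw [LinearMap.domRestrict₁₂_apply, hp] at h1
          simpa [hs (u : V) v, hs (u : V) w, h2.1, h2.2] using h1)
        g (by intro a b; exact hf a b) hpspan hWdim
      obtain ⟨b, hb, hb'⟩ := hnf
      simp only [LinearMap.domRestrict₁₂_apply] at hb
      have hb1 : ∀ i, B v (b i) = 0 := fun i => ((hW _).1 (b i).2).1
      have hb2 : ∀ i, B w (b i) = 0 := fun i => ((hW _).1 (b i).2).2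
      let b' : ℕ → V := fun i => if i = 0 then v else if i = 2 * n + 1 then w else b (i - 1)
      have b'0 : b' 0 = v := by simp [b']
      have b'1 : b' (2 * n + 1) = w := by simp [b']
      have b'2 : ∀ i, i < 2 * n → b' (i + 1) = b i := by
        intro i hi
        have : i ≠ 2 * n := by omega
        simp [b', this]
      have hcases : ∀ i, i < 2 * (n + 1) → i = 0 ∨ i = 2 * n + 1 ∨ ∃ j, j < 2 * n ∧ i = j + 1 := by
        intro i hi
        by_cases h0 : i = 0
        · exact Or.inl h0
        by_cases h1 : i = 2 * n + 1
        · exact Or.inr (Or.inl h1)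
        · exact Or.inr (Or.inr ⟨i - 1, by omega, by omega⟩)
      refine ⟨b', ?_, ?_⟩
      · intro i j hi hj
        rcases hcases i hi with rfl | rfl | ⟨i, hi', rfl⟩ <;>
          rcases hcases j hj with rfl | rfl | ⟨j, hj', rfl⟩
        · rw [b'0, hvv, if_neg (by omega)]
        · rw [b'0, b'1, hvw, if_pos (by omega)]
        · rw [b'0, b'2 j hj', hb1, if_neg (by omega)]
        · rw [b'0, b'1, hwv, if_pos (by omega)]
        · rw [b'1, hww, if_neg (by omega)]
        · rw [b'1, b'2 j hj', hb2, if_neg (by omega)]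
        · rw [b'0, b'2 i hi', hs, hb1, if_neg (by omega)]
        · rw [b'1, b'2 i hi', hs, hb2, if_neg (by omega)]
        · rw [b'2 i hi', b'2 j hj', hb i j hi' hj']
          congr 1
          apply propext
          omega
      · by_cases hn : n = 0
        · left
          intro i hi
          rcases hcases i hi with rfl | rfl | ⟨i, hi', rfl⟩
          · exact ⟨c, by rw [b'0, hc]⟩
          · exact ⟨d, by rw [b'1, hd]⟩
          · omega
        rcases hb' with hb' | ⟨hA, hB, hb'⟩
        · left
          intro i hi
          rcases hcases i hi with rfl | rfl | ⟨i, hi', rfl⟩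
          · exact ⟨c, by rw [b'0, hc]⟩
          · exact ⟨d, by rw [b'1, hd]⟩
          · obtain ⟨a, ha⟩ := hb' i hi'
            exact ⟨a, by rw [b'2 i hi', ← hg, ha]; rfl⟩
        · right
          have e1 : b' (n + 1 - 1) = b (n - 1) := by
            rw [← b'2 (n - 1) (by omega)]; congr 1; omega
          refine ⟨?_, ?_, ?_⟩
          · rw [e1, b'2 n (by omega), ← hg, hA]
          · rw [e1, b'2 n (by omega), ← hg, hB]
          · intro i hi hi1 hi2
            rcases hcases i hi with rfl | rfl | ⟨i, hi', rfl⟩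
            · exact ⟨c, by rw [b'0, hc]⟩
            · exact ⟨d, by rw [b'1, hd]⟩
            · obtain ⟨a, ha⟩ := hb' i hi' (by omega) (by omega)
              exact ⟨a, by rw [b'2 i hi', ← hg, ha]; rfl⟩

lemma antidiagJ_apply_rev (N : ℕ) (i j : Fin N) :
    antidiagJ k N i j = if j = i.rev then 1 else 0 := by
  simp only [antidiagJ, Matrix.of_apply, Fin.ext_iff, Fin.val_rev]
  congr 1
  apply propext
  omega

lemma antidiagJ_symm (N : ℕ) (i j : Fin N) : antidiagJ k N i j = antidiagJ k N j i := by
  simp [antidiagJ, add_comm]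

lemma antidiagJ_sq (N : ℕ) : antidiagJ k N * antidiagJ k N = 1 := by
  ext i j
  rw [Matrix.mul_apply, Finset.sum_eq_single i.rev]
  · simp [antidiagJ_apply_rev, Matrix.one_apply, eq_comm]
  · intro l _ hl
    simp [antidiagJ_apply_rev, hl]
  · simp

lemma swapMat_mul (N : ℕ) (a b : Fin N) (M : Matrix (Fin N) (Fin N) k) (i j : Fin N) :
    (swapMat k N a b * M) i j = M (Equiv.swap a b i) j := by
  simp [Matrix.mul_apply, swapMat]

lemma swapMat_sq (N : ℕ) (a b : Fin N) : swapMat k N a b * swapMat k N a b = 1 := by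
  ext i j
  rw [swapMat_mul]
  simp [swapMat, Matrix.one_apply, eq_comm]

lemma swapMat_orth (N : ℕ) (a b : Fin N) (h : b = a.rev) :
    (swapMat k N a b)ᵀ * antidiagJ k N * swapMat k N a b = antidiagJ k N := by
  have hT : (swapMat k N a b)ᵀ = swapMat k N a b := by
    ext i j
    simp only [swapMat, Matrix.transpose_apply, Matrix.of_apply]
    congr 1
    apply propext
    rw [eq_comm, Equiv.swap_apply_eq_iff]
  have hcomm : ∀ i, (Equiv.swap a b i).rev = Equiv.swap a b i.rev := by
    subst h
    intro i
    by_cases h1 : i = a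
    · subst h1; simp
    by_cases h2 : i = a.rev
    · subst h2; simp
    · rw [Equiv.swap_apply_of_ne_of_ne h1 h2, Equiv.swap_apply_of_ne_of_ne]
      · intro h; apply h2; rw [← h]; simp
      · intro h; apply h1; exact Fin.rev_injective h
  have : swapMat k N a b * antidiagJ k N = antidiagJ k N * swapMat k N a b := by
    ext i j
    rw [swapMat_mul, antidiagJ_apply_rev]
    rw [Matrix.mul_apply, Finset.sum_eq_single i.rev]
    · simp [antidiagJ_apply_rev, swapMat, hcomm]
    · intro l _ hl
      simp [antidiagJ_apply_rev, hl]
    · simp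
  rw [hT, this, Matrix.mul_assoc, swapMat_sq, Matrix.mul_one]

end helpers

lemma stmt7_aux {k : Type*} [Field k] [IsAlgClosed k] (hchar : (2 : k) ≠ 0)
    (n N : ℕ) (hn : 1 ≤ n) (hN : N = 2 * n)
    (x : Matrix (Fin N) (Fin N) k)
    (hx : x.transpose * antidiagJ k N * x = antidiagJ k N)
    (hss : ∃ P : Matrix (Fin N) (Fin N) k,
      IsUnit P.det ∧ (P * x * P⁻¹).IsDiag) :
    ∃ q : Matrix (Fin N) (Fin N) k,
      q.transpose * antidiagJ k N * q = antidiagJ k N ∧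
      ((q⁻¹ * x * q).IsDiag ∨
        ∃ t : Matrix (Fin N) (Fin N) k,
          t.transpose * antidiagJ k N * t = antidiagJ k N ∧ t.IsDiag ∧
          q⁻¹ * x * q =
            swapMat k N ⟨n - 1, by omega⟩ ⟨n, by omega⟩ * t) := by
  set J := antidiagJ k N with hJ
  have hJ2 : J * J = 1 := antidiagJ_sq N
  have hJT : Jᵀ = J := by ext i j; exact antidiagJ_symm N j i
  let B : (Fin N → k) →ₗ[k] (Fin N → k) →ₗ[k] k := Matrix.toLinearMap₂' k J
  have hB : ∀ v w, B v w = v ⬝ᵥ (J *ᵥ w) := by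
    intro v w; exact Matrix.toLinearMap₂'_apply' J v w
  have hBs : ∀ v w, B v w = B w v := by
    intro v w
    rw [hB, hB, Matrix.dotProduct_mulVec, ← Matrix.mulVec_transpose, hJT, dotProduct_comm]
  have hBnd : ∀ v, (∀ w, B v w = 0) → v = 0 := by
    intro v hv
    ext i
    have := hv (J *ᵥ Pi.single i 1)
    rw [hB, Matrix.mulVec_mulVec, hJ2, Matrix.one_mulVec] at this
    simpa using this
  let f : (Fin N → k) →ₗ[k] (Fin N → k) := Matrix.toLin' x
  have hfx : ∀ v, f v = x *ᵥ v := fun v => Matrix.toLin'_apply x v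
  have hf : ∀ v w, B (f v) (f w) = B v w := by
    intro v w
    conv_rhs => rw [hB, ← hx]
    rw [hB, hfx, hfx, Matrix.dotProduct_mulVec, ← Matrix.vecMul_transpose,
      Matrix.vecMul_vecMul, ← Matrix.dotProduct_mulVec, Matrix.mulVec_mulVec]
  have hspan : Submodule.span k {v | ∃ c : k, f v = c • v} = ⊤ := by
    obtain ⟨P, hP, hD⟩ := hss
    have hPP : P⁻¹ * P = 1 := Matrix.nonsing_inv_mul P hP
    have hxP : x * P⁻¹ = P⁻¹ * (P * x * P⁻¹) := by
      rw [← Matrix.mul_assoc, ← Matrix.mul_assoc, hPP, Matrix.one_mul]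
    rw [eq_top_iff]
    rintro v -
    have hv : v = ∑ j, (P *ᵥ v) j • P⁻¹.col j := by
      conv_lhs => rw [← Matrix.one_mulVec v, ← hPP, ← Matrix.mulVec_mulVec]
      ext i
      simp [Matrix.mulVec, dotProduct, mul_comm]
    rw [hv]
    refine Submodule.sum_mem _ fun j _ => Submodule.smul_mem _ _ (Submodule.subset_span ?_)
    refine ⟨(P * x * P⁻¹) j j, ?_⟩
    rw [hfx]
    ext i
    have h1 : (x * P⁻¹) i j = (P⁻¹ * (P * x * P⁻¹)) i j := by rw [← hxP]
    rw [Matrix.mul_apply (M := P⁻¹), Finset.sum_eq_single j] at h1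
    · simpa [Matrix.mulVec, dotProduct, Matrix.mul_apply (M := x), mul_comm] using h1
    · intro l _ hl
      rw [hD hl, mul_zero]
    · simp
  obtain ⟨b, hb, hb'⟩ := normal_form hchar n B hBs hBnd f hf hspan (by simp [hN])
  let q : Matrix (Fin N) (Fin N) k := Matrix.of fun i j => b j i
  have hq : qᵀ * J * q = J := by
    ext i j
    have h1 := hb i j (hN ▸ i.2) (hN ▸ j.2)
    rw [hB] at h1
    have h2 : (qᵀ * J * q) i j = b i ⬝ᵥ (J *ᵥ b j) := by
      rw [Matrix.mul_assoc]
      simp [Matrix.mul_apply, Matrix.mulVec, dotProduct, q]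
    rw [h2, h1]
    simp [hJ, antidiagJ, hN]
  have hqinv : q⁻¹ * q = 1 := by
    apply Matrix.nonsing_inv_mul
    have : (J * qᵀ * J) * q = 1 := by
      rw [Matrix.mul_assoc, Matrix.mul_assoc, ← Matrix.mul_assoc qᵀ, hq, hJ2]
    exact Matrix.isUnit_det_of_left_inverse this
  have hqT : (q⁻¹ * x * q)ᵀ * J * (q⁻¹ * x * q) = J := by
    have hq' : q * q⁻¹ = 1 := mul_eq_one_comm.1 hqinv
    have hi : (q⁻¹)ᵀ * J * q⁻¹ = J := by
      conv_lhs => rw [← hq]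
      calc (q⁻¹)ᵀ * (qᵀ * J * q) * q⁻¹ = (q * q⁻¹)ᵀ * J * (q * q⁻¹) := by
            simp only [Matrix.transpose_mul, Matrix.mul_assoc]
        _ = J := by rw [hq']; simp
    calc (q⁻¹ * x * q)ᵀ * J * (q⁻¹ * x * q)
        = qᵀ * (xᵀ * ((q⁻¹)ᵀ * J * q⁻¹) * x) * q := by
          simp only [Matrix.transpose_mul, Matrix.mul_assoc]
      _ = J := by rw [hi, hx, hq]
  have hcol : ∀ i j, (q⁻¹ * x * q) i j = (q⁻¹ *ᵥ (f (b j))) i := by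
    intro i j
    rw [hfx, Matrix.mulVec_mulVec]
    simp [Matrix.mul_apply (M := q⁻¹ * x), Matrix.mulVec, dotProduct, q]
  have hqb : ∀ i j : Fin N, (q⁻¹ *ᵥ (b j)) i = if i = j then 1 else 0 := by
    intro i j
    rw [← Matrix.one_apply, ← hqinv]
    simp [Matrix.mul_apply, Matrix.mulVec, dotProduct, q]
  have hdiag : ∀ i j : Fin N, i ≠ j → (∃ c : k, f (b j) = c • b j) →
      (q⁻¹ * x * q) i j = 0 := by
    rintro i j hij ⟨c, hc⟩
    rw [hcol, hc, Matrix.mulVec_smul, Pi.smul_apply, hqb, if_neg hij, smul_zero]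
  refine ⟨q, hq, ?_⟩
  rcases hb' with hb' | ⟨hA, hC, hb'⟩
  · left
    intro i j hij
    exact hdiag i j hij (hb' j (hN ▸ j.2))
  · right
    set a0 : Fin N := ⟨n - 1, by omega⟩ with ha0
    set a1 : Fin N := ⟨n, by omega⟩ with ha1
    have hrev : a1 = a0.rev := by
      apply Fin.ext
      simp only [ha0, ha1, Fin.val_rev]
      omega
    have h01 : a0 ≠ a1 := by
      simp only [ha0, ha1, ne_eq, Fin.mk.injEq]; omega
    refine ⟨swapMat k N a0 a1 * (q⁻¹ * x * q), ?_, ?_, ?_⟩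
    · rw [Matrix.transpose_mul]
      calc (q⁻¹ * x * q)ᵀ * (swapMat k N a0 a1)ᵀ * J * (swapMat k N a0 a1 * (q⁻¹ * x * q))
          = (q⁻¹ * x * q)ᵀ * ((swapMat k N a0 a1)ᵀ * J * swapMat k N a0 a1) * (q⁻¹ * x * q) := by
            simp only [Matrix.mul_assoc]
        _ = J := by rw [swapMat_orth N a0 a1 hrev, hqT]
    · intro i j hij
      rw [swapMat_mul]
      by_cases hj0 : j = a0
      · subst hj0
        rw [hcol]
        change (q⁻¹ *ᵥ f (b (n - 1))) _ = 0
        rw [hA]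
        change (q⁻¹ *ᵥ b a1) _ = 0
        rw [hqb, if_neg]
        rw [Equiv.swap_apply_eq_iff, Equiv.swap_apply_right]
        exact hij
      by_cases hj1 : j = a1
      · subst hj1
        rw [hcol]
        change (q⁻¹ *ᵥ f (b n)) _ = 0
        rw [hC]
        change (q⁻¹ *ᵥ b a0) _ = 0
        rw [hqb, if_neg]
        rw [Equiv.swap_apply_eq_iff, Equiv.swap_apply_left]
        exact hij
      · apply hdiag
        · rw [Ne, Equiv.swap_apply_eq_iff, Equiv.swap_apply_of_ne_of_ne hj0 hj1]
          exact hij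
        · apply hb' j (hN ▸ j.2)
          · intro h; exact hj0 (Fin.ext h)
          · intro h; exact hj1 (Fin.ext h)
    · rw [← Matrix.mul_assoc, swapMat_sq, Matrix.one_mul]

/-- over an algebraically closed field of characteristic `≠ 2`,
every semisimple (diagonalizable) element of `O(2n,k)` is conjugate, by an
element of `O(2n,k)`, to an element of `T ∪ J'·T`, where `T` is the diagonal
subgroup of `O(2n,k)` and `J'` is the permutation matrix of the transposition
`(n, n+1)`. -/
theorem stmt7 {k : Type*} [Field k] [IsAlgClosed k] (hchar : (2 : k) ≠ 0)
    (n : ℕ) (hn : 1 ≤ n)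
    (x : Matrix (Fin (2 * n)) (Fin (2 * n)) k)
    (hx : x.transpose * antidiagJ k (2 * n) * x = antidiagJ k (2 * n))
    (hss : ∃ P : Matrix (Fin (2 * n)) (Fin (2 * n)) k,
      IsUnit P.det ∧ (P * x * P⁻¹).IsDiag) :
    ∃ q : Matrix (Fin (2 * n)) (Fin (2 * n)) k,
      q.transpose * antidiagJ k (2 * n) * q = antidiagJ k (2 * n) ∧
      ((q⁻¹ * x * q).IsDiag ∨
        ∃ t : Matrix (Fin (2 * n)) (Fin (2 * n)) k,
          t.transpose * antidiagJ k (2 * n) * t = antidiagJ k (2 * n) ∧ t.IsDiag ∧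
          q⁻¹ * x * q =
            swapMat k (2 * n) ⟨n - 1, by omega⟩ ⟨n, by omega⟩ * t) := by
  exact stmt7_aux hchar n (2 * n) hn rfl x hx hss
end

section
/- Let k be a field, l ≥ 1, and let g ∈ GL(l,k) be a monomial matrix whose underlying permutation is an l-cycle. Then there exists an invertible diagonal matrix t ∈ GL(l,k) such that all but at most one of the l nonzero entries of the monomial matrix t·g·t are equal to 1. (Equivalently, t·g·γ(t⁻¹) has this property, since γ(t⁻¹) = t for diagonal t, where γ(x) = (ᵀx)⁻¹.) -/
/-- if `g ∈ GL(l,k)` is a monomial matrix whose underlying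
permutation `σ` is an `l`-cycle (i.e. `σ` acts transitively on the `l`
indices), then there is an invertible diagonal matrix `t` such that all but at
most one of the `l` nonzero entries of `t·g·t` are equal to `1`. -/
theorem stmt8 {k : Type*} [Field k] (l : ℕ) (hl : 1 ≤ l)
    (g : Matrix (Fin l) (Fin l) k) (hunit : IsUnit g.det)
    (σ : Equiv.Perm (Fin l))
    (hmono : ∀ i j, i ≠ σ j → g i j = 0)
    (hnz : ∀ j, g (σ j) j ≠ 0)
    (hcycle : ∀ i j : Fin l, ∃ a : ℕ, (σ ^ a) i = j) :
    ∃ t : Fin l → kˣ, ∃ j₀ : Fin l, ∀ j, j ≠ j₀ →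
      (Matrix.diagonal (fun i => (t i : k)) * g *
        Matrix.diagonal (fun i => (t i : k))) (σ j) j = 1 := by
  classical
  let i0 : Fin l := ⟨0, hl⟩
  let G : Fin l → kˣ := fun j => Units.mk0 (g (σ j) j) (hnz j)
  let s : ℕ → kˣ := fun a => Nat.rec 1 (fun a x => (x * G ((σ ^ a) i0))⁻¹) a
  have hs : ∀ a, s (a + 1) = (s a * G ((σ ^ a) i0))⁻¹ := fun a => rfl
  let n : Fin l → ℕ := fun j => Nat.find (hcycle i0 j)
  have hn : ∀ j, (σ ^ n j) i0 = j := fun j => Nat.find_spec (hcycle i0 j)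
  have hmin : ∀ j a, (σ ^ a) i0 = j → n j ≤ a := fun j a h => Nat.find_min' (hcycle i0 j) h
  refine ⟨fun j => s (n j), σ.symm i0, fun j hj => ?_⟩
  have hne : σ j ≠ i0 := fun h => hj (by rw [← h, Equiv.symm_apply_apply])
  have h1 : n (σ j) ≤ n j + 1 := hmin _ _ (by rw [pow_succ', Equiv.Perm.mul_apply, hn])
  have h2 : n (σ j) = n j + 1 := by
    have h3 := hn (σ j)
    rcases h : n (σ j) with _ | m
    · rw [h] at h3
      exact absurd h3.symm hne
    · rw [h, pow_succ', Equiv.Perm.mul_apply] at h3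
      have := hmin j m (σ.injective h3)
      omega
  rw [Matrix.mul_diagonal, Matrix.diagonal_mul]
  have h4 : s (n (σ j)) * G j * s (n j) = 1 := by
    rw [h2, hs, hn, mul_assoc, mul_comm (G j), inv_mul_cancel]
  have h5 := congrArg (Units.val) h4
  simpa [G] using h5
end

section
/- Let k be a field, l an even positive integer, and let g ∈ GL(l,k) be a monomial matrix whose underlying permutation is an l-cycle and all but one of whose nonzero entries are equal to 1. Then the remaining nonzero entry of g equals −det g, and the matrix (g·γ(g))^{l/2}, where γ(g) = (ᵀg)⁻¹, is diagonal with exactly l/2 diagonal entries equal to −det g and exactly l/2 diagonal entries equal to −(det g)⁻¹. -/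
namespace Stmt9Aux

variable {k : Type*} [Field k] {l : ℕ}

def mono (σ : Equiv.Perm (Fin l)) (c : Fin l → k) : Matrix (Fin l) (Fin l) k :=
  Matrix.of fun i j => if i = σ j then c j else 0

theorem mono_mul (σ τ : Equiv.Perm (Fin l)) (c d : Fin l → k) :
    mono σ c * mono τ d = mono (σ * τ) (fun j => c (τ j) * d j) := by
  ext i j
  simp only [mono, Matrix.mul_apply, Matrix.of_apply, mul_ite, mul_zero, Finset.sum_ite_eq',
    Finset.sum_ite_eq, Finset.mem_univ, if_true]
  by_cases h : i = σ (τ j)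
  · have h' : i = (σ * τ) j := h
    rw [if_pos h, if_pos h']
  · have h' : ¬ i = (σ * τ) j := h
    rw [if_neg h, if_neg h', zero_mul]

theorem mono_one (c : Fin l → k) : mono 1 c = Matrix.diagonal c := by
  ext i j
  by_cases h : i = j
  · subst h; simp [mono]
  · simp [mono, h]

theorem mono_pow (σ : Equiv.Perm (Fin l)) (c : Fin l → k) (n : ℕ) :
    mono σ c ^ n = mono (σ ^ n) (fun j => ∏ i ∈ Finset.range n, c ((σ ^ i) j)) := by
  induction n with
  | zero => simp [mono_one]
  | succ n ih =>
    rw [pow_succ', ih, mono_mul, pow_succ' σ]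
    congr 1
    ext j
    rw [Finset.prod_range_succ, mul_comm]

theorem mono_det (σ : Equiv.Perm (Fin l)) (c : Fin l → k) :
    (mono σ c).det = ((Equiv.Perm.sign σ : ℤ) : k) * ∏ j, c j := by
  have h : mono σ c = (Matrix.diagonal c).submatrix (σ⁻¹ : Equiv.Perm (Fin l)) id := by
    ext i j
    by_cases h : i = σ j
    · subst h; simp [mono]
    · have : σ⁻¹ i ≠ j := fun h' => h (by rw [← h']; simp)
      rw [Matrix.submatrix_apply, id, Matrix.diagonal_apply_ne _ this]
      simp [mono, h]
  rw [h, Matrix.det_permute, Matrix.det_diagonal]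
  simp

theorem mono_transpose_inv (σ : Equiv.Perm (Fin l)) (c : Fin l → k) (hc : ∀ j, c j ≠ 0) :
    (mono σ c).transpose⁻¹ = mono σ (fun j => (c j)⁻¹) := by
  apply Matrix.inv_eq_right_inv
  ext i j
  simp only [mono, Matrix.mul_apply, Matrix.of_apply, Matrix.transpose_apply, mul_ite, mul_zero,
    Finset.sum_ite_eq', Finset.sum_ite_eq, Finset.mem_univ, if_true]
  by_cases h : i = j
  · subst h; simp [hc]
  · have : ¬ j = i := fun h' => h h'.symm
    simp [h, this]

end Stmt9Aux


/-- let `l` be even and `g ∈ GL(l,k)` a monomial matrix whose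
underlying permutation `σ` is an `l`-cycle and all but one of whose nonzero
entries equal `1`.  Then the remaining entry is `-det g`, and with
`γ(g) = (ᵀg)⁻¹`, the matrix `(g·γ(g))^{l/2}` is diagonal with exactly `l/2`
entries equal to `-det g` and exactly `l/2` entries equal to `-(det g)⁻¹`. -/
theorem stmt9 {k : Type*} [Field k] (l : ℕ) (hl : 0 < l) (hleven : Even l)
    (g : Matrix (Fin l) (Fin l) k) (hunit : IsUnit g.det)
    (σ : Equiv.Perm (Fin l))
    (hmono : ∀ i j, i ≠ σ j → g i j = 0)
    (hnz : ∀ j, g (σ j) j ≠ 0)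
    (hcycle : ∀ i j : Fin l, ∃ a : ℕ, (σ ^ a) i = j)
    (j₀ : Fin l) (hone : ∀ j, j ≠ j₀ → g (σ j) j = 1) :
    g (σ j₀) j₀ = -g.det ∧
    ∃ S : Finset (Fin l), S.card = l / 2 ∧
      (g * (g.transpose)⁻¹) ^ (l / 2) =
        Matrix.diagonal (fun i => if i ∈ S then -g.det else -(g.det)⁻¹) := by
  classical
  obtain ⟨m, hm⟩ := hleven
  have hm2 : l / 2 = m := by omega
  have hcyc : σ.IsCycleOn ((Finset.univ : Finset (Fin l)) : Set (Fin l)) := by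
    refine ⟨by simp [Set.bijOn_univ, σ.bijective], fun x _ y _ => ?_⟩
    obtain ⟨a, ha⟩ := hcycle x y
    exact ⟨a, by simpa using ha⟩
  have hmod : ∀ (x : Fin l) (a b : ℕ), (σ ^ a) x = (σ ^ b) x ↔ a ≡ b [MOD l] := by
    intro x a b
    have := hcyc.pow_apply_eq_pow_apply (Finset.mem_univ x) (m := a) (n := b)
    simpa using this
  have hσl : σ ^ l = 1 := by
    ext x
    have := (hmod x l 0).2 (by simp [Nat.ModEq])
    rw [this]; simp
  have hsign : Equiv.Perm.sign σ = -1 := by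
    have hne : ∀ x, σ x ≠ x := by
      intro x hx
      have := (hmod x 1 0).1 (by simpa using hx)
      have h1 : l ∣ 1 := (Nat.modEq_zero_iff_dvd).1 this
      have := Nat.le_of_dvd one_pos h1
      omega
    have hs : σ.support = Finset.univ := by
      ext x; simp [hne]
    have hc : σ.IsCycle := ⟨j₀, hne j₀, fun y _ => hcyc.2 (by simp) (by simp)⟩
    rw [hc.sign, hs, Finset.card_univ, Fintype.card_fin, hm, ← two_mul]
    simp [pow_mul]
  set b := g (σ j₀) j₀ with hb
  have hb0 : b ≠ 0 := hnz j₀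
  set c : Fin l → k := fun j => if j = j₀ then b else 1 with hc
  have hc0 : ∀ j, c j ≠ 0 := by
    intro j; simp only [hc]; split_ifs <;> simp [hb0]
  have hg : g = Stmt9Aux.mono σ c := by
    ext i j
    by_cases h : i = σ j
    · subst h
      by_cases h' : j = j₀
      · subst h'; simp [Stmt9Aux.mono, hc, hb]
      · simp [Stmt9Aux.mono, hc, h', hone j h']
    · simp [Stmt9Aux.mono, h, hmono i j h]
  have hdet : g.det = -b := by
    rw [hg, Stmt9Aux.mono_det, hsign]
    simp [hc]
  have hbd : b = -g.det := by rw [hdet, neg_neg]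
  refine ⟨hbd, ?_⟩
  have hd : ∀ j, ∃ a, a < l ∧ (σ ^ a) j = j₀ := by
    intro j
    obtain ⟨a, ha⟩ := hcycle j j₀
    refine ⟨a % l, Nat.mod_lt _ hl, ?_⟩
    rw [← ha]
    exact (hmod j _ _).2 (Nat.mod_modEq a l)
  choose d hdl hdj using hd
  have hiff : ∀ j a, a < l → ((σ ^ a) j = j₀ ↔ a = d j) := by
    intro j a ha
    constructor
    · intro h
      exact Nat.ModEq.eq_of_lt_of_lt ((hmod j a (d j)).1 (by rw [h, hdj])) ha (hdl j)
    · rintro rfl; exact hdj j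
  have hflip : ∀ j, Odd (d (σ j)) ↔ ¬ Odd (d j) := by
    intro j
    have h1 : (σ ^ (d (σ j) + 1)) j = (σ ^ d j) j := by
      rw [pow_succ, Equiv.Perm.mul_apply, hdj, hdj]
    have h2 := (hmod j _ _).1 h1
    have h3 : d (σ j) + 1 ≡ d j [MOD 2] := h2.of_dvd ⟨m, by omega⟩
    unfold Nat.ModEq at h3
    rw [Nat.odd_iff, Nat.odd_iff]
    omega
  refine ⟨Finset.univ.filter (fun j => Odd (d j)), ?_, ?_⟩
  · have h1 : (Finset.univ.filter (fun j => Odd (d j))).card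
        = (Finset.univ.filter (fun j => ¬ Odd (d j))).card := by
      apply Finset.card_bij (fun j _ => σ j)
      · intro j hj
        simp only [Finset.mem_filter, Finset.mem_univ, true_and] at hj ⊢
        rw [hflip]; simpa using hj
      · intro x _ y _ h; exact σ.injective h
      · intro y hy
        refine ⟨σ.symm y, ?_, by simp⟩
        simp only [Finset.mem_filter, Finset.mem_univ, true_and] at hy ⊢
        have := hflip (σ.symm y)
        rw [Equiv.apply_symm_apply] at this
        tauto
    have h2 := Finset.card_filter_add_card_filter_not (s := (Finset.univ : Finset (Fin l)))
      (fun j => Odd (d j))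
    rw [Finset.card_univ, Fintype.card_fin] at h2
    omega
  · rw [hm2]
    have hpow : (g * g.transpose⁻¹) ^ m = Matrix.diagonal (fun j =>
        ∏ i ∈ Finset.range m, (c ((σ ^ (2 * i + 1)) j) * (c ((σ ^ (2 * i)) j))⁻¹)) := by
      rw [hg, Stmt9Aux.mono_transpose_inv σ c hc0, Stmt9Aux.mono_mul, Stmt9Aux.mono_pow]
      have : (σ * σ) ^ m = 1 := by rw [← pow_two, ← pow_mul, two_mul, ← hm, hσl]
      rw [this, Stmt9Aux.mono_one]
      congr 1
      ext j
      refine Finset.prod_congr rfl fun i _ => ?_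
      rw [← pow_two, ← pow_mul, pow_succ' σ (2 * i), Equiv.Perm.mul_apply]
    rw [hpow]
    congr 1
    ext j
    simp only [Finset.mem_filter, Finset.mem_univ, true_and]
    rw [neg_inv, ← hbd, Finset.prod_mul_distrib]
    have e1 : ∀ i ∈ Finset.range m, c ((σ ^ (2 * i + 1)) j) = if 2 * i + 1 = d j then b else 1 := by
      intro i hi
      have := Finset.mem_range.1 hi
      simp only [hc, hiff j (2 * i + 1) (by omega)]
    have e2 : ∀ i ∈ Finset.range m, (c ((σ ^ (2 * i)) j))⁻¹ = if 2 * i = d j then b⁻¹ else 1 := by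
      intro i hi
      have := Finset.mem_range.1 hi
      simp only [hc, hiff j (2 * i) (by omega)]
      split_ifs <;> simp
    rw [Finset.prod_congr rfl e1, Finset.prod_congr rfl e2]
    have hlt := hdl j
    split_ifs with ho
    · obtain ⟨q, hq⟩ := ho
      rw [Finset.prod_eq_single q, Finset.prod_eq_one]
      · simp [hq]
      · intro i _; rw [if_neg (by omega)]
      · intro i _ hi; rw [if_neg (by omega)]
      · intro h; exact absurd (Finset.mem_range.2 (by omega)) h
    · obtain ⟨q, hq⟩ := Nat.not_odd_iff_even.1 ho
      rw [Finset.prod_eq_one, Finset.prod_eq_single q]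
      · simp [hq, two_mul]
      · intro i _ hi; rw [if_neg (by omega)]
      · intro h; exact absurd (Finset.mem_range.2 (by omega)) h
      · intro i _; rw [if_neg (by omega)]
end

section
/- Let k be an algebraically closed field of characteristic 0 or p > 2, m a positive integer not divisible by the characteristic of k, and ζ ∈ k a primitive m-th root of unity. Let g ∈ GL(n,k) be such that the inner automorphism Int g of GL(n,k) has order exactly m, i.e. m is the least positive integer j such that g^j is a scalar matrix. Set 𝔤(1) = {x ∈ Mₙ(k) : g·x·g⁻¹ = ζ·x} and H = {h ∈ GL(n,k) : h·g = g·h}. Let c be a Cartan subspace of 𝔤(1) and r = dim c. Then there is a basis of c with respect to which the little Weyl group of c with respect to H is exactly the group G(m,1,r) of all monomial r×r matrices whose nonzero entries are m-th roots of unity; in particular this group has order m^r · r!. -/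
open Matrix

/-- The group `G(m,q,r)` of `r×r` monomial matrices whose nonzero entries are
`m`-th roots of unity and the product of whose nonzero entries is an
`(m/q)`-th root of unity, as a set of matrices. -/
def GmqrSet (k : Type*) [Field k] (m q r : ℕ) : Set (Matrix (Fin r) (Fin r) k) :=
  {w | ∃ σ : Equiv.Perm (Fin r),
    (∀ i j, i ≠ σ j → w i j = 0) ∧
    (∀ j, w (σ j) j ^ m = 1) ∧
    (∏ j, w (σ j) j) ^ (m / q) = 1}

/-- A matrix is semisimple if it is diagonalizable. -/
def IsSemisimpleMat {k : Type*} [Field k] {N : Type*} [Fintype N] [DecidableEq N]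
    (x : Matrix N N k) : Prop :=
  ∃ P : Matrix N N k, IsUnit P.det ∧ (P * x * P⁻¹).IsDiag

/-- `c` is a Cartan subspace of `g1`: a subspace of `g1`, consisting of
pairwise commuting diagonalizable matrices, and maximal among such. -/
def IsCartanSubspace {k : Type*} [Field k] {N : Type*} [Fintype N] [DecidableEq N]
    (g1 : Set (Matrix N N k)) (c : Submodule k (Matrix N N k)) : Prop :=
  (c : Set (Matrix N N k)) ⊆ g1 ∧
  (∀ x ∈ c, ∀ y ∈ c, x * y = y * x) ∧
  (∀ x ∈ c, IsSemisimpleMat x) ∧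
  ∀ c' : Submodule k (Matrix N N k),
    ((c' : Set (Matrix N N k)) ⊆ g1 ∧ (∀ x ∈ c', ∀ y ∈ c', x * y = y * x) ∧
      (∀ x ∈ c', IsSemisimpleMat x)) → c ≤ c' → c' = c

/-- The little Weyl group of `c` with respect to `H`, written with respect to
the family `b` (a basis of `c`): the set of matrices of the transformations
`x ↦ h·x·h⁻¹` of `c`, for `h ∈ H` normalizing `c`. -/
def littleWeylSet {k : Type*} [Field k] {N : Type*} [Fintype N] [DecidableEq N] {r : ℕ}
    (H : Set (Matrix N N k)) (c : Submodule k (Matrix N N k))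
    (b : Fin r → Matrix N N k) : Set (Matrix (Fin r) (Fin r) k) :=
  {w | ∃ h ∈ H, (∀ x ∈ c, h * x * h⁻¹ ∈ c) ∧ (∀ x ∈ c, h⁻¹ * x * h ∈ c) ∧
    ∀ j, h * b j * h⁻¹ = ∑ i, w i j • b i}


/-- Matrices agreeing on a basis are equal. -/
theorem mat_ext {k : Type*} [Field k] {n : ℕ} {ι : Type*}
    (B : Module.Basis ι k (Fin n → k)) {x y : Matrix (Fin n) (Fin n) k}
    (h : ∀ i, x *ᵥ B i = y *ᵥ B i) : x = y := by
  apply Matrix.toLin'.injective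
  apply B.ext
  intro i
  simpa using h i

theorem semis_of_basis {k : Type*} [Field k] {n : ℕ} {ι : Type*}
    (B : Module.Basis ι k (Fin n → k)) {x : Matrix (Fin n) (Fin n) k}
    (h : ∀ i, ∃ μ : k, x *ᵥ B i = μ • B i) : IsSemisimpleMat x := by
  classical
  let e : ι ≃ Fin n := B.indexEquiv (Pi.basisFun k (Fin n))
  let B' := B.reindex e
  have h' : ∀ i, ∃ μ : k, x *ᵥ B' i = μ • B' i := fun i => by simpa [B'] using h (e.symm i)
  choose d hd using h'
  let Q : Matrix (Fin n) (Fin n) k := (Pi.basisFun k (Fin n)).toMatrix B'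
  have hQu : IsUnit Q := by
    have := (Pi.basisFun k (Fin n)).invertibleToMatrix B'
    exact isUnit_of_invertible Q
  have hQ : IsUnit Q.det := (Matrix.isUnit_iff_isUnit_det _).1 hQu
  have hxQ : x * Q = Q * diagonal d := by
    ext i j
    have := congrFun (hd j) i
    rw [Matrix.mul_diagonal, Matrix.mul_apply]
    simp only [Matrix.mulVec, dotProduct, Pi.smul_apply, smul_eq_mul] at this
    simp only [Q, Module.Basis.toMatrix_apply, Pi.basisFun_repr]
    rw [this, mul_comm]
  refine ⟨Q⁻¹, Matrix.isUnit_nonsing_inv_det _ hQ, ?_⟩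
  rw [Matrix.nonsing_inv_nonsing_inv _ hQ, Matrix.mul_assoc, hxQ, ← Matrix.mul_assoc,
    Matrix.nonsing_inv_mul _ hQ, Matrix.one_mul]
  exact Matrix.isDiag_diagonal d

theorem basis_of_semis {k : Type*} [Field k] {n : ℕ} {x : Matrix (Fin n) (Fin n) k}
    (h : IsSemisimpleMat x) : ∃ (b : Module.Basis (Fin n) k (Fin n → k)) (d : Fin n → k),
      Matrix.toLin' x = Matrix.toLin b b (diagonal d) := by
  obtain ⟨P, hP, hD⟩ := h
  obtain ⟨d, hd⟩ : ∃ d, diagonal d = P * x * P⁻¹ := ⟨_, hD.diagonal_diag⟩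
  have hx : x * P⁻¹ = P⁻¹ * diagonal d := by
    rw [hd, Matrix.mul_assoc, Matrix.nonsing_inv_mul_cancel_left _ _ hP]
  let e : (Fin n → k) ≃ₗ[k] (Fin n → k) := LinearEquiv.ofLinearMap (Matrix.toLin' P⁻¹)
    (Matrix.toLin' P) (by rw [← Matrix.toLin'_mul, Matrix.nonsing_inv_mul _ hP, Matrix.toLin'_one])
    (by rw [← Matrix.toLin'_mul, Matrix.mul_nonsing_inv _ hP, Matrix.toLin'_one])
  let b := (Pi.basisFun k (Fin n)).map e
  refine ⟨b, d, b.ext fun i => ?_⟩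
  rw [(hasEigenvector_toLin_diagonal d i b).apply_eq_smul]
  have : b i = P⁻¹ *ᵥ (Pi.single i 1) := by simp [b, e]
  rw [this, Matrix.toLin'_apply, Matrix.mulVec_mulVec, hx, ← Matrix.mulVec_mulVec,
    Matrix.diagonal_mulVec_single, ← Matrix.mulVec_smul, mul_one]
  congr 1
  ext j
  simp [Pi.single_apply]

/-- Joint eigenvectors of a commuting diagonalizable family span. -/
theorem span_weight {k : Type*} [Field k] {n : ℕ}
    (c : Submodule k (Matrix (Fin n) (Fin n) k))
    (hcomm : ∀ x ∈ c, ∀ y ∈ c, x * y = y * x) (hss : ∀ x ∈ c, IsSemisimpleMat x) :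
    Submodule.span k {v : Fin n → k | ∀ x ∈ c, ∃ μ : k, x *ᵥ v = μ • v} = ⊤ := by
  have h1 : ∀ x : c, ∀ μ, Module.End.maxGenEigenspace (Matrix.toLin' x.1) μ
      = Module.End.eigenspace (Matrix.toLin' x.1) μ := by
    intro x μ
    obtain ⟨b, d, h⟩ := basis_of_semis (hss x.1 x.2)
    rw [h]
    exact maxGenEigenspace_toLin_diagonal_eq_eigenspace d b
  have h2 : ∀ x : c, ⨆ μ, Module.End.maxGenEigenspace (Matrix.toLin' x.1) μ = ⊤ := by
    intro x
    simp_rw [h1]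
    obtain ⟨b, d, h⟩ := basis_of_semis (hss x.1 x.2)
    rw [h]
    exact iSup_eigenspace_toLin_diagonal_eq_top d b
  have h3 := Module.End.iSup_iInf_maxGenEigenspace_eq_top_of_iSup_maxGenEigenspace_eq_top_of_commute
    (fun x : c => Matrix.toLin' x.1) (fun x y _ => by
      change _ * _ = _ * _
      rw [Module.End.mul_eq_comp, Module.End.mul_eq_comp, ← Matrix.toLin'_mul, ← Matrix.toLin'_mul,
        hcomm x.1 x.2 y.1 y.2]) h2
  rw [eq_top_iff, ← h3, iSup_le_iff]
  intro χ v hv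
  apply Submodule.subset_span
  intro x hx
  refine ⟨χ ⟨x, hx⟩, ?_⟩
  have := (Submodule.mem_iInf _).1 hv ⟨x, hx⟩
  rw [h1, Module.End.mem_eigenspace_iff] at this
  simpa using this

theorem pow_val_add {M : Type*} [Monoid M] {m : ℕ} [NeZero m] {x : M} (hx : x ^ m = 1)
    (i j : ZMod m) : x ^ (i + j).val = x ^ i.val * x ^ j.val := by
  rw [ZMod.val_add, ← pow_add, ← pow_eq_pow_mod _ hx]

theorem pow_val_one {M : Type*} [Monoid M] {m : ℕ} [NeZero m] {x : M} (hx : x ^ m = 1) :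
    x ^ (1 : ZMod m).val = x := by
  rw [ZMod.val_one_eq_one_mod, ← pow_eq_pow_mod _ hx, pow_one]

theorem card_gmqr {k : Type*} [Field k] (m r : ℕ) (hm : 0 < m) (ζ : k)
    (hζ : IsPrimitiveRoot ζ m) : Nat.card (GmqrSet k m 1 r) = m ^ r * Nat.factorial r := by
  classical
  have : NeZero m := ⟨hm.ne'⟩
  let F : Equiv.Perm (Fin r) × (Fin r → rootsOfUnity m k) → GmqrSet k m 1 r := fun p =>
    ⟨fun i j => if i = p.1 j then ((p.2 j : kˣ) : k) else 0, p.1, by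
      intro i j h; simp [h], by
      intro j
      have := (p.2 j).2
      rw [mem_rootsOfUnity'] at this
      simpa using this, by
      rw [Nat.div_one, ← Finset.prod_pow]
      apply Finset.prod_eq_one
      intro j _
      have := (p.2 j).2
      rw [mem_rootsOfUnity'] at this
      simpa using this⟩
  have hF : Function.Bijective F := by
    constructor
    · rintro ⟨σ, f⟩ ⟨τ, f'⟩ h
      have h' : ∀ i j, (if i = σ j then ((f j : kˣ) : k) else 0)
          = if i = τ j then ((f' j : kˣ) : k) else 0 := fun i j =>
        congrFun (congrFun (congrArg Subtype.val h) i) j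
      have hst : σ = τ := by
        ext j
        by_contra hne
        have h1 := h' (σ j) j
        rw [if_pos rfl, if_neg (fun e => hne (by rw [e]))] at h1
        exact (f j : kˣ).ne_zero h1
      subst hst
      congr 1
      ext j
      simpa using h' (σ j) j
    · rintro ⟨w, σ, h1, h2, h3⟩
      refine ⟨(σ, fun j => rootsOfUnity.mkOfPowEq (w (σ j) j) (h2 j)), ?_⟩
      apply Subtype.ext
      ext i j
      by_cases hij : i = σ j
      · subst hij
        simp [F]
      · simp [F, hij, h1 i j hij]
  rw [← Nat.card_congr (Equiv.ofBijective F hF), Nat.card_prod, Nat.card_fun, Nat.card_perm,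
    Nat.card_fin, hζ.card_rootsOfUnity, mul_comm]

/-- The common kernel of `c`. -/
def zeroWt {k : Type*} [Field k] {n : ℕ} (c : Submodule k (Matrix (Fin n) (Fin n) k)) :
    Submodule k (Fin n → k) where
  carrier := {v | ∀ x ∈ c, x *ᵥ v = 0}
  add_mem' := by
    intro a b ha hb x hx
    rw [Matrix.mulVec_add, ha x hx, hb x hx, add_zero]
  zero_mem' := by intro x _; simp
  smul_mem' := by
    intro t a ha x hx
    rw [Matrix.mulVec_smul, ha x hx, smul_zero]

theorem mul_pow_comm {k : Type*} [Field k] {n : ℕ} {x g0 : Matrix (Fin n) (Fin n) k} {ξ : k}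
    (h : x * g0 = ξ • (g0 * x)) (i : ℕ) : x * g0 ^ i = ξ ^ i • (g0 ^ i * x) := by
  induction i with
  | zero => simp
  | succ i ih =>
    rw [pow_succ, ← Matrix.mul_assoc, ih, Matrix.smul_mul, Matrix.mul_assoc, h, Matrix.mul_smul,
      smul_smul, Matrix.mul_assoc, pow_succ]

theorem wt_pow {k : Type*} [Field k] {n : ℕ} {x g0 : Matrix (Fin n) (Fin n) k} {ξ μ : k}
    (h : x * g0 = ξ • (g0 * x)) (i : ℕ) {v : Fin n → k} (hv : x *ᵥ v = μ • v) :
    x *ᵥ (g0 ^ i *ᵥ v) = (ξ ^ i * μ) • (g0 ^ i *ᵥ v) := by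
  rw [Matrix.mulVec_mulVec, mul_pow_comm h, Matrix.smul_mulVec, ← Matrix.mulVec_mulVec, hv,
    Matrix.mulVec_smul, smul_smul]

/-- The family of translates of `u j` under the powers of `g0`. -/
def fam {k : Type*} [Field k] {n m : ℕ} (g0 : Matrix (Fin n) (Fin n) k) {J : Type}
    (u : J → (Fin n → k)) : J × ZMod m → (Fin n → k) :=
  fun p => g0 ^ p.2.val *ᵥ u p.1

theorem fam_step {k : Type*} [Field k] {n m : ℕ} [NeZero m] {g0 : Matrix (Fin n) (Fin n) k}
    (hg0 : g0 ^ m = 1) {J : Type} (u : J → (Fin n → k)) (j : J) (i : ZMod m) :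
    g0 *ᵥ fam g0 u (j, i) = fam g0 u (j, i + 1) := by
  unfold fam
  simp only
  rw [Matrix.mulVec_mulVec, add_comm i, pow_val_add hg0, pow_val_one hg0]

theorem extend_aux {k : Type*} [Field k] {n m : ℕ} [NeZero m] {ξ : k} (hξ : IsPrimitiveRoot ξ m)
    {g0 : Matrix (Fin n) (Fin n) k} (hg0 : g0 ^ m = 1)
    (c : Submodule k (Matrix (Fin n) (Fin n) k))
    (hc : ∀ x ∈ c, x * g0 = ξ • (g0 * x))
    (U : Submodule k (Fin n → k)) (hUg : ∀ v ∈ U, g0 *ᵥ v ∈ U)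
    (hUc : ∀ x ∈ c, ∀ v ∈ U, x *ᵥ v ∈ U)
    (v : Fin n → k) (hv : ∀ x ∈ c, ∃ μ : k, x *ᵥ v = μ • v) (hvU : v ∉ U)
    (hv0 : v ∉ zeroWt c) :
    LinearIndependent k (fun i : ZMod m => g0 ^ i.val *ᵥ v) ∧
    Disjoint (Submodule.span k (Set.range (fun i : ZMod m => g0 ^ i.val *ᵥ v))) U := by
  have hUgp : ∀ (i : ℕ), ∀ w ∈ U, g0 ^ i *ᵥ w ∈ U := by
    intro i
    induction i with
    | zero => intro w hw; simpa using hw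
    | succ i ih =>
      intro w hw
      rw [pow_succ, ← Matrix.mulVec_mulVec]
      exact ih _ (hUg _ hw)
  obtain ⟨x, hx, hxv⟩ : ∃ x ∈ c, x *ᵥ v ≠ 0 := by
    by_contra! h
    exact hv0 h
  obtain ⟨μ, hμ⟩ := hv x hx
  have hμ0 : μ ≠ 0 := by
    rintro rfl
    exact hxv (by simpa using hμ)
  let X : Module.End k ((Fin n → k) ⧸ U) :=
    U.mapQ U (Matrix.toLin' x) (fun w hw => by simpa using hUc x hx w hw)
  have hLI : LinearIndependent k (U.mkQ ∘ (fun i : ZMod m => g0 ^ i.val *ᵥ v)) := by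
    apply Module.End.eigenvectors_linearIndependent' X (fun i : ZMod m => ξ ^ i.val * μ)
    · intro i j hij
      have := mul_right_cancel₀ hμ0 hij
      exact ZMod.val_injective m (hξ.pow_inj (ZMod.val_lt i) (ZMod.val_lt j) this)
    · intro i
      refine ⟨?_, ?_⟩
      · rw [Module.End.mem_eigenspace_iff]
        simp only [X, Function.comp, Submodule.mkQ_apply, Submodule.mapQ_apply, Matrix.toLin'_apply]
        rw [wt_pow (hc x hx) _ hμ]
        simp
      · simp only [Function.comp, Submodule.mkQ_apply]
        rw [Ne, Submodule.Quotient.mk_eq_zero]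
        intro h
        apply hvU
        have h2 := hUgp ((-i).val) _ h
        rw [Matrix.mulVec_mulVec, ← pow_val_add hg0] at h2
        simpa using h2
  refine ⟨LinearIndependent.of_comp _ hLI, ?_⟩
  have := Submodule.range_ker_disjoint hLI
  rwa [Submodule.ker_mkQ] at this

theorem construct_aux {k : Type*} [Field k] {n m : ℕ} [NeZero m] {ξ : k}
    (hξ : IsPrimitiveRoot ξ m)
    {g0 : Matrix (Fin n) (Fin n) k} (hg0 : g0 ^ m = 1)
    (c : Submodule k (Matrix (Fin n) (Fin n) k))
    (hc : ∀ x ∈ c, x * g0 = ξ • (g0 * x))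
    (hspan : Submodule.span k {v : Fin n → k | ∀ x ∈ c, ∃ μ : k, x *ᵥ v = μ • v} = ⊤)
    (d : ℕ) : ∀ (J : Type) [Fintype J] (u : J → (Fin n → k)),
      (∀ j, ∀ x ∈ c, ∃ μ : k, x *ᵥ u j = μ • u j) →
      LinearIndependent k (fam g0 u : J × ZMod m → _) →
      Disjoint (Submodule.span k (Set.range (fam g0 u : J × ZMod m → _))) (zeroWt c) →
      n ≤ Fintype.card J + d →
      ∃ (J : Type) (_ : Fintype J) (u : J → (Fin n → k)),
        (∀ j, ∀ x ∈ c, ∃ μ : k, x *ᵥ u j = μ • u j) ∧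
        LinearIndependent k (fam g0 u : J × ZMod m → _) ∧
        IsCompl (Submodule.span k (Set.range (fam g0 u : J × ZMod m → _))) (zeroWt c) := by
  induction d with
  | zero =>
    intro J _ u hu hLI hdisj hn
    refine ⟨J, inferInstance, u, hu, hLI, hdisj, ?_⟩
    have h1 := hLI.fintype_card_le_finrank
    simp only [Fintype.card_prod, ZMod.card, Module.finrank_fin_fun] at h1
    have hm : 1 ≤ m := NeZero.one_le
    have h2 : Fintype.card (J × ZMod m) = Module.finrank k (Fin n → k) := by
      simp only [Fintype.card_prod, ZMod.card, Module.finrank_fin_fun]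
      nlinarith
    rw [hLI.span_eq_top_of_card_eq_finrank' h2]
    exact codisjoint_top_left
  | succ d ih =>
    intro J _ u hu hLI hdisj hn
    by_cases hcod : Codisjoint (Submodule.span k (Set.range (fam g0 u : J × ZMod m → _))) (zeroWt c)
    · exact ⟨J, inferInstance, u, hu, hLI, hdisj, hcod⟩
    set N := Submodule.span k (Set.range (fam g0 u : J × ZMod m → _)) with hN
    have hNg : ∀ v ∈ N, g0 *ᵥ v ∈ N := by
      intro v hv
      have : N ≤ N.comap (Matrix.toLin' g0) := by
        rw [hN, Submodule.span_le]
        rintro _ ⟨⟨j, i⟩, rfl⟩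
        simp only [Submodule.comap_coe, Set.mem_preimage, Matrix.toLin'_apply, SetLike.mem_coe]
        rw [fam_step hg0]
        exact Submodule.subset_span ⟨_, rfl⟩
      simpa using this hv
    have hNc : ∀ x ∈ c, ∀ v ∈ N, x *ᵥ v ∈ N := by
      intro x hx v hv
      have : N ≤ N.comap (Matrix.toLin' x) := by
        rw [hN, Submodule.span_le]
        rintro _ ⟨⟨j, i⟩, rfl⟩
        simp only [Submodule.comap_coe, Set.mem_preimage, Matrix.toLin'_apply, SetLike.mem_coe]
        obtain ⟨μ, hμ⟩ := hu j x hx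
        have := wt_pow (hc x hx) i.val hμ
        unfold fam
        simp only
        rw [this]
        exact Submodule.smul_mem _ _ (Submodule.subset_span ⟨(j, i), rfl⟩)
      simpa using this hv
    have hZg : ∀ v ∈ zeroWt c, g0 *ᵥ v ∈ zeroWt c := by
      intro v hv x hx
      rw [Matrix.mulVec_mulVec, hc x hx, Matrix.smul_mulVec, ← Matrix.mulVec_mulVec, hv x hx]
      simp
    have hUg : ∀ v ∈ N ⊔ zeroWt c, g0 *ᵥ v ∈ N ⊔ zeroWt c := by
      intro v hv
      obtain ⟨a, ha, b, hb, rfl⟩ := Submodule.mem_sup.1 hv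
      rw [Matrix.mulVec_add]
      exact Submodule.add_mem_sup (hNg a ha) (hZg b hb)
    have hUc : ∀ x ∈ c, ∀ v ∈ N ⊔ zeroWt c, x *ᵥ v ∈ N ⊔ zeroWt c := by
      intro x hx v hv
      obtain ⟨a, ha, b, hb, rfl⟩ := Submodule.mem_sup.1 hv
      rw [Matrix.mulVec_add, hb x hx, add_zero]
      exact Submodule.mem_sup_left (hNc x hx a ha)
    obtain ⟨v, hv, hvU⟩ : ∃ v ∈ {v : Fin n → k | ∀ x ∈ c, ∃ μ : k, x *ᵥ v = μ • v},
        v ∉ N ⊔ zeroWt c := by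
      by_contra! h
      apply hcod
      rw [codisjoint_iff, eq_top_iff, ← hspan, Submodule.span_le]
      exact h
    obtain ⟨hLI', hdisj'⟩ := extend_aux hξ hg0 c hc _ hUg hUc v hv hvU
      (fun h => hvU (Submodule.mem_sup_right h))
    let u' : J ⊕ Unit → (Fin n → k) := Sum.elim u (fun _ => v)
    let e : (J ⊕ Unit) × ZMod m ≃ (J × ZMod m) ⊕ ZMod m :=
      (Equiv.sumProdDistrib J Unit (ZMod m)).trans
        (Equiv.sumCongr (Equiv.refl _) (Equiv.punitProd _))
    have hfam : (fam g0 u' : (J ⊕ Unit) × ZMod m → _) =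
        Sum.elim (fam g0 u) (fun i : ZMod m => g0 ^ i.val *ᵥ v) ∘ e := by
      funext ⟨j, i⟩
      rcases j with j | j <;> rfl
    refine ih (J ⊕ Unit) u' ?_ ?_ ?_ ?_
    · rintro (j | j)
      · exact hu j
      · exact hv
    · rw [hfam, linearIndependent_equiv]
      exact hLI.sum_type hLI' (hdisj'.mono_right le_sup_left).symm
    · rw [hfam, e.surjective.range_comp, Set.Sum.elim_range, Submodule.span_union, ← hN, sup_comm]
      exact hdisj.disjoint_sup_left_of_disjoint_sup_right hdisj'
    · simp only [Fintype.card_sum, Fintype.card_unit]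
      omega

theorem construct {k : Type*} [Field k] {n m : ℕ} [NeZero m] {ξ : k}
    (hξ : IsPrimitiveRoot ξ m)
    {g0 : Matrix (Fin n) (Fin n) k} (hg0 : g0 ^ m = 1)
    (c : Submodule k (Matrix (Fin n) (Fin n) k))
    (hc : ∀ x ∈ c, x * g0 = ξ • (g0 * x))
    (hspan : Submodule.span k {v : Fin n → k | ∀ x ∈ c, ∃ μ : k, x *ᵥ v = μ • v} = ⊤) :
    ∃ (J : Type) (_ : Fintype J) (Z : Type)
      (B : Module.Basis ((J × ZMod m) ⊕ Z) k (Fin n → k)),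
      (∀ j i, g0 *ᵥ B (Sum.inl (j, i)) = B (Sum.inl (j, i + 1))) ∧
      (∀ x ∈ c, ∃ χ : J → k, ∀ j i, x *ᵥ B (Sum.inl (j, i)) =
        (ξ ^ i.val * χ j) • B (Sum.inl (j, i))) ∧
      (∀ x ∈ c, ∀ z, x *ᵥ B (Sum.inr z) = 0) ∧
      (∀ z, g0 *ᵥ B (Sum.inr z) ∈ Submodule.span k (Set.range fun z => B (Sum.inr z))) := by
  obtain ⟨J, _, u, hu, hLI, hcompl⟩ := construct_aux hξ hg0 c hc hspan n PEmpty
    (fun j => j.elim) (fun j => j.elim) (linearIndependent_empty_type)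
    (by simp [Set.range_eq_empty]) (by simp)
  let Bz := Module.finBasis k (zeroWt c)
  let w : Fin (Module.finrank k (zeroWt c)) → (Fin n → k) := fun z => (Bz z : Fin n → k)
  have hw : LinearIndependent k w :=
    Bz.linearIndependent.map' (zeroWt c).subtype (Submodule.ker_subtype _)
  have hws : Submodule.span k (Set.range w) = zeroWt c := by
    have h1 : Set.range w = (zeroWt c).subtype '' (Set.range Bz) := by
      rw [← Set.range_comp]; rfl
    rw [h1, Submodule.span_image, Bz.span_eq, Submodule.map_top, Submodule.range_subtype]
  have hall : LinearIndependent k (Sum.elim (fam g0 u : J × ZMod m → _) w) :=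
    hLI.sum_type hw (by rw [hws]; exact hcompl.disjoint)
  let B := Module.Basis.mk hall (by
    rw [Set.Sum.elim_range, Submodule.span_union, hws, hcompl.sup_eq_top])
  have hBl : ∀ p, B (Sum.inl p) = fam g0 u p := fun p => by simp [B]
  have hBr : ∀ z, B (Sum.inr z) = w z := fun p => by simp [B]
  refine ⟨J, inferInstance, Fin (Module.finrank k (zeroWt c)), B, ?_, ?_, ?_, ?_⟩
  · intro j i
    rw [hBl, hBl, fam_step hg0]
  · intro x hx
    choose χ hχ using fun j => hu j x hx
    refine ⟨χ, fun j i => ?_⟩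
    rw [hBl]
    exact wt_pow (hc x hx) i.val (hχ j)
  · intro x hx z
    rw [hBr]
    exact (Bz z).2 x hx
  · intro z
    simp only [hBr]
    change _ ∈ Submodule.span k (Set.range w)
    rw [hws]
    intro x hx
    rw [Matrix.mulVec_mulVec, hc x hx, Matrix.smul_mulVec, ← Matrix.mulVec_mulVec,
      (Bz z).2 x hx]
    simp

theorem main_aux {k : Type*} [Field k] {n m : ℕ} [NeZero m] {ζ ξ : k}
    (hξ : IsPrimitiveRoot ξ m) (hζξ : ξ * ζ = 1)
    {g0 : Matrix (Fin n) (Fin n) k} (hg0 : g0 ^ m = 1)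
    (c : Submodule k (Matrix (Fin n) (Fin n) k))
    (hc : IsCartanSubspace {x | x * g0 = ξ • (g0 * x)} c)
    (r : ℕ) (hr : Module.finrank k c = r) :
    ∃ b : Fin r → Matrix (Fin n) (Fin n) k,
      LinearIndependent k b ∧ Submodule.span k (Set.range b) = c ∧
      littleWeylSet {h | IsUnit h.det ∧ h * g0 = g0 * h} c b = GmqrSet k m 1 r := by
  classical
  obtain ⟨hcg, hcomm, hss, hmax⟩ := hc
  obtain ⟨J, _, Z, B, hBg, hBx, hBz, hBgz⟩ := construct hξ hg0 c (fun x hx => hcg hx)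
    (span_weight c hcomm hss)
  -- the basis elements
  have hex : ∀ j : J, ∃ y : Matrix (Fin n) (Fin n) k,
      (∀ j' i, y *ᵥ B (Sum.inl (j', i)) =
        (if j' = j then ξ ^ i.val else 0) • B (Sum.inl (j', i))) ∧
      ∀ z, y *ᵥ B (Sum.inr z) = 0 := by
    intro j
    refine ⟨LinearMap.toMatrix' (B.constr k (Sum.elim
      (fun p => (if p.1 = j then ξ ^ p.2.val else 0) • B (Sum.inl p)) (fun _ => 0))), ?_, ?_⟩
    · intro j' i
      rw [← Matrix.toLin'_apply, Matrix.toLin'_toMatrix', Module.Basis.constr_basis]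
      rfl
    · intro z
      rw [← Matrix.toLin'_apply, Matrix.toLin'_toMatrix', Module.Basis.constr_basis]
      rfl
  choose y hyl hyr using hex
  have hkill : ∀ x : Matrix (Fin n) (Fin n) k, (∀ z, x *ᵥ B (Sum.inr z) = 0) →
      ∀ z, x *ᵥ (g0 *ᵥ B (Sum.inr z)) = 0 := by
    intro x hx z
    have : Submodule.span k (Set.range fun z => B (Sum.inr z)) ≤
        LinearMap.ker (Matrix.toLin' x) := by
      rw [Submodule.span_le]
      rintro _ ⟨z, rfl⟩
      simpa using hx z
    simpa using this (hBgz z)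
  have hyg : ∀ j, y j * g0 = ξ • (g0 * y j) := by
    intro j
    apply mat_ext B
    rintro (⟨j', i⟩ | z)
    · rw [← Matrix.mulVec_mulVec, hBg, hyl, Matrix.smul_mulVec, ← Matrix.mulVec_mulVec, hyl,
        Matrix.mulVec_smul, hBg, smul_smul]
      congr 1
      rw [pow_val_add hξ.pow_eq_one, pow_val_one hξ.pow_eq_one]
      split_ifs <;> ring
    · rw [← Matrix.mulVec_mulVec, hkill _ (hyr j), Matrix.smul_mulVec, ← Matrix.mulVec_mulVec, hyr]
      simp
  -- diagonal matrices in the basis `B`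
  have hdiagc : ∀ x ∈ c, ∀ q, ∃ μ : k, x *ᵥ B q = μ • B q := by
    rintro x hx (⟨j, i⟩ | z)
    · obtain ⟨χ, hχ⟩ := hBx x hx
      exact ⟨_, hχ j i⟩
    · exact ⟨0, by rw [hBz x hx, zero_smul]⟩
  have hdiagy : ∀ j q, ∃ μ : k, y j *ᵥ B q = μ • B q := by
    rintro j (⟨j', i⟩ | z)
    · exact ⟨_, hyl j j' i⟩
    · exact ⟨0, by rw [hyr, zero_smul]⟩
  have hcommd : ∀ x x' : Matrix (Fin n) (Fin n) k, (∀ q, ∃ μ : k, x *ᵥ B q = μ • B q) →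
      (∀ q, ∃ μ : k, x' *ᵥ B q = μ • B q) → x * x' = x' * x := by
    intro x x' hx hx'
    apply mat_ext B
    intro q
    obtain ⟨μ, hμ⟩ := hx q
    obtain ⟨μ', hμ'⟩ := hx' q
    rw [← Matrix.mulVec_mulVec, ← Matrix.mulVec_mulVec, hμ, hμ', Matrix.mulVec_smul,
      Matrix.mulVec_smul, hμ, hμ', smul_comm]
  have hyc : ∀ j, y j ∈ c := by
    intro j
    have hd : ∀ x ∈ c ⊔ Submodule.span k {y j}, ∀ q, ∃ μ : k, x *ᵥ B q = μ • B q := by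
      intro x hx q
      obtain ⟨a, ha, b, hb, rfl⟩ := Submodule.mem_sup.1 hx
      obtain ⟨t, rfl⟩ := Submodule.mem_span_singleton.1 hb
      obtain ⟨μ, hμ⟩ := hdiagc a ha q
      obtain ⟨μ', hμ'⟩ := hdiagy j q
      exact ⟨μ + t * μ', by
        rw [Matrix.add_mulVec, Matrix.smul_mulVec, hμ, hμ', smul_smul, add_smul]⟩
    have := hmax (c ⊔ Submodule.span k {y j}) ⟨?_, ?_, ?_⟩ le_sup_left
    · rw [← this]
      exact Submodule.mem_sup_right (Submodule.mem_span_singleton_self _)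
    · intro x hx
      obtain ⟨a, ha, b, hb, rfl⟩ := Submodule.mem_sup.1 hx
      obtain ⟨t, rfl⟩ := Submodule.mem_span_singleton.1 hb
      have ha' : a * g0 = ξ • (g0 * a) := hcg ha
      change (a + t • y j) * g0 = ξ • (g0 * (a + t • y j))
      rw [Matrix.add_mul, Matrix.smul_mul, ha', hyg, Matrix.mul_add, Matrix.mul_smul, smul_add,
        smul_comm t ξ]
    · intro x hx x' hx'
      exact hcommd x x' (hd x hx) (hd x' hx')
    · intro x hx
      exact semis_of_basis B (hd x hx)
  -- evaluation of combinations
  have heval : ∀ (t : J → k) (j : J) (i : ZMod m), (∑ l, t l • y l) *ᵥ B (Sum.inl (j, i)) =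
      (ξ ^ i.val * t j) • B (Sum.inl (j, i)) := by
    intro t j i
    rw [Matrix.sum_mulVec]
    simp only [Matrix.smul_mulVec, hyl, smul_smul]
    rw [← Finset.sum_smul]
    congr 1
    simp [mul_comm]
  have hevalr : ∀ (t : J → k) (z), (∑ l, t l • y l) *ᵥ B (Sum.inr z) = 0 := by
    intro t z
    rw [Matrix.sum_mulVec]
    simp [Matrix.smul_mulVec, hyr]
  have hsmul : ∀ (q) (s t : k), s • B q = t • B q → s = t := fun q s t h =>
    smul_left_injective k (B.ne_zero q) h
  have hyLI : LinearIndependent k y := by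
    rw [Fintype.linearIndependent_iff]
    intro t ht j
    have h1 := heval t j 0
    rw [ht, Matrix.zero_mulVec, eq_comm, ← zero_smul k (B (Sum.inl (j, 0)))] at h1
    have := hsmul _ _ _ h1
    simpa using this
  have hyspan : Submodule.span k (Set.range y) = c := by
    apply le_antisymm
    · rw [Submodule.span_le]
      rintro _ ⟨j, rfl⟩
      exact hyc j
    · intro x hx
      obtain ⟨χ, hχ⟩ := hBx x hx
      have : x = ∑ l, χ l • y l := by
        apply mat_ext B
        rintro (⟨j, i⟩ | z)
        · rw [hχ, heval]
        · rw [hBz x hx, hevalr]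
      rw [this]
      exact Submodule.sum_mem _ fun l _ => Submodule.smul_mem _ _ (Submodule.subset_span ⟨l, rfl⟩)
  have hcard : Fintype.card J = r := by
    rw [← hr, ← hyspan, finrank_span_eq_card hyLI]
  let e : Fin r ≃ J := (finCongr hcard.symm).trans (Fintype.equivFin J).symm
  have hsum : ∀ t : Fin r → k, ∑ i, t i • y (e i) = ∑ l, t (e.symm l) • y l := by
    intro t
    rw [← e.sum_comp]
    simp
  refine ⟨y ∘ e, (linearIndependent_equiv e).2 hyLI, ?_, ?_⟩
  · rw [e.surjective.range_comp, hyspan]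
  ext w
  constructor
  · rintro ⟨h, ⟨hdet, _⟩, _, _, hw⟩
    simp only [Function.comp, hsum] at hw
    have hinv : h⁻¹ * h = 1 := Matrix.nonsing_inv_mul _ hdet
    have hmulconj : ∀ a b : Matrix (Fin n) (Fin n) k,
        (h * a * h⁻¹) * (h * b * h⁻¹) = h * (a * b) * h⁻¹ := by
      intro a b
      calc _ = h * a * (h⁻¹ * h) * b * h⁻¹ := by noncomm_ring
        _ = _ := by rw [hinv]; noncomm_ring
    -- evaluation at a basis vector
    have hev : ∀ i j, (h * y (e j) * h⁻¹) *ᵥ B (Sum.inl (e i, 0)) =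
        w i j • B (Sum.inl (e i, 0)) := by
      intro i j
      rw [hw, heval (fun l => w (e.symm l) j)]
      simp
    have horth : ∀ j j', j ≠ j' → ∀ i, w i j * w i j' = 0 := by
      intro j j' hjj i
      have h0 : y (e j) * y (e j') = 0 := by
        apply mat_ext B
        rintro (⟨l, i⟩ | z)
        · rw [← Matrix.mulVec_mulVec, hyl, Matrix.mulVec_smul, hyl, smul_smul, Matrix.zero_mulVec]
          by_cases h1 : l = e j
          · have : l ≠ e j' := fun h2 => hjj (e.injective (h1.symm.trans h2))
            simp [this]
          · simp [h1]
        · rw [← Matrix.mulVec_mulVec, hyr]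
          simp
      have h1 : ((h * y (e j) * h⁻¹) * (h * y (e j') * h⁻¹)) *ᵥ B (Sum.inl (e i, 0)) = 0 := by
        rw [hmulconj, h0]
        simp
      rw [← Matrix.mulVec_mulVec, hev, Matrix.mulVec_smul, hev, smul_smul,
        ← zero_smul k (B (Sum.inl (e i, 0)))] at h1
      rw [mul_comm]
      exact hsmul _ _ _ h1
    have hpowe : ∀ (x : Matrix (Fin n) (Fin n) k) (μ : k) (v : Fin n → k), x *ᵥ v = μ • v →
        ∀ N : ℕ, x ^ N *ᵥ v = μ ^ N • v := by
      intro x μ v hv N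
      induction N with
      | zero => simp
      | succ N ih =>
        rw [pow_succ, ← Matrix.mulVec_mulVec, hv, Matrix.mulVec_smul, ih, smul_smul, pow_succ,
          mul_comm]
    have hpow : ∀ i j, w i j ^ (m + 1) = w i j := by
      intro i j
      have h0 : y (e j) ^ (m + 1) = y (e j) := by
        apply mat_ext B
        rintro (⟨l, i⟩ | z)
        · rw [hpowe _ _ _ (hyl _ _ _), hyl]
          congr 1
          split_ifs
          · rw [pow_succ, pow_right_comm, hξ.pow_eq_one, one_pow, one_mul]
          · simp
        · rw [hpowe _ 0 _ (by rw [hyr, zero_smul]), hyr]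
          simp
      have h1 : ∀ N : ℕ, (h * y (e j) * h⁻¹) ^ (N + 1) = h * y (e j) ^ (N + 1) * h⁻¹ := by
        intro N
        induction N with
        | zero => simp
        | succ N ih => rw [pow_succ, ih, hmulconj, ← pow_succ]
      have h2 := hpowe _ _ _ (hev i j) (m + 1)
      rw [h1, h0, hev] at h2
      exact (hsmul _ _ _ h2).symm
    have hcol : ∀ j, ∃ i, w i j ≠ 0 := by
      intro j
      by_contra! h0
      have h1 : h * y (e j) * h⁻¹ = 0 := by
        rw [hw]
        simp [h0]
      have h2 : y (e j) = 0 := by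
        calc y (e j) = (h⁻¹ * h) * y (e j) * (h⁻¹ * h) := by rw [hinv]; simp
          _ = h⁻¹ * (h * y (e j) * h⁻¹) * h := by noncomm_ring
          _ = 0 := by rw [h1]; simp
      exact hyLI.ne_zero _ h2
    choose σ hσ using hcol
    have hσinj : Function.Injective σ := by
      intro j j' hjj
      by_contra hne
      have := horth j j' hne (σ j)
      rcases mul_eq_zero.1 this with h1 | h1
      · exact hσ j h1
      · rw [hjj] at h1
        exact hσ j' h1
    have hroot : ∀ j, w (σ j) j ^ m = 1 := by
      intro j
      have h1 := hpow (σ j) j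
      rw [pow_succ] at h1
      exact mul_right_cancel₀ (hσ j) (by rw [h1, one_mul])
    have hσb : Function.Bijective σ := Finite.injective_iff_bijective.1 hσinj
    refine ⟨Equiv.ofBijective σ hσb, ?_, hroot, ?_⟩
    · intro i j hij
      obtain ⟨j', rfl⟩ := hσb.2 i
      have hne : j ≠ j' := by
        rintro rfl
        exact hij rfl
      exact (mul_eq_zero.1 (horth j j' hne (σ j'))).resolve_right (hσ j')
    · rw [Nat.div_one, ← Finset.prod_pow]
      exact Finset.prod_eq_one fun j _ => hroot j
  · rintro ⟨σ, hσ0, hσ1, _⟩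
    have ha : ∀ j, ∃ a : ZMod m, ξ ^ a.val * w (σ j) j = 1 := by
      intro j
      have hne : w (σ j) j ≠ 0 := by
        intro h0
        have := hσ1 j
        rw [h0, zero_pow (NeZero.ne m)] at this
        exact zero_ne_one this
      obtain ⟨N, hN, hN'⟩ := hξ.eq_pow_of_pow_eq_one (ξ := (w (σ j) j)⁻¹)
        (by rw [inv_pow, hσ1, inv_one])
      refine ⟨(N : ZMod m), ?_⟩
      rw [ZMod.val_natCast_of_lt hN, hN', inv_mul_cancel₀ hne]
    choose a ha using ha
    let τ : (J × ZMod m) ⊕ Z ≃ (J × ZMod m) ⊕ Z := Equiv.sumCongr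
      { toFun := fun p => (e (σ (e.symm p.1)), p.2 + a (e.symm p.1))
        invFun := fun p => (e (σ.symm (e.symm p.1)), p.2 - a (σ.symm (e.symm p.1)))
        left_inv := fun p => by simp
        right_inv := fun p => by simp } (Equiv.refl Z)
    let L : (Fin n → k) ≃ₗ[k] (Fin n → k) := B.equiv B τ
    let h : Matrix (Fin n) (Fin n) k := LinearMap.toMatrix' L.toLinearMap
    have hB : ∀ q, h *ᵥ B q = B (τ q) := by
      intro q
      rw [← Matrix.toLin'_apply, Matrix.toLin'_toMatrix']
      simp [L]
    have hBl : ∀ j i, h *ᵥ B (Sum.inl (e j, i)) = B (Sum.inl (e (σ j), i + a j)) := by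
      intro j i
      rw [hB]
      simp [τ]
    have hBr : ∀ z, h *ᵥ B (Sum.inr z) = B (Sum.inr z) := fun z => by
      rw [hB]
      simp [τ]
    have hdet : IsUnit h.det := by
      rw [LinearMap.det_toMatrix']
      exact L.isUnit_det'
    have hconj : ∀ j, h * y (e j) = w (σ j) j • (y (e (σ j)) * h) := by
      intro j
      apply mat_ext B
      rintro (⟨l, i⟩ | z)
      · obtain ⟨l, rfl⟩ := e.surjective l
        rw [← Matrix.mulVec_mulVec, hyl, Matrix.mulVec_smul, hBl, Matrix.smul_mulVec,
          ← Matrix.mulVec_mulVec, hBl, hyl, smul_smul]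
        congr 1
        by_cases hl : l = j
        · subst hl
          simp only [if_true]
          rw [pow_val_add hξ.pow_eq_one]
          linear_combination (-(ξ ^ i.val)) * ha l
        · simp [hl]
      · rw [← Matrix.mulVec_mulVec, hyr, Matrix.smul_mulVec, ← Matrix.mulVec_mulVec, hBr, hyr]
        simp
    have hinv : h⁻¹ * h = 1 := Matrix.nonsing_inv_mul _ hdet
    have hinv' : h * h⁻¹ = 1 := Matrix.mul_nonsing_inv _ hdet
    have hconj1 : ∀ j, h * y (e j) * h⁻¹ = w (σ j) j • y (e (σ j)) := by
      intro j
      rw [hconj, Matrix.smul_mul, Matrix.mul_assoc, hinv', Matrix.mul_one]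
    have hconj2 : ∀ j, h⁻¹ * y (e (σ j)) * h = ξ ^ (a j).val • y (e j) := by
      intro j
      have h1 : y (e (σ j)) * h = ξ ^ (a j).val • (h * y (e j)) := by
        rw [hconj, smul_smul, ha, one_smul]
      rw [Matrix.mul_assoc, h1, Matrix.mul_smul, ← Matrix.mul_assoc, hinv, Matrix.one_mul]
    have hstab : ∀ p q : Matrix (Fin n) (Fin n) k, (∀ j, p * y j * q ∈ c) →
        ∀ x ∈ c, p * x * q ∈ c := by
      intro p q hpq x hx
      rw [← hyspan] at hx
      induction hx using Submodule.span_induction with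
      | mem x hx =>
        obtain ⟨j, rfl⟩ := hx
        exact hpq j
      | zero => simp
      | add x x' _ _ h1 h2 =>
        rw [Matrix.mul_add, Matrix.add_mul]
        exact c.add_mem h1 h2
      | smul t x _ h1 =>
        rw [Matrix.mul_smul, Matrix.smul_mul]
        exact c.smul_mem _ h1
    refine ⟨h, ⟨hdet, ?_⟩, ?_, ?_, ?_⟩
    · apply mat_ext B
      rintro (⟨l, i⟩ | z)
      · obtain ⟨l, rfl⟩ := e.surjective l
        rw [← Matrix.mulVec_mulVec, ← Matrix.mulVec_mulVec, hBg, hBl, hBl, hBg, add_right_comm]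
      · rw [← Matrix.mulVec_mulVec, ← Matrix.mulVec_mulVec, hBr]
        have h1 := hkill (h - 1) (fun z => by
          rw [Matrix.sub_mulVec, hBr, Matrix.one_mulVec, sub_self]) z
        rwa [Matrix.sub_mulVec, Matrix.one_mulVec, sub_eq_zero] at h1
    · apply hstab
      intro j
      obtain ⟨j, rfl⟩ := e.surjective j
      rw [hconj1]
      exact c.smul_mem _ (hyc _)
    · apply hstab
      intro j
      obtain ⟨j, rfl⟩ := e.surjective j
      obtain ⟨j, rfl⟩ := σ.surjective j
      rw [hconj2]
      exact c.smul_mem _ (hyc _)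
    · intro j
      simp only [Function.comp]
      rw [hconj1, Finset.sum_eq_single (σ j)]
      · intro i _ hi
        rw [hσ0 i j hi, zero_smul]
      · simp

/-- little Weyl group of an inner automorphism of `GL(n,k)` (or
`SL(n,k)` with `p ∤ n`) of order exactly `m`: with respect to a suitable basis
of a Cartan subspace `c` (of dimension `r`) it equals `G(m,1,r)`; in
particular it has order `m^r · r!`. -/
theorem stmt10 {k : Type*} [Field k] [IsAlgClosed k]
    (hchar : ringChar k = 0 ∨ 2 < ringChar k)
    (m : ℕ) (hm : 0 < m) (hmchar : ¬ (ringChar k ∣ m))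
    (ζ : k) (hζ : IsPrimitiveRoot ζ m)
    (n : ℕ) (g : Matrix (Fin n) (Fin n) k) (hg : IsUnit g.det)
    (hordm : ∃ a : k, g ^ m = a • (1 : Matrix (Fin n) (Fin n) k))
    (hordleast : ∀ j : ℕ, 0 < j → j < m →
      ∀ a : k, g ^ j ≠ a • (1 : Matrix (Fin n) (Fin n) k))
    (c : Submodule k (Matrix (Fin n) (Fin n) k))
    (hc : IsCartanSubspace {x | g * x * g⁻¹ = ζ • x} c)
    (r : ℕ) (hr : Module.finrank k c = r) :
    (∃ b : Fin r → Matrix (Fin n) (Fin n) k,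
      LinearIndependent k b ∧ Submodule.span k (Set.range b) = c ∧
      littleWeylSet {h | IsUnit h.det ∧ h * g = g * h} c b = GmqrSet k m 1 r) ∧
    Nat.card (GmqrSet k m 1 r) = m ^ r * Nat.factorial r := by
  refine ⟨?_, card_gmqr m r hm ζ hζ⟩
  have : NeZero m := ⟨hm.ne'⟩
  obtain ⟨α, hα, hgα⟩ : ∃ α : k, α ≠ 0 ∧ g ^ m = α ^ m • (1 : Matrix (Fin n) (Fin n) k) := by
    rcases Nat.eq_zero_or_pos n with rfl | hn
    · exact ⟨1, one_ne_zero, Subsingleton.elim _ _⟩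
    · obtain ⟨a, ha⟩ := hordm
      obtain ⟨α, hα⟩ := IsAlgClosed.exists_pow_nat_eq a hm
      refine ⟨α, ?_, by rw [hα, ha]⟩
      rintro rfl
      rw [zero_pow hm.ne'] at hα
      rw [← hα, zero_smul] at ha
      have h1 : IsUnit (g ^ m).det := by
        rw [Matrix.det_pow]
        exact hg.pow m
      have : Nonempty (Fin n) := ⟨⟨0, hn⟩⟩
      rw [ha, Matrix.det_zero] at h1
      exact not_isUnit_zero h1
  have hζ0 : ζ ≠ 0 := hζ.ne_zero hm.ne'
  let g0 : Matrix (Fin n) (Fin n) k := α⁻¹ • g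
  have hg0 : g0 ^ m = 1 := by
    simp only [g0]
    rw [smul_pow, hgα, smul_smul, ← mul_pow, inv_mul_cancel₀ hα, one_pow, one_smul]
  have hset : {x : Matrix (Fin n) (Fin n) k | g * x * g⁻¹ = ζ • x} =
      {x | x * g0 = ζ⁻¹ • (g0 * x)} := by
    ext x
    simp only [Set.mem_ofPred_eq, g0, Matrix.mul_smul, Matrix.smul_mul]
    have h1 : g * x * g⁻¹ = ζ • x ↔ g * x = ζ • (x * g) := by
      constructor
      · intro h
        rw [← Matrix.smul_mul, ← h, Matrix.mul_assoc, Matrix.nonsing_inv_mul _ hg, Matrix.mul_one]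
      · intro h
        rw [h, Matrix.smul_mul, Matrix.mul_assoc, Matrix.mul_nonsing_inv _ hg, Matrix.mul_one]
    rw [h1, smul_comm ζ⁻¹ α⁻¹, (smul_right_injective _ (inv_ne_zero hα)).eq_iff,
      eq_inv_smul_iff₀ hζ0, eq_comm]
  have hset2 : {h : Matrix (Fin n) (Fin n) k | IsUnit h.det ∧ h * g = g * h} =
      {h | IsUnit h.det ∧ h * g0 = g0 * h} := by
    ext h
    simp only [Set.mem_ofPred_eq, g0, Matrix.mul_smul, Matrix.smul_mul]
    rw [(smul_right_injective _ (inv_ne_zero hα)).eq_iff]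
  rw [hset] at hc
  rw [hset2]
  exact main_aux hζ.inv (inv_mul_cancel₀ hζ0) hg0 c hc r hr
end

section
/- Let k be an algebraically closed field of characteristic 0 or p > 2, m a positive integer not divisible by the characteristic of k, and ζ ∈ k a primitive m-th root of unity. Let g ∈ Sp(2n,k) be such that Int g has order exactly m as an automorphism of Sp(2n,k), i.e. m is the least positive integer j with g^j = ±I. Set 𝔤(1) = {x ∈ sp(2n,k) : g·x·g⁻¹ = ζ·x} and H = {h ∈ Sp(2n,k) : h·g = g·h}. Let c be a Cartan subspace of 𝔤(1) and r = dim c. Then, with respect to a suitable basis of c, the little Weyl group of c with respect to H equals G(2m,1,r) if m is odd, and equals G(m,1,r) if m is even. -/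
open Matrix

/-- The standard symplectic form matrix `Ω = [[0, Jₙ], [−Jₙ, 0]]` (with `Jₙ`
the antidiagonal matrix), written directly as a `2n×2n` matrix. -/
def omegaMat (k : Type*) [Field k] (n : ℕ) : Matrix (Fin (2 * n)) (Fin (2 * n)) k :=
  Matrix.of fun i j =>
    if (i : ℕ) + (j : ℕ) = 2 * n - 1 then (if (i : ℕ) < n then 1 else -1) else 0

section Helpers

open Module

theorem exists_common_eigenbasis.{u, w} {k : Type u} {V : Type w} [Field k] [IsAlgClosed k] [AddCommGroup V]
    [Module k V] [FiniteDimensional k V] (c : Submodule k (End k V))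
    (hcomm : ∀ x ∈ c, ∀ y ∈ c, x * y = y * x) (hss : ∀ x ∈ c, x.IsSemisimple) :
    ∃ (ι : Type w) (_ : Fintype ι) (v : Basis ι k V) (χ : ι → (c →ₗ[k] k)),
      ∀ a (x : c), (x : End k V) (v a) = χ a x • v a := by
  have h1 := End.iSup_iInf_maxGenEigenspace_eq_top_of_iSup_maxGenEigenspace_eq_top_of_commute
    (fun x : c => (x : End k V)) (fun x y _ => hcomm x x.2 y y.2)
    (fun x => End.iSup_maxGenEigenspace_eq_top _)
  have h2 : ⊤ ≤ Submodule.span k {v : V | ∀ x : c, ∃ t : k, (x : End k V) v = t • v} := by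
    rw [← h1]
    refine iSup_le fun χ v hv => Submodule.subset_span ?_
    intro x
    rw [Submodule.mem_iInf] at hv
    have := hv x
    rw [(hss x x.2).isFinitelySemisimple.maxGenEigenspace_eq_eigenspace] at this
    exact ⟨χ x, End.mem_eigenspace_iff.1 this⟩
  let v := Basis.ofSpan h2
  have hv : ∀ a (x : c), ∃ t : k, (x : End k V) (v a) = t • v a := fun a =>
    Basis.ofSpan_subset h2 ⟨a, rfl⟩
  have := FiniteDimensional.fintypeBasisIndex v
  refine ⟨_, this, v, fun a => v.coord a ∘ₗ (LinearMap.applyₗ (v a)) ∘ₗ c.subtype, ?_⟩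
  intro a x
  obtain ⟨t, ht⟩ := hv a x
  simp [ht]

theorem isSemisimple_of_pow {k V : Type*} [Field k] [AddCommGroup V]
    [Module k V] [FiniteDimensional k V] (M : ℕ) (hM : (M : k) ≠ 0) (x : End k V)
    (hx : x ^ (M + 1) = x) : x.IsSemisimple := by
  have hs : (Polynomial.X ^ M - 1 : Polynomial k).Separable :=
    by simpa using Polynomial.separable_X_pow_sub_C (1 : k) hM one_ne_zero
  have hM0 : M ≠ 0 := by rintro rfl; simp at hM
  have : (Polynomial.X * (Polynomial.X ^ M - 1) : Polynomial k).Separable := by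
    refine Polynomial.Separable.mul Polynomial.separable_X hs ?_
    refine ⟨Polynomial.X ^ (M - 1), -1, ?_⟩
    rw [← pow_succ, Nat.sub_add_cancel (by omega)]
    ring
  refine End.isSemisimple_of_squarefree_aeval_eq_zero this.squarefree ?_
  simp [mul_sub, ← pow_succ', hx]

theorem isSemisimpleMat_iff {k N : Type*} [Field k] [IsAlgClosed k] [Fintype N] [DecidableEq N]
    (x : Matrix N N k) :
    (∃ P : Matrix N N k, IsUnit P.det ∧ (P * x * P⁻¹).IsDiag) ↔
      End.IsSemisimple (Matrix.toLin' x) := by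
  constructor
  · rintro ⟨P, hP, hd⟩
    obtain ⟨d, hd⟩ := (Matrix.isDiag_iff_diagonal_diag _).1 hd |>.symm |> fun h => (⟨_, h⟩ : ∃ d, _ = Matrix.diagonal d)
    classical
    let Q : Polynomial k := ∏ a ∈ Finset.univ.image d, (Polynomial.X - Polynomial.C a)
    have hQ : Squarefree Q :=
      (Polynomial.separable_prod_X_sub_C_iff' (f := fun a : k => a) |>.2 (by simp)).squarefree
    refine End.isSemisimple_of_squarefree_aeval_eq_zero hQ ?_
    have hPP : P * P⁻¹ = 1 := Matrix.mul_nonsing_inv _ hP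
    have hPP' : P⁻¹ * P = 1 := Matrix.nonsing_inv_mul _ hP
    let u := (Pi.basisFun k N).map (Matrix.toLin'OfInv hPP hPP')
    have hu : ∀ i, u i = P⁻¹.mulVec (Pi.single i 1) := fun i => by
      rw [Basis.map_apply, Pi.basisFun_apply]; rfl
    refine u.ext fun i => ?_
    have hev : End.HasEigenvector (Matrix.toLin' x) (d i) (u i) := by
      refine ⟨End.mem_eigenspace_iff.2 ?_, u.ne_zero i⟩
      have : x * P⁻¹ = P⁻¹ * Matrix.diagonal d := by
        rw [← hd, ← Matrix.mul_assoc, ← Matrix.mul_assoc, hPP', Matrix.one_mul]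
      rw [Matrix.toLin'_apply, hu, Matrix.mulVec_mulVec, this, ← Matrix.mulVec_mulVec,
        ← Matrix.mulVec_smul]
      congr 1
      ext j
      by_cases h : j = i <;> simp [Matrix.mulVec_diagonal, h]
    rw [End.aeval_apply_of_hasEigenvector hev]
    have : Q.eval (d i) = 0 := by
      rw [Polynomial.eval_prod]
      exact Finset.prod_eq_zero (Finset.mem_image_of_mem d (Finset.mem_univ i)) (by simp)
    simp [this]
  · intro h
    obtain ⟨ι, _, v, χ, hv⟩ := exists_common_eigenbasis (k ∙ (Matrix.toLin' x)) (by
      intro a ha b hb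
      obtain ⟨s, rfl⟩ := Submodule.mem_span_singleton.1 ha
      obtain ⟨t, rfl⟩ := Submodule.mem_span_singleton.1 hb
      simp [smul_smul, mul_comm]) (by
      intro a ha
      obtain ⟨s, rfl⟩ := Submodule.mem_span_singleton.1 ha
      exact End.IsSemisimple_smul _ h)
    have hv' : ∀ a, x.mulVec (v a) = χ a ⟨_, Submodule.mem_span_singleton_self _⟩ • v a := by
      intro a
      simpa using hv a ⟨_, Submodule.mem_span_singleton_self _⟩
    let e : ι ≃ N := Fintype.equivOfCardEq (by
      rw [← Module.finrank_eq_card_basis v]; simp)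
    let w := v.reindex e
    let A : Matrix N N k := w.toMatrix (Pi.basisFun k N)
    let A' : Matrix N N k := (Pi.basisFun k N).toMatrix w
    have hAA : A * A' = 1 := by simp [A, A']
    have hA'A : A' * A = 1 := by simp [A, A']
    refine ⟨A, (Matrix.isUnit_iff_isUnit_det _).1 ⟨⟨A, A', hAA, hA'A⟩, rfl⟩, ?_⟩
    rw [Matrix.inv_eq_right_inv hAA]
    have : x * A' = A' * Matrix.diagonal (fun i => χ (e.symm i) ⟨_, Submodule.mem_span_singleton_self _⟩) := by
      ext i j
      have := congrFun (hv' (e.symm j)) i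
      rw [Matrix.mul_diagonal, Matrix.mul_apply]
      simp [A', Matrix.mulVec, dotProduct, Basis.toMatrix_apply, w] at this ⊢
      rw [this, mul_comm]
    rw [Matrix.mul_assoc, this, ← Matrix.mul_assoc, hAA, Matrix.one_mul]
    exact Matrix.isDiag_diagonal _

theorem exists_equivariant {k W : Type*} [Field k] [AddCommGroup W] [Module k W]
    (M : ℕ) (hM : M ≠ 0) (χ₀ : W) (h0 : χ₀ ≠ 0) :
    ∃ d : W → k, d χ₀ = 1 ∧ (∀ χ, d χ ≠ 0 → χ = d χ • χ₀) ∧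
      (∀ χ ω, ω ^ M = 1 → d (ω • χ) = ω * d χ) ∧ ∀ χ, d χ ^ (M + 1) = d χ := by
  classical
  let d : W → k := fun χ => if h : ∃ ω : k, ω ^ M = 1 ∧ χ = ω • χ₀ then h.choose else 0
  have hd1 : ∀ ω, ω ^ M = 1 → d (ω • χ₀) = ω := by
    intro ω hω
    have h : ∃ ω' : k, ω' ^ M = 1 ∧ ω • χ₀ = ω' • χ₀ := ⟨ω, hω, rfl⟩
    have h2 := h.choose_spec.2
    simp only [d, dif_pos h]
    exact (smul_left_injective k h0 h2).symm
  have hd0 : ∀ χ, (¬ ∃ ω : k, ω ^ M = 1 ∧ χ = ω • χ₀) → d χ = 0 := fun χ h => by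
    simp only [d, dif_neg h]
  refine ⟨d, by simpa using hd1 1 (one_pow M), ?_, ?_, ?_⟩
  · intro χ h
    by_cases h' : ∃ ω : k, ω ^ M = 1 ∧ χ = ω • χ₀
    · obtain ⟨ω, hω, rfl⟩ := h'
      rw [hd1 ω hω]
    · exact absurd (hd0 χ h') h
  · intro χ ω hω
    have hω0 : ω ≠ 0 := by rintro rfl; simp [hM] at hω
    by_cases h' : ∃ ω : k, ω ^ M = 1 ∧ χ = ω • χ₀
    · obtain ⟨τ, hτ, rfl⟩ := h'
      rw [hd1 τ hτ, smul_smul, hd1 _ (by rw [mul_pow, hω, hτ, one_mul])]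
    · rw [hd0 χ h', hd0, mul_zero]
      rintro ⟨τ, hτ, h⟩
      refine h' ⟨ω⁻¹ * τ, by simp [mul_pow, hω, hτ], ?_⟩
      rw [mul_smul, ← h, smul_smul, inv_mul_cancel₀ hω0, one_smul]
  · intro χ
    by_cases h' : ∃ ω : k, ω ^ M = 1 ∧ χ = ω • χ₀
    · obtain ⟨τ, hτ, rfl⟩ := h'
      rw [hd1 τ hτ, pow_succ, hτ, one_mul]
    · rw [hd0 χ h']; simp

/-- Cartan subspace, abstract version. -/
structure CartanData {k V : Type*} [Field k] [AddCommGroup V] [Module k V]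
    (B : V →ₗ[k] V →ₗ[k] k) (g : End k V) (ζ : k) (M : ℕ) (c : Submodule k (End k V)) : Prop where
  anti : ∀ x ∈ c, ∀ u v, B (x u) v = - B u (x v)
  gr : ∀ x ∈ c, ∀ v, g (x v) = ζ • x (g v)
  comm : ∀ x ∈ c, ∀ y ∈ c, x * y = y * x
  ss : ∀ x ∈ c, x.IsSemisimple
  maxl : ∀ y : End k V, (∀ u v, B (y u) v = - B u (y v)) → (∀ v, g (y v) = ζ • y (g v)) →
    (∀ x ∈ c, x * y = y * x) → y ^ (M + 1) = y → y ∈ c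

theorem exists_cartan_basis {k V : Type*} [Field k] [IsAlgClosed k] [AddCommGroup V]
    [Module k V] [FiniteDimensional k V] (B : V →ₗ[k] V →ₗ[k] k) (g : End k V) (ζ : k) (M : ℕ)
    (hM : M ≠ 0) (hev : Even M) (hζ : ζ ^ M = 1)
    (c : Submodule k (End k V)) (hc : CartanData B g ζ M c) (r : ℕ) (hr : finrank k c = r) :
    ∃ (b : Fin r → End k V) (e : Fin r → V), LinearIndependent k b ∧
      Submodule.span k (Set.range b) = c ∧ (∀ j, e j ≠ 0) ∧ (∀ j, b j (e j) = e j) ∧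
      (∀ i j, i ≠ j → b i * b j = 0) ∧ (∀ j, b j ^ (M + 1) = b j) := by
  obtain ⟨ι, _, v, χ, hv⟩ := exists_common_eigenbasis c hc.comm hc.ss
  have hcoord : ∀ (a : ι) (x : c) (w : V), v.coord a ((x : End k V) w) = χ a x * v.coord a w := by
    intro a x w
    have : (v.coord a) ∘ₗ (x : End k V) = χ a x • v.coord a := by
      refine v.ext fun i => ?_
      by_cases h : i = a
      · subst h; simp [hv]
      · simp [hv, h]
    exact LinearMap.congr_fun this w
  -- key construction
  have key : ∀ χ₀ : c →ₗ[k] k, χ₀ ≠ 0 → ∃ (x : c) (d : (c →ₗ[k] k) → k),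
      (∀ a, χ a x = d (χ a)) ∧ d χ₀ = 1 ∧ (∀ χ, d χ ≠ 0 → χ = d χ • χ₀) ∧
        (x : End k V) ^ (M + 1) = x := by
    intro χ₀ h0
    obtain ⟨d, d1, d2, d3, d4⟩ := exists_equivariant (k := k) M hM χ₀ h0
    let D : End k V := v.constr k (fun a => d (χ a) • v a)
    have hD : ∀ a, D (v a) = d (χ a) • v a := fun a => by
      simp only [D, Basis.constr_basis]
    have hDp : ∀ (n : ℕ) a, (D ^ n) (v a) = d (χ a) ^ n • v a := by
      intro n a
      induction n with
      | zero => simp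
      | succ n ih => rw [pow_succ, End.mul_apply, hD, map_smul, ih, smul_smul, pow_succ, mul_comm]
    have hDc : ∀ a w, v.coord a (D w) = d (χ a) * v.coord a w := by
      intro a w
      have : (v.coord a) ∘ₗ D = d (χ a) • v.coord a := by
        refine v.ext fun i => ?_
        by_cases h : i = a
        · subst h; simp [hD]
        · simp [hD, h]
      exact LinearMap.congr_fun this w
    have hD5 : D ^ (M + 1) = D := v.ext fun a => by rw [hDp, hD, d4]
    have hDmem : D ∈ c := by
      refine hc.maxl D ?_ ?_ ?_ hD5
      · have : B ∘ₗ D = - (B.compl₂ D) := by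
          refine v.ext fun a => v.ext fun b => ?_
          simp only [LinearMap.comp_apply, hD, map_smul, LinearMap.smul_apply, LinearMap.neg_apply,
            LinearMap.compl₂_apply, smul_eq_mul]
          by_cases hB : B (v a) (v b) = 0
          · simp [hB]
          · have : χ a = (-1 : k) • χ b := by
              ext x
              have h := hc.anti x x.2 (v a) (v b)
              rw [hv, hv] at h
              simp only [map_smul, LinearMap.smul_apply, smul_eq_mul] at h
              have h2 : (χ a x + χ b x) * B (v a) (v b) = 0 := by linear_combination h
              have h3 := (mul_eq_zero.1 h2).resolve_right hB
              simp only [LinearMap.smul_apply, smul_eq_mul]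
              linear_combination h3
            rw [this, d3 _ _ (hev.neg_one_pow)]
            ring
        intro u w
        have h := LinearMap.congr_fun (LinearMap.congr_fun this u) w
        simpa using h
      · have : g ∘ₗ D = ζ • (D ∘ₗ g) := by
          refine v.ext fun a => v.ext_elem fun b => ?_
          have e1 : v.coord b (g (D (v a))) = ζ * v.coord b (D (g (v a))) := by
            rw [hDc, hD, map_smul, map_smul, smul_eq_mul]
            by_cases hG : v.coord b (g (v a)) = 0
            · simp [hG]
            · have : χ a = ζ • χ b := by
                ext x
                have h := congrArg (v.coord b) (hc.gr x x.2 (v a))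
                rw [map_smul, hcoord, hv, map_smul, map_smul, smul_eq_mul, smul_eq_mul] at h
                have h2 : (χ a x - ζ * χ b x) * v.coord b (g (v a)) = 0 := by
                  linear_combination h
                have h3 := (mul_eq_zero.1 h2).resolve_right hG
                simp only [LinearMap.smul_apply, smul_eq_mul]
                linear_combination h3
              rw [this, d3 _ _ hζ]
              ring
          simpa using e1
        intro w
        exact LinearMap.congr_fun this w
      · intro x hx
        refine v.ext fun a => ?_
        have := hv a ⟨x, hx⟩
        simp only at this
        simp [hD, this, smul_smul, mul_comm]
    refine ⟨⟨D, hDmem⟩, d, ?_, d1, d2, hD5⟩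
    intro a
    have h1 := hv a ⟨D, hDmem⟩
    simp only [hD] at h1
    exact (smul_left_injective k (v.ne_zero a) h1).symm
  obtain ⟨κ, a, -, hspan, hli⟩ := exists_linearIndependent' k χ
  have hne : ∀ j, χ (a j) ≠ 0 := fun j => hli.ne_zero j
  choose x d hx hd1 hd2 hx5 using fun j => key (χ (a j)) (hne j)
  have hind : ∀ i j (t : k), i ≠ j → χ (a i) ≠ t • χ (a j) := by
    intro i j t hij h
    have h1 := linearIndependent_iff.1 hli (Finsupp.single i 1 - Finsupp.single j t)
      (by simp [h])
    have h2 := DFunLike.congr_fun h1 i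
    simp [hij] at h2
  have hdelta : ∀ i j, i ≠ j → χ (a i) (x j) = 0 := by
    intro i j hij
    rw [hx]
    by_contra h
    exact hind i j _ hij (hd2 j _ h)
  have hdelta1 : ∀ i, χ (a i) (x i) = 1 := fun i => by rw [hx, hd1]
  have hfin : Finite κ := hli.finite
  have := Fintype.ofFinite κ
  classical
  have hxli : LinearIndependent k x := by
    rw [Fintype.linearIndependent_iff]
    intro t ht i
    have := congrArg (χ (a i)) ht
    rw [map_sum, map_zero, Finset.sum_eq_single i] at this
    · simpa [hdelta1] using this
    · intro j _ hj
      simp [hdelta i j hj.symm]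
    · simp
  have hxspan : ⊤ ≤ Submodule.span k (Set.range x) := by
    intro y _
    have hy : y = ∑ j, χ (a j) y • x j := by
      rw [← sub_eq_zero]
      set z := y - ∑ j, χ (a j) y • x j with hz
      have hz0 : ∀ i, χ (a i) z = 0 := by
        intro i
        rw [hz, map_sub, map_sum, Finset.sum_eq_single i]
        · simp [hdelta1]
        · intro j _ hj
          simp [hdelta i j hj.symm]
        · simp
      have hz1 : ∀ i, χ i z = 0 := by
        intro i
        have hmem : χ i ∈ Submodule.span k (Set.range (χ ∘ a)) := by
          rw [hspan]; exact Submodule.subset_span ⟨i, rfl⟩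
        refine Submodule.span_induction (p := fun f _ => f z = 0) ?_ ?_ ?_ ?_ hmem
        · rintro _ ⟨j, rfl⟩; exact hz0 j
        · simp
        · intro f f' _ _ h h'; simp [h, h']
        · intro t f _ h; simp [h]
      apply Subtype.ext
      refine v.ext fun i => ?_
      rw [hv, hz1]; simp
    rw [hy]
    exact Submodule.sum_mem _ fun j _ => Submodule.smul_mem _ _ (Submodule.subset_span ⟨j, rfl⟩)
  have hcard : Fintype.card κ = r := by
    rw [← hr, Module.finrank_eq_card_basis (Basis.mk hxli hxspan)]
  let f : Fin r ≃ κ := (Fintype.equivFinOfCardEq hcard).symm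
  refine ⟨fun j => (x (f j) : End k V), fun j => v (a (f j)), ?_, ?_, ?_, ?_, ?_, ?_⟩
  · have h1 := (hxli.comp f f.injective).map' c.subtype (Submodule.ker_subtype c)
    exact h1
  · have h1 : Set.range (fun j => (x (f j) : End k V)) = c.subtype '' (Set.range x) := by
      rw [← Set.range_comp, ← f.surjective.range_comp]
      rfl
    rw [h1, Submodule.span_image, top_le_iff.1 hxspan, Submodule.map_top, Submodule.range_subtype]
  · exact fun j => v.ne_zero _
  · intro j
    simp only [hv, hdelta1, one_smul]
  · intro i j hij
    refine v.ext fun b => ?_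
    simp only [End.mul_apply, hv, map_smul, smul_smul, LinearMap.zero_apply]
    convert zero_smul k (v b)
    by_contra h
    have h' := mul_ne_zero_iff.1 h
    rw [hx, hx] at h'
    have h1 := hd2 _ _ h'.1
    have h2 := hd2 _ _ h'.2
    refine hind (f i) (f j) ((d (f i) (χ b))⁻¹ * d (f j) (χ b)) (by simpa using hij) ?_
    rw [mul_smul, eq_inv_smul_iff₀ h'.2]
    exact h2.symm.trans h1
  · exact fun j => hx5 _

section Transport

variable {k V : Type*} [Field k] [AddCommGroup V] [Module k V]

/-- `y` is skew for `B` and has degree one for `g`. -/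
structure Graded (B : V →ₗ[k] V →ₗ[k] k) (g : End k V) (ζ : k) (y : End k V) : Prop where
  anti : ∀ u v, B (y u) v = - B u (y v)
  gr : ∀ v, g (y v) = ζ • y (g v)

/-- A normalized pair of eigenvectors of `y`. -/
structure Good (B : V →ₗ[k] V →ₗ[k] k) (g : End k V) (m : ℕ) (κ : k) (y : End k V) (e f : V) :
    Prop where
  he : y e = e
  hf : y f = -f
  hef : B e f = 1
  alt : (κ = 1 ∧ (∀ i : ℕ, B e ((g ^ i) e) = 0) ∧ ∀ i : ℕ, B f ((g ^ i) f) = 0) ∨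
    (κ = 1 / 2 ∧ ∃ s : ℕ, m = 2 * s ∧ g ^ m = -1 ∧ f = (g ^ s) e)

/-- The transport operator between two normalized pairs. -/
noncomputable def transp (B : V →ₗ[k] V →ₗ[k] k) (g : End k V) (m : ℕ) (κ : k) (e f e' f' : V) :
    End k V :=
  κ • ∑ i ∈ Finset.range m, ((B.flip ((g ^ i) f)).smulRight ((g ^ i) e') -
    (B.flip ((g ^ i) e)).smulRight ((g ^ i) f'))

variable {B : V →ₗ[k] V →ₗ[k] k} {g : End k V} {ζ : k} {m : ℕ} {κ : k} {y y' : End k V}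
  {e f e' f' : V}

theorem transp_apply (v : V) : transp B g m κ e f e' f' v =
    κ • ∑ i ∈ Finset.range m, (B v ((g ^ i) f) • (g ^ i) e' - B v ((g ^ i) e) • (g ^ i) f') := by
  simp [transp]

theorem Graded.gr_pow (hy : Graded B g ζ y) (i : ℕ) (v : V) :
    (g ^ i) (y v) = ζ ^ i • y ((g ^ i) v) := by
  induction i with
  | zero => simp
  | succ i ih =>
    rw [pow_succ', End.mul_apply, ih, map_smul, hy.gr, smul_smul, End.mul_apply, pow_succ]

theorem Graded.y_pow (hy : Graded B g ζ y) (hζ : ζ ≠ 0) (i : ℕ) (v : V) :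
    y ((g ^ i) v) = (ζ ^ i)⁻¹ • (g ^ i) (y v) := by
  rw [hy.gr_pow, smul_smul, inv_mul_cancel₀ (pow_ne_zero _ hζ), one_smul]

theorem g_pow_isom (hg : ∀ u v, B (g u) (g v) = B u v) (i : ℕ) (u v : V) :
    B ((g ^ i) u) ((g ^ i) v) = B u v := by
  induction i with
  | zero => simp
  | succ i ih => rw [pow_succ', End.mul_apply, End.mul_apply, hg, ih]

theorem transp_g (hg : ∀ u v, B (g u) (g v) = B u v) (hgm : g ^ m = 1 ∨ g ^ m = -1) (v : V) :
    g (transp B g m κ e f e' f' v) = transp B g m κ e f e' f' (g v) := by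
  rw [transp_apply, transp_apply, map_smul, map_sum]
  congr 1
  have h1 : ∀ i, g (B v ((g ^ i) f) • (g ^ i) e' - B v ((g ^ i) e) • (g ^ i) f') =
      B (g v) ((g ^ (i + 1)) f) • (g ^ (i + 1)) e' - B (g v) ((g ^ (i + 1)) e) • (g ^ (i + 1)) f' := by
    intro i
    rw [map_sub, map_smul, map_smul, pow_succ', End.mul_apply, End.mul_apply, End.mul_apply,
      End.mul_apply, hg, hg]
  rw [Finset.sum_congr rfl fun i _ => h1 i]
  have h2 := Finset.sum_range_succ (fun i => B (g v) ((g ^ i) f) • (g ^ i) e' -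
    B (g v) ((g ^ i) e) • (g ^ i) f') m
  have h3 := Finset.sum_range_succ' (fun i => B (g v) ((g ^ i) f) • (g ^ i) e' -
    B (g v) ((g ^ i) e) • (g ^ i) f') m
  rw [h2] at h3
  have h4 : B (g v) ((g ^ m) f) • (g ^ m) e' - B (g v) ((g ^ m) e) • (g ^ m) f' =
      B (g v) ((g ^ 0) f) • (g ^ 0) e' - B (g v) ((g ^ 0) e) • (g ^ 0) f' := by
    rcases hgm with h | h <;> simp [h]
  rw [h4] at h3
  exact (add_right_cancel h3).symm

theorem transp_adj (hB : ∀ u v, B u v = - B v u) (u v : V) :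
    B (transp B g m κ e f e' f' u) v = B u (transp B g m κ e' f' e f v) := by
  simp only [transp_apply, map_smul, map_sum, LinearMap.smul_apply, LinearMap.sum_apply, map_sub,
    LinearMap.sub_apply, smul_eq_mul]
  congr 1
  refine Finset.sum_congr rfl fun i _ => ?_
  rw [hB ((g ^ i) e') v, hB ((g ^ i) f') v]
  ring

theorem transp_y (hζ : ζ ≠ 0) (hy : Graded B g ζ y) (hy' : Graded B g ζ y')
    (h : Good B g m κ y e f) (h' : Good B g m κ y' e' f') (v : V) :
    y' (transp B g m κ e f e' f' v) = transp B g m κ e f e' f' (y v) := by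
  rw [transp_apply, transp_apply, map_smul, map_sum]
  congr 1
  refine Finset.sum_congr rfl fun i _ => ?_
  rw [map_sub, map_smul, map_smul, hy.anti, hy.anti, hy'.y_pow hζ, hy'.y_pow hζ, hy.y_pow hζ,
    hy.y_pow hζ, h.he, h.hf, h'.he, h'.hf]
  simp only [map_neg, map_smul, smul_smul, smul_eq_mul, smul_neg, neg_neg, neg_smul]
  rw [mul_comm, mul_comm (B v ((g ^ i) e))]

theorem Good.gram (hζ : IsPrimitiveRoot ζ m) (hm : 0 < m) (hy : Graded B g ζ y)
    (h : Good B g m κ y e f) (i : ℕ) (h0 : i ≠ 0) (hi : i < m) : B e ((g ^ i) f) = 0 := by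
  have hζ0 : ζ ≠ 0 := hζ.ne_zero hm.ne'
  have h1 := hy.anti e ((g ^ i) f)
  rw [h.he, hy.y_pow hζ0, h.hf] at h1
  simp only [map_neg, map_smul, smul_neg, neg_neg, smul_eq_mul] at h1
  by_contra hne
  have h2 : (ζ ^ i)⁻¹ = 1 := by
    have : ((ζ ^ i)⁻¹ - 1) * B e ((g ^ i) f) = 0 := by linear_combination -h1
    exact sub_eq_zero.1 ((mul_eq_zero.1 this).resolve_right hne)
  rw [inv_eq_one] at h2
  exact hζ.pow_ne_one_of_pos_of_lt h0 hi h2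

theorem zeta_half (hζ : IsPrimitiveRoot ζ m) (hm : 0 < m) (s : ℕ) (hs : m = 2 * s) :
    ζ ^ s = -1 := by
  have h1 : ζ ^ s ≠ 1 := hζ.pow_ne_one_of_pos_of_lt (by omega) (by omega)
  have h2 : (ζ ^ s) ^ 2 = 1 := by rw [← pow_mul, mul_comm, ← hs, hζ.pow_eq_one]
  exact (mul_self_eq_one_iff.1 (by rw [← sq]; exact h2)).resolve_left h1

theorem transp_e (h2 : (2 : k) ≠ 0) (hζ : IsPrimitiveRoot ζ m) (hm : 0 < m)
    (hy : Graded B g ζ y)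
    (h : Good B g m κ y e f) (h' : Good B g m κ y' e' f') :
    transp B g m κ e f e' f' e = e' := by
  have hζ0 : ζ ≠ 0 := hζ.ne_zero hm.ne'
  rw [transp_apply, Finset.sum_sub_distrib]
  have h1 : ∑ i ∈ Finset.range m, B e ((g ^ i) f) • (g ^ i) e' = e' := by
    rw [Finset.sum_eq_single 0]
    · simp [h.hef]
    · intro i hi h0
      rw [h.gram hζ hm hy i h0 (Finset.mem_range.1 hi), zero_smul]
    · intro h; exact absurd (Finset.mem_range.2 hm) h
  rw [h1]
  rcases h.alt with ⟨hκ, ha, -⟩ | ⟨hκ, s, hs, hgm, hf⟩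
  · simp [ha, hκ]
  · rcases h'.alt with ⟨hκ', -, -⟩ | ⟨-, s', hs', -, hf'⟩
    · exfalso
      rw [hκ] at hκ'
      field_simp at hκ'
      apply one_ne_zero (α := k)
      linear_combination -hκ'
    · obtain rfl : s = s' := by omega
      rw [Finset.sum_eq_single s]
      · rw [← hf, h.hef, hf', ← End.mul_apply, ← pow_add, ← two_mul, ← hs, hgm, hκ]
        simp only [LinearMap.neg_apply, End.one_apply, one_smul, sub_neg_eq_add]
        rw [← two_smul k e', smul_smul, one_div, inv_mul_cancel₀ h2, one_smul]
      · intro i hi his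
        have h3 := hy.anti e ((g ^ i) e)
        rw [h.he, hy.y_pow hζ0, h.he] at h3
        simp only [map_smul, smul_eq_mul] at h3
        by_contra hne
        have hne : B e ((g ^ i) e) ≠ 0 := fun h => hne (by rw [h, zero_smul])
        have h4 : (ζ ^ i)⁻¹ = -1 := by
          have : ((ζ ^ i)⁻¹ + 1) * B e ((g ^ i) e) = 0 := by linear_combination h3
          exact eq_neg_of_add_eq_zero_left ((mul_eq_zero.1 this).resolve_right hne)
        have h5 : ζ ^ i = ζ ^ s := by
          rw [zeta_half hζ hm s hs, ← _root_.inv_inj, h4, inv_neg, inv_one]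
        exact his (hζ.pow_inj (Finset.mem_range.1 hi) (by omega) h5)
      · intro h
        exact absurd (Finset.mem_range.2 (by omega)) h

theorem Good.swap (hB : ∀ u v, B u v = - B v u) (h : Good B g m κ y e f) :
    Good B g m κ (-y) f (-e) where
  he := by simp [h.hf]
  hf := by simp [h.he]
  hef := by rw [map_neg, ← hB, h.hef]
  alt := by
    rcases h.alt with ⟨hκ, ha, hb⟩ | ⟨hκ, s, hs, hgm, hf⟩
    · left; exact ⟨hκ, hb, fun i => by simp [ha]⟩
    · right
      refine ⟨hκ, s, hs, hgm, ?_⟩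
      rw [hf, ← End.mul_apply, ← pow_add, ← two_mul, ← hs, hgm]; simp

theorem Good.shift (hg : ∀ u v, B (g u) (g v) = B u v) (hy : Graded B g ζ y)
    (h : Good B g m κ y e f) (a : ℕ) :
    Good B g m κ (ζ ^ a • y) ((g ^ a) e) ((g ^ a) f) where
  he := by rw [LinearMap.smul_apply, ← hy.gr_pow, h.he]
  hf := by rw [LinearMap.smul_apply, ← hy.gr_pow, h.hf, map_neg]
  hef := by rw [g_pow_isom hg, h.hef]
  alt := by
    have hc : ∀ (i : ℕ) v, (g ^ i) ((g ^ a) v) = (g ^ a) ((g ^ i) v) := fun i v => by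
      rw [← End.mul_apply, ← End.mul_apply, ← pow_add, ← pow_add, add_comm]
    rcases h.alt with ⟨hκ, ha, hb⟩ | ⟨hκ, s, hs, hgm, hf⟩
    · left
      exact ⟨hκ, fun i => by rw [hc, g_pow_isom hg, ha], fun i => by rw [hc, g_pow_isom hg, hb]⟩
    · right
      exact ⟨hκ, s, hs, hgm, by rw [hc, hf]⟩

theorem Graded.smul (hy : Graded B g ζ y) (t : k) : Graded B g ζ (t • y) where
  anti u v := by simp [hy.anti]
  gr v := by simp [hy.gr, smul_smul, mul_comm]

theorem transp_swap : transp B g m κ e f e' f' = transp B g m κ f (-e) f' (-e') := by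
  ext v
  rw [transp_apply, transp_apply]
  congr 1
  refine Finset.sum_congr rfl fun i _ => ?_
  simp only [map_neg, smul_neg, neg_smul, neg_neg]
  abel

theorem transp_f (hB : ∀ u v, B u v = - B v u) (h2 : (2 : k) ≠ 0) (hζ : IsPrimitiveRoot ζ m)
    (hm : 0 < m) (hy : Graded B g ζ y)
    (h : Good B g m κ y e f) (h' : Good B g m κ y' e' f') :
    transp B g m κ e f e' f' f = f' := by
  rw [transp_swap]
  exact transp_e h2 hζ hm (by simpa using hy.smul (-1)) (h.swap hB) (h'.swap hB)

/-- Composition of transports. -/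
theorem transp_comp (hB : ∀ u v, B u v = - B v u) (h2 : (2 : k) ≠ 0) (hζ : IsPrimitiveRoot ζ m)
    (hm : 0 < m) (hg : ∀ u v, B (g u) (g v) = B u v) (hgm : g ^ m = 1 ∨ g ^ m = -1)
    {e'' f'' : V} {y'' : End k V}
    (hy' : Graded B g ζ y')
    (h' : Good B g m κ y' e' f') (h'' : Good B g m κ y'' e'' f'') :
    transp B g m κ e' f' e'' f'' * transp B g m κ e f e' f' = transp B g m κ e f e'' f'' := by
  ext v
  have hgp : ∀ (i : ℕ) w, transp B g m κ e' f' e'' f'' ((g ^ i) w) =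
      (g ^ i) (transp B g m κ e' f' e'' f'' w) := by
    intro i w
    induction i with
    | zero => simp
    | succ i ih => rw [pow_succ', End.mul_apply, ← transp_g hg hgm, ih, End.mul_apply]
  rw [End.mul_apply, transp_apply (e := e) (f := f), transp_apply (e := e) (f := f), map_smul,
    map_sum]
  congr 1
  refine Finset.sum_congr rfl fun i _ => ?_
  rw [map_sub, map_smul, map_smul, hgp, hgp, transp_e h2 hζ hm hy' h' h'',
    transp_f hB h2 hζ hm hy' h' h'']

end Transport

section Construct

variable {k V : Type*} [Field k] [AddCommGroup V] [Module k V]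
variable {B : V →ₗ[k] V →ₗ[k] k} {g : End k V} {ζ : k} {m : ℕ} {κ : k} {y y' : End k V}
  {e f e' f' : V}

theorem exists_dual (hnd : ∀ u, (∀ v, B u v = 0) → u = 0) (M : ℕ) (hM : (M : k) ≠ 0)
    (hev : Even M) (hy : Graded B g ζ y) (hyM : y ^ (M + 1) = y) (he0 : e ≠ 0) (he : y e = e) :
    ∃ f, y f = -f ∧ B e f = 1 := by
  obtain ⟨w, hw⟩ : ∃ w, B e w ≠ 0 := by
    by_contra! h
    exact he0 (hnd e h)
  have hpow : ∀ l : ℕ, B e ((y ^ l) w) = (-1) ^ l * B e w := by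
    intro l
    induction l with
    | zero => simp
    | succ l ih =>
      have h1 := hy.anti e ((y ^ l) w)
      rw [he] at h1
      rw [pow_succ', End.mul_apply, ← neg_eq_iff_eq_neg.2 h1, ih, pow_succ]
      ring
  let F : ℕ → V := fun l => (-1 : k) ^ (l + 1) • (y ^ (l + 1)) w
  let f0 : V := ∑ l ∈ Finset.range M, F l
  have h1 : B e f0 = M * B e w := by
    simp only [f0, F, map_sum, map_smul, hpow, smul_eq_mul]
    rw [Finset.sum_congr rfl (g := fun _ => B e w)]
    · simp
    · intro l _
      rw [← mul_assoc, ← mul_pow]; simp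
  have hF : F M = F 0 := by
    simp only [F, hyM, pow_succ, hev.neg_one_pow]
    rw [← pow_succ, hyM]; simp
  have h2 : y f0 = -f0 := by
    have hs : ∀ l, y (F l) = - F (l + 1) := by
      intro l
      simp only [F, map_smul]
      rw [← End.mul_apply, ← pow_succ', pow_succ (-1 : k) (l + 1)]
      simp
    simp only [f0, map_sum, hs, Finset.sum_neg_distrib]
    have h3 := Finset.sum_range_succ F M
    rw [Finset.sum_range_succ' F M, hF] at h3
    rw [add_right_cancel h3]
  refine ⟨(M * B e w)⁻¹ • f0, by rw [map_smul, h2, smul_neg], ?_⟩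
  rw [map_smul, h1, smul_eq_mul, inv_mul_cancel₀ (mul_ne_zero hM hw)]

theorem alt_zero (h2 : (2 : k) ≠ 0) (hB : ∀ u v, B u v = - B v u) (hζ : ζ ≠ 0)
    (hg : ∀ u v, B (g u) (g v) = B u v) (hy : Graded B g ζ y)
    (hcase : ∀ i : ℕ, ζ ^ i = -1 → g ^ (2 * i) = 1) (he : y e = e) (i : ℕ) :
    B e ((g ^ i) e) = 0 := by
  have h3 := hy.anti e ((g ^ i) e)
  rw [he, hy.y_pow hζ, he] at h3
  simp only [map_smul, smul_eq_mul] at h3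
  by_contra hne
  have h4 : (ζ ^ i)⁻¹ = -1 := by
    have : ((ζ ^ i)⁻¹ + 1) * B e ((g ^ i) e) = 0 := by linear_combination h3
    exact eq_neg_of_add_eq_zero_left ((mul_eq_zero.1 this).resolve_right hne)
  have h5 : ζ ^ i = -1 := by rw [← _root_.inv_inj, h4, inv_neg, inv_one]
  have h6 := g_pow_isom hg i e ((g ^ i) e)
  rw [← End.mul_apply, ← pow_add, ← two_mul, hcase i h5, End.one_apply, hB] at h6
  have h7 : 2 * B e ((g ^ i) e) = 0 := by linear_combination -h6
  exact hne ((mul_eq_zero.1 h7).resolve_left h2)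

theorem exists_good [IsAlgClosed k] (hnd : ∀ u, (∀ v, B u v = 0) → u = 0) (M : ℕ)
    (hM : (M : k) ≠ 0)
    (hev : Even M) (h2 : (2 : k) ≠ 0) (hB : ∀ u v, B u v = - B v u) (hζ : IsPrimitiveRoot ζ m)
    (hm : 0 < m)
    (hg : ∀ u v, B (g u) (g v) = B u v)
    (hcase : (κ = 1 ∧ ∀ i : ℕ, ζ ^ i = -1 → g ^ (2 * i) = 1) ∨
      (κ = 1 / 2 ∧ ∃ s, m = 2 * s ∧ g ^ m = -1))
    (hy : Graded B g ζ y) (hyM : y ^ (M + 1) = y) (he0 : e ≠ 0) (he : y e = e) :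
    ∃ e' f', Good B g m κ y e' f' := by
  have hζ0 : ζ ≠ 0 := hζ.ne_zero hm.ne'
  obtain ⟨f, hf, hef⟩ := exists_dual hnd M hM hev hy hyM he0 he
  rcases hcase with ⟨hκ, hc⟩ | ⟨hκ, s, hs, hgm⟩
  · refine ⟨e, f, he, hf, hef, Or.inl ⟨hκ, alt_zero h2 hB hζ0 hg hy hc he, ?_⟩⟩
    have hy' : Graded B g ζ (-y) := by simpa using hy.smul (-1)
    exact alt_zero h2 hB hζ0 hg hy' hc (by simp [hf])
  · have hz := zeta_half hζ hm s hs
    have hgs : g ^ s * g ^ s = -1 := by rw [← pow_add, ← two_mul, ← hs, hgm]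
    have hgs' : ∀ v, (g ^ s) ((g ^ s) v) = -v := fun v => by
      rw [← End.mul_apply, hgs]; simp
    have hsym : ∀ u v, B u ((g ^ s) v) = B v ((g ^ s) u) := by
      intro u v
      rw [← g_pow_isom hg s u, hgs', map_neg, hB]
      simp
    have hys : ∀ v, y ((g ^ s) v) = - (g ^ s) (y v) := by
      intro v
      rw [hy.y_pow hζ0, hz]; simp
    -- a non-isotropic vector
    obtain ⟨u, hu, hne⟩ : ∃ u, y u = u ∧ B u ((g ^ s) u) ≠ 0 := by
      let f1 := -(g ^ s) f
      have hf1 : y f1 = f1 := by simp [f1, hys, hf]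
      have hf1' : (g ^ s) f1 = f := by simp [f1, hgs']
      have hef1 : B e ((g ^ s) f1) = 1 := by rw [hf1', hef]
      by_contra! h
      have a1 := h e he
      have a2 := h f1 hf1
      have a3 := h (e + f1) (by rw [map_add, he, hf1])
      simp only [map_add, LinearMap.add_apply] at a3
      rw [a1, a2, hsym f1 e, hef1] at a3
      apply h2
      linear_combination a3
    obtain ⟨t, ht⟩ := IsAlgClosed.exists_pow_nat_eq (B u ((g ^ s) u))⁻¹ (n := 2) (by norm_num)
    refine ⟨t • u, (g ^ s) (t • u), ?_, ?_, ?_, Or.inr ⟨hκ, s, hs, hgm, rfl⟩⟩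
    · rw [map_smul, hu]
    · rw [hys, map_smul, hu]
    · simp only [map_smul, LinearMap.smul_apply, smul_eq_mul]
      rw [← mul_assoc, ← sq, ht, inv_mul_cancel₀ hne]

theorem transp_left_zero (hζ : ζ ≠ 0) (hy : Graded B g ζ y) (h1 : y e' = 0) (h2 : y f' = 0) :
    y * transp B g m κ e f e' f' = 0 := by
  ext v
  rw [End.mul_apply, transp_apply, map_smul, map_sum, Finset.sum_eq_zero]
  · simp
  · intro i _
    rw [map_sub, map_smul, map_smul, hy.y_pow hζ, hy.y_pow hζ, h1, h2]; simp

theorem transp_right_zero (hζ : ζ ≠ 0) (hy : Graded B g ζ y) (h1 : y e = 0) (h2 : y f = 0) :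
    transp B g m κ e f e' f' * y = 0 := by
  ext v
  rw [End.mul_apply, transp_apply, Finset.sum_eq_zero]
  · simp
  · intro i _
    rw [hy.anti, hy.anti, hy.y_pow hζ, hy.y_pow hζ, h1, h2]; simp

theorem comp_transp {A C : End k V} (hA : ∀ v, A (g v) = g (A v)) (hC : ∀ v, C (g v) = g (C v))
    (h1 : A e' = C e') (h2 : A f' = C f') :
    A * transp B g m κ e f e' f' = C * transp B g m κ e f e' f' := by
  have hp : ∀ (D : End k V), (∀ v, D (g v) = g (D v)) →
      ∀ (i : ℕ) v, D ((g ^ i) v) = (g ^ i) (D v) := by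
    intro D hD i v
    induction i with
    | zero => simp
    | succ i ih => rw [pow_succ', End.mul_apply, hD, ih, End.mul_apply]
  ext v
  rw [End.mul_apply, End.mul_apply, transp_apply, map_smul, map_smul, map_sum, map_sum]
  congr 1
  refine Finset.sum_congr rfl fun i _ => ?_
  rw [map_sub, map_smul, map_smul, hp A hA, hp A hA, h1, h2, map_sub, map_smul, map_smul,
    hp C hC, hp C hC]

/-- The frame identity, from maximality of the Cartan subspace. -/
theorem frame {r : ℕ} (M : ℕ) (c : Submodule k (End k V)) (hc : CartanData B g ζ M c)
    (hB : ∀ u v, B u v = - B v u) (h2 : (2 : k) ≠ 0) (hζ : IsPrimitiveRoot ζ m)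
    (hm : 0 < m) (hg : ∀ u v, B (g u) (g v) = B u v) (hgm : g ^ m = 1 ∨ g ^ m = -1)
    (b : Fin r → End k V) (hspan : Submodule.span k (Set.range b) = c)
    (hbb : ∀ i j, i ≠ j → b i * b j = 0) (hbM : ∀ j, b j ^ (M + 1) = b j)
    (e f : Fin r → V) (hgood : ∀ j, Good B g m κ (b j) (e j) (f j)) (j : Fin r) :
    transp B g m κ (e j) (f j) (e j) (f j) * b j = b j := by
  have hζ0 : ζ ≠ 0 := hζ.ne_zero hm.ne'
  have hmem : ∀ j, b j ∈ c := fun j => by rw [← hspan]; exact Submodule.subset_span ⟨j, rfl⟩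
  have hgr : ∀ j, Graded B g ζ (b j) := fun j => ⟨hc.anti _ (hmem j), hc.gr _ (hmem j)⟩
  have hbe : ∀ i j, i ≠ j → b i (e j) = 0 := fun i j hij => by
    rw [← (hgood j).he, ← End.mul_apply, hbb i j hij]; rfl
  have hbf : ∀ i j, i ≠ j → b i (f j) = 0 := fun i j hij => by
    rw [← neg_eq_zero, ← map_neg, ← (hgood j).hf, ← End.mul_apply, hbb i j hij]; rfl
  set P := transp B g m κ (e j) (f j) (e j) (f j) with hP
  have hPg : ∀ v, g (P v) = P (g v) := transp_g hg hgm
  have hPadj : ∀ u v, B (P u) v = B u (P v) := transp_adj hB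
  have hPe : P (e j) = e j := transp_e h2 hζ hm (hgr j) (hgood j) (hgood j)
  have hPP : P * P = P := transp_comp hB h2 hζ hm hg hgm (hgr j) (hgood j) (hgood j)
  have hbP : b j * P = P * b j := by
    ext v; exact transp_y hζ0 (hgr j) (hgr j) (hgood j) (hgood j) v
  have hbP' : ∀ i, i ≠ j → b i * P = 0 := fun i hij =>
    transp_left_zero hζ0 (hgr i) (hbe i j hij) (hbf i j hij)
  have hcm : P * b j ∈ c := by
    refine hc.maxl _ ?_ ?_ ?_ ?_
    · intro u v
      rw [End.mul_apply, hPadj, (hgr j).anti, ← hbP]; rfl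
    · intro v
      rw [End.mul_apply, hPg, (hgr j).gr, map_smul]; rfl
    · intro x hx
      rw [← hspan] at hx
      refine Submodule.span_induction (p := fun x _ => x * (P * b j) = (P * b j) * x) ?_ ?_ ?_ ?_ hx
      · rintro _ ⟨i, rfl⟩
        by_cases hij : i = j
        · subst hij; rw [← mul_assoc, hbP]
        · rw [← mul_assoc, hbP' i hij, mul_assoc, hbb j i (Ne.symm hij), zero_mul, mul_zero]
      · simp
      · intro a a' _ _ h h'; rw [add_mul, h, h', mul_add]
      · intro t a _ h; rw [smul_mul_assoc, h, mul_smul_comm]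
    · have hcm : Commute P (b j) := hbP.symm
      rw [hcm.mul_pow, hbM, (show IsIdempotentElem P from hPP).pow_succ_eq]
  rw [← hspan, Submodule.mem_span_range_iff_exists_fun] at hcm
  obtain ⟨t, ht⟩ := hcm
  have hei : ∀ i, (P * b j) (e i) = t i • e i := by
    intro i
    rw [← ht, LinearMap.sum_apply, Finset.sum_eq_single i]
    · rw [LinearMap.smul_apply, (hgood i).he]
    · intro l _ hl; rw [LinearMap.smul_apply, hbe l i hl, smul_zero]
    · simp
  have he0 : ∀ i, e i ≠ 0 := by
    intro i h
    have := (hgood i).hef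
    simp [h] at this
  rw [← ht, Finset.sum_eq_single j]
  · have := hei j
    rw [End.mul_apply, (hgood j).he, hPe] at this
    have h1 : t j = 1 := by
      have h3 : (1 : k) • e j = t j • e j := by rw [one_smul, ← this]
      exact (smul_left_injective k (he0 j) h3).symm
    rw [h1, one_smul]
  · intro i _ hij
    have := hei i
    rw [End.mul_apply, hbe j i (Ne.symm hij), map_zero] at this
    rw [(smul_eq_zero.1 this.symm).resolve_right (he0 i), zero_smul]
  · simp

theorem exists_h {r : ℕ} (M : ℕ) (c : Submodule k (End k V)) (hc : CartanData B g ζ M c)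
    (hB : ∀ u v, B u v = - B v u) (h2 : (2 : k) ≠ 0) (hζ : IsPrimitiveRoot ζ m)
    (hm : 0 < m) (hg : ∀ u v, B (g u) (g v) = B u v) (hgm : g ^ m = 1 ∨ g ^ m = -1)
    (b : Fin r → End k V) (hspan : Submodule.span k (Set.range b) = c)
    (hbb : ∀ i j, i ≠ j → b i * b j = 0) (hbM : ∀ j, b j ^ (M + 1) = b j)
    (e f : Fin r → V) (hgood : ∀ j, Good B g m κ (b j) (e j) (f j))
    (hroot : ∀ ω : k, ω ^ M = 1 → ∃ a : ℕ, ω = ζ ^ a ∨ ω = - ζ ^ a) (hM : M ≠ 0)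
    (σ : Equiv.Perm (Fin r)) (ω : Fin r → k) (hω : ∀ j, ω j ^ M = 1) :
    ∃ h : End k V, (∀ u v, B (h u) (h v) = B u v) ∧ h * g = g * h ∧
      ∀ j, h * b j = ω j • (b (σ j) * h) := by
  have hζ0 : ζ ≠ 0 := hζ.ne_zero hm.ne'
  have hmem : ∀ j, b j ∈ c := fun j => by rw [← hspan]; exact Submodule.subset_span ⟨j, rfl⟩
  have hgr : ∀ j, Graded B g ζ (b j) := fun j => ⟨hc.anti _ (hmem j), hc.gr _ (hmem j)⟩
  have hbe : ∀ i j, i ≠ j → b i (e j) = 0 := fun i j hij => by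
    rw [← (hgood j).he, ← End.mul_apply, hbb i j hij]; rfl
  have hbf : ∀ i j, i ≠ j → b i (f j) = 0 := fun i j hij => by
    rw [← neg_eq_zero, ← map_neg, ← (hgood j).hf, ← End.mul_apply, hbb i j hij]; rfl
  have hω0 : ∀ j, ω j ≠ 0 := fun j h => by
    have := hω j
    rw [h, zero_pow hM] at this
    exact zero_ne_one this
  have htr : ∀ j, ∃ e' f', Good B g m κ (ω j • b (σ j)) e' f' := by
    intro j
    obtain ⟨a, ha | ha⟩ := hroot (ω j) (hω j)
    · exact ⟨_, _, by rw [ha]; exact (hgood (σ j)).shift hg (hgr _) a⟩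
    · exact ⟨(g ^ a) (f (σ j)), -(g ^ a) (e (σ j)), by
        rw [ha, neg_smul]; exact ((hgood (σ j)).shift hg (hgr _) a).swap hB⟩
  choose e' f' hgood' using htr
  have hgr' : ∀ j, Graded B g ζ (ω j • b (σ j)) := fun j => (hgr _).smul _
  have hbe' : ∀ i j, i ≠ σ j → b i (e' j) = 0 := fun i j hij => by
    rw [← (hgood' j).he, ← End.mul_apply, mul_smul_comm, hbb i _ hij, smul_zero]; rfl
  have hbf' : ∀ i j, i ≠ σ j → b i (f' j) = 0 := fun i j hij => by
    rw [← neg_eq_zero, ← map_neg, ← (hgood' j).hf, ← End.mul_apply, mul_smul_comm, hbb i _ hij,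
      smul_zero]; rfl
  let P : Fin r → End k V := fun j => transp B g m κ (e j) (f j) (e j) (f j)
  let T : Fin r → End k V := fun j => transp B g m κ (e j) (f j) (e' j) (f' j)
  let S : Fin r → End k V := fun j => transp B g m κ (e' j) (f' j) (e j) (f j)
  have hPb : ∀ j, P j * b j = b j :=
    frame M c hc hB h2 hζ hm hg hgm b hspan hbb hbM e f hgood
  have hPb0 : ∀ i j, j ≠ i → P i * b j = 0 := fun i j hij =>
    transp_right_zero hζ0 (hgr j) (hbe j i hij) (hbf j i hij)
  have hbP : ∀ j, b j * P j = b j := by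
    intro j
    rw [← hPb j]
    ext v
    rw [hPb j]
    have := transp_y hζ0 (hgr j) (hgr j) (hgood j) (hgood j) v
    rw [End.mul_apply, this]
    exact LinearMap.congr_fun (hPb j) v
  have hbP0 : ∀ i j, j ≠ i → b j * P i = 0 := fun i j hij =>
    transp_left_zero hζ0 (hgr j) (hbe j i hij) (hbf j i hij)
  have hTb0 : ∀ i j, j ≠ i → T i * b j = 0 := fun i j hij =>
    transp_right_zero hζ0 (hgr j) (hbe j i hij) (hbf j i hij)
  have hbT0 : ∀ i j, j ≠ σ i → b j * T i = 0 := fun i j hij =>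
    transp_left_zero hζ0 (hgr j) (hbe' j i hij) (hbf' j i hij)
  have hbT : ∀ j, ω j • (b (σ j) * T j) = T j * b j := by
    intro j
    ext v
    exact transp_y hζ0 (hgr j) (hgr' j) (hgood j) (hgood' j) v
  have hPsum : ∀ j, (∑ i, P i) * b j = b j := by
    intro j
    rw [Finset.sum_mul, Finset.sum_eq_single j]
    · exact hPb j
    · intro i _ hij; exact hPb0 i j (Ne.symm hij)
    · simp
  have hPsum' : ∀ j, b j * (∑ i, P i) = b j := by
    intro j
    rw [Finset.mul_sum, Finset.sum_eq_single j]
    · exact hbP j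
    · intro i _ hij; exact hbP0 i j (Ne.symm hij)
    · simp
  have hPg : ∀ v, (∑ i, P i) (g v) = g ((∑ i, P i) v) := by
    intro v
    rw [LinearMap.sum_apply, LinearMap.sum_apply, map_sum]
    exact Finset.sum_congr rfl fun i _ => (transp_g hg hgm v).symm
  have hTg : ∀ v, (∑ i, T i) (g v) = g ((∑ i, T i) v) := by
    intro v
    rw [LinearMap.sum_apply, LinearMap.sum_apply, map_sum]
    exact Finset.sum_congr rfl fun i _ => (transp_g hg hgm v).symm
  -- the sum of the `P i` fixes everything in the blocks
  have hPfix : ∀ j v, (∑ i, P i) (b j v) = b j v := fun j v => LinearMap.congr_fun (hPsum j) v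
  have hPP : ∀ j, (∑ i, P i) * P j = P j := by
    intro j
    have := comp_transp (B := B) (m := m) (κ := κ) (e := e j) (f := f j) (e' := e j) (f' := f j)
      (A := ∑ i, P i) (C := 1) hPg (by simp)
      (by rw [← (hgood j).he]; exact hPfix _ _)
      (by rw [← neg_inj, ← map_neg, ← map_neg, ← (hgood j).hf]; exact hPfix _ _)
    rw [one_mul] at this
    exact this
  have hPT : ∀ j, (∑ i, P i) * T j = T j := by
    intro j
    have := comp_transp (B := B) (m := m) (κ := κ) (e := e j) (f := f j) (e' := e' j) (f' := f' j)
      (A := ∑ i, P i) (C := 1) hPg (by simp)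
      (by rw [← (hgood' j).he, LinearMap.smul_apply, map_smul, hPfix]; rfl)
      (by rw [← neg_inj, ← map_neg, ← map_neg, ← (hgood' j).hf, LinearMap.smul_apply, map_smul,
            hPfix]; rfl)
    rw [one_mul] at this
    exact this
  have hST : ∀ j, S j * T j = P j := fun j =>
    transp_comp hB h2 hζ hm hg hgm (hgr' j) (hgood' j) (hgood j)
  have hST0 : ∀ i j, i ≠ j → S i * T j = 0 := by
    intro i j hij
    have hσ : σ j ≠ σ i := fun h => hij (σ.injective h).symm
    have hSb : S i * b (σ j) = 0 :=
      transp_right_zero hζ0 (hgr (σ j)) (hbe' _ i hσ) (hbf' _ i hσ)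
    have hSb' : ∀ v, S i (b (σ j) v) = 0 := fun v => LinearMap.congr_fun hSb v
    have := comp_transp (B := B) (m := m) (κ := κ) (e := e j) (f := f j) (e' := e' j) (f' := f' j)
      (A := S i) (C := 0) (fun v => (transp_g hg hgm v).symm) (by simp)
      (by rw [← (hgood' j).he, LinearMap.smul_apply, map_smul, hSb']; simp)
      (by rw [← neg_inj, ← map_neg, ← map_neg, ← (hgood' j).hf, LinearMap.smul_apply, map_smul,
            hSb']; simp)
    rw [zero_mul] at this
    exact this
  have hPadj : ∀ u v, B ((∑ i, P i) u) v = B u ((∑ i, P i) v) := by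
    intro u v
    simp only [LinearMap.sum_apply, map_sum]
    exact Finset.sum_congr rfl fun i _ => transp_adj hB u v
  let P0 : End k V := 1 - ∑ i, P i
  have hP0adj : ∀ u v, B (P0 u) v = B u (P0 v) := by
    intro u v
    simp only [P0, LinearMap.sub_apply, End.one_apply, map_sub, hPadj]
  have hP0P : P0 * P0 = P0 := by
    simp only [P0, sub_mul, mul_sub, one_mul, mul_one]
    rw [Finset.mul_sum, Finset.sum_congr rfl fun i _ => hPP i]
    simp
  have hP0T : P0 * (∑ i, T i) = 0 := by
    simp only [P0, sub_mul, one_mul]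
    rw [Finset.mul_sum, Finset.sum_congr rfl fun i _ => hPT i, sub_self]
  have hTT : ∀ u v, B ((∑ i, T i) u) ((∑ i, T i) v) = B u ((∑ i, P i) v) := by
    intro u v
    simp only [LinearMap.sum_apply, map_sum]
    refine Finset.sum_congr rfl fun j _ => ?_
    rw [Finset.sum_eq_single j]
    · rw [← hST j]; exact transp_adj hB _ _
    · intro i _ hij
      have h1 : B (T i u) (T j v) = B u (S i (T j v)) := transp_adj hB _ _
      have h3 : S i (T j v) = 0 := LinearMap.congr_fun (hST0 i j hij) v
      rw [h1, h3, map_zero]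
    · simp
  refine ⟨P0 + ∑ i, T i, ?_, ?_, ?_⟩
  · intro u v
    have h1 : ∀ u v, B (P0 u) ((∑ i, T i) v) = 0 := by
      intro u v
      have : P0 ((∑ i, T i) v) = 0 := LinearMap.congr_fun hP0T v
      rw [hP0adj, this, map_zero]
    have h3 : B (P0 u) (P0 v) = B u (P0 v) := by
      have : P0 (P0 v) = P0 v := LinearMap.congr_fun hP0P v
      rw [hP0adj, this]
    rw [LinearMap.add_apply, LinearMap.add_apply, map_add, map_add, LinearMap.add_apply,
      LinearMap.add_apply, h1, hTT, hB ((∑ i, T i) u) (P0 v), h1, h3]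
    simp only [P0, LinearMap.sub_apply, End.one_apply, map_sub]
    ring
  · ext v
    simp only [End.mul_apply, LinearMap.add_apply, map_add, hTg, P0, LinearMap.sub_apply, hPg,
      map_sub, End.one_apply]
  · intro j
    have h1 : P0 * b j = 0 := by simp only [P0, sub_mul, one_mul, hPsum, sub_self]
    have h3 : b (σ j) * P0 = 0 := by simp only [P0, mul_sub, mul_one, hPsum', sub_self]
    have h4 : (∑ i, T i) * b j = T j * b j := by
      rw [Finset.sum_mul, Finset.sum_eq_single j]
      · intro i _ hij; exact hTb0 i j (Ne.symm hij)
      · simp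
    have h5 : b (σ j) * (∑ i, T i) = b (σ j) * T j := by
      rw [Finset.mul_sum, Finset.sum_eq_single j]
      · intro i _ hij; exact hbT0 i (σ j) (fun h => hij (σ.injective h).symm)
      · simp
    rw [add_mul, mul_add, h1, h3, zero_add, zero_add, h4, h5, hbT]

end Construct

section Final

theorem forward_mem {k A : Type*} [Field k] [Ring A] [Algebra k A] {r M : ℕ} (hM : M ≠ 0)
    (hev : Even M)
    (b : Fin r → A) (hb0 : ∀ j, b j ≠ 0) (hbb : ∀ i j, i ≠ j → b i * b j = 0)
    (hbM : ∀ j, b j ^ (M + 1) = b j) (w : Matrix (Fin r) (Fin r) k)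
    (y : Fin r → A) (hy : ∀ j, y j = ∑ i, w i j • b i) (hy0 : ∀ j, y j ≠ 0)
    (hyy : ∀ i j, i ≠ j → y i * y j = 0) (hyM : ∀ j, y j ^ (M + 1) = y j) :
    w ∈ GmqrSet k M 1 r := by
  obtain ⟨N, hN⟩ := hev
  have hM2 : 2 ≤ M := by omega
  have hpow : ∀ j p, p ≤ M + 1 → b j ^ p ≠ 0 := by
    intro j p hp h
    apply hb0 j
    rw [← hbM j]
    exact pow_eq_zero_of_le hp h
  have h1 : ∀ i j, b i * y j = w i j • b i ^ 2 := by
    intro i j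
    rw [hy, Finset.mul_sum, Finset.sum_eq_single i]
    · rw [mul_smul_comm, sq]
    · intro l _ hl
      rw [mul_smul_comm, hbb i l (Ne.symm hl), smul_zero]
    · simp
  have h1' : ∀ i j p, b i ^ (p + 1) * y j = w i j • b i ^ (p + 2) := by
    intro i j p
    rw [pow_succ, mul_assoc, h1, mul_smul_comm, ← pow_add]
  have h2 : ∀ i j p, b i * y j ^ p = w i j ^ p • b i ^ (p + 1) := by
    intro i j p
    induction p with
    | zero => simp
    | succ p ih =>
      rw [pow_succ, ← mul_assoc, ih, smul_mul_assoc, h1', smul_smul, pow_succ (w i j)]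
  have hent : ∀ i j, w i j ^ (M + 1) = w i j := by
    intro i j
    have h := h2 i j (M + 1)
    rw [hyM, h1, pow_succ (b i) (M + 1), hbM, ← sq] at h
    exact (smul_left_injective k (hpow i 2 (by omega)) h).symm
  have hrow : ∀ i j j', j ≠ j' → w i j * w i j' = 0 := by
    intro i j j' hj
    have h : b i * (y j * y j') = (w i j * w i j') • b i ^ 3 := by
      rw [← mul_assoc, h1, smul_mul_assoc, h1' i j' 1, smul_smul]
    rw [hyy j j' hj, mul_zero] at h
    exact (smul_eq_zero.mp h.symm).resolve_right (hpow i 3 (by omega))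
  have hcol : ∀ j, ∃ i, w i j ≠ 0 := by
    intro j
    by_contra hcon
    push Not at hcon
    apply hy0 j
    rw [hy]
    exact Finset.sum_eq_zero fun i _ => by rw [hcon i, zero_smul]
  choose s hs using hcol
  have hinj : Function.Injective s := by
    intro j j' hjj
    by_contra hne
    have := hrow (s j) j j' hne
    exact mul_ne_zero (hs j) (by rw [hjj]; exact hs j') this
  let σ : Equiv.Perm (Fin r) := Equiv.ofBijective s (Finite.injective_iff_bijective.mp hinj)
  have hone : ∀ j, w (σ j) j ^ M = 1 := by
    intro j
    have h := hent (σ j) j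
    rw [pow_succ] at h
    exact mul_right_cancel₀ (hs j) (h.trans (one_mul _).symm)
  refine ⟨σ, ?_, hone, ?_⟩
  · intro i j hij
    obtain ⟨j', rfl⟩ := σ.surjective i
    have hne : j' ≠ j := fun h => hij (by rw [h])
    exact (mul_eq_zero.mp (hrow (σ j') j' j hne)).resolve_left (hs j')
  · rw [Nat.div_one, ← Finset.prod_pow]
    exact Finset.prod_eq_one fun j _ => hone j

theorem omega_transpose (k : Type*) [Field k] (n : ℕ) :
    (omegaMat k n)ᵀ = - omegaMat k n := by
  ext i j
  have hi := i.2
  have hj := j.2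
  simp only [Matrix.transpose_apply, omegaMat, Matrix.of_apply, Matrix.neg_apply]
  rw [add_comm (j : ℕ) i]
  split_ifs <;> first | omega | simp

theorem omega_mul_self (k : Type*) [Field k] (n : ℕ) :
    omegaMat k n * omegaMat k n = -1 := by
  ext i j
  have hi := i.2
  have hj := j.2
  rw [Matrix.mul_apply, Finset.sum_eq_single i.rev]
  · simp only [omegaMat, Matrix.of_apply, Matrix.neg_apply, Fin.val_rev, Matrix.one_apply, Fin.ext_iff]
    split_ifs <;> first | omega | simp
  · intro l _ hl
    have hl2 := l.2
    rw [Ne, Fin.ext_iff, Fin.val_rev] at hl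
    simp only [omegaMat, Matrix.of_apply]
    rw [if_neg (by omega), zero_mul]
  · simp

variable {k : Type*} [Field k] {N : Type*} [Fintype N] [DecidableEq N]

theorem form_mul (Ω x y : Matrix N N k) (u v : N → k) :
    Matrix.toLinearMap₂' k Ω (Matrix.toLinAlgEquiv' x u) (Matrix.toLinAlgEquiv' y v) =
      Matrix.toLinearMap₂' k (xᵀ * Ω * y) u v := by
  simp only [Matrix.toLinearMap₂'_apply', Matrix.toLinAlgEquiv'_apply]
  rw [Matrix.mulVec_mulVec, Matrix.dotProduct_mulVec, Matrix.vecMul_mulVec,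
    ← Matrix.dotProduct_mulVec, Matrix.mul_assoc]

theorem form_ext {X Y : Matrix N N k}
    (h : ∀ u v : N → k, Matrix.toLinearMap₂' k X u v = Matrix.toLinearMap₂' k Y u v) : X = Y :=
  (Matrix.toLinearMap₂' k).injective (LinearMap.ext₂ h)

theorem isom_iff (Ω h : Matrix N N k) :
    hᵀ * Ω * h = Ω ↔ ∀ u v : N → k, Matrix.toLinearMap₂' k Ω (Matrix.toLinAlgEquiv' h u)
      (Matrix.toLinAlgEquiv' h v) = Matrix.toLinearMap₂' k Ω u v := by
  constructor
  · intro hh u v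
    rw [form_mul, hh]
  · intro hh
    exact form_ext fun u v => by rw [← form_mul, hh]

theorem anti_iff (Ω x : Matrix N N k) :
    xᵀ * Ω + Ω * x = 0 ↔ ∀ u v : N → k, Matrix.toLinearMap₂' k Ω (Matrix.toLinAlgEquiv' x u) v =
      - Matrix.toLinearMap₂' k Ω u (Matrix.toLinAlgEquiv' x v) := by
  have h1 : ∀ u v : N → k, Matrix.toLinearMap₂' k Ω (Matrix.toLinAlgEquiv' x u) v =
      Matrix.toLinearMap₂' k (xᵀ * Ω) u v := by
    intro u v
    have := form_mul Ω x 1 u v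
    simpa using this
  have h2 : ∀ u v : N → k, Matrix.toLinearMap₂' k Ω u (Matrix.toLinAlgEquiv' x v) =
      Matrix.toLinearMap₂' k (Ω * x) u v := by
    intro u v
    have := form_mul Ω 1 x u v
    simpa using this
  constructor
  · intro h u v
    rw [h1, h2, eq_neg_of_add_eq_zero_left h, map_neg]
    rfl
  · intro h
    refine form_ext fun u v => ?_
    rw [map_add, LinearMap.add_apply, LinearMap.add_apply, ← h1, ← h2, h u v]
    simp

theorem gr_iff (g x : Matrix N N k) (hg : IsUnit g.det) (ζ : k) :
    g * x * g⁻¹ = ζ • x ↔ ∀ v : N → k, Matrix.toLinAlgEquiv' g (Matrix.toLinAlgEquiv' x v) =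
      ζ • Matrix.toLinAlgEquiv' x (Matrix.toLinAlgEquiv' g v) := by
  have h1 : g * x * g⁻¹ = ζ • x ↔ g * x = ζ • (x * g) := by
    constructor
    · intro h
      rw [← smul_mul_assoc, ← h, Matrix.mul_assoc, Matrix.nonsing_inv_mul _ hg, Matrix.mul_one]
    · intro h
      rw [h, smul_mul_assoc, Matrix.mul_assoc, Matrix.mul_nonsing_inv _ hg, Matrix.mul_one]
  rw [h1]
  constructor
  · intro h v
    have := congrArg (fun z => Matrix.toLinAlgEquiv' z v) h
    simpa [map_mul, map_smul] using this
  · intro h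
    apply Matrix.toLinAlgEquiv'.injective
    refine LinearMap.ext fun v => ?_
    rw [map_mul, map_smul, map_mul]
    exact h v

theorem det_unit_of_isom {Ω h : Matrix N N k} (hΩ : IsUnit Ω.det) (hh : hᵀ * Ω * h = Ω) :
    IsUnit h.det := by
  have := congrArg Matrix.det hh
  rw [Matrix.det_mul] at this
  rw [← this] at hΩ
  exact isUnit_of_mul_isUnit_right hΩ

theorem cartanData [IsAlgClosed k] {Ω g : Matrix N N k} {ζ : k} (M : ℕ) (hM : (M : k) ≠ 0)
    (hg : IsUnit g.det) (c : Submodule k (Matrix N N k))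
    (hc : IsCartanSubspace {x | x.transpose * Ω + Ω * x = 0 ∧ g * x * g⁻¹ = ζ • x} c) :
    CartanData (Matrix.toLinearMap₂' k Ω) (Matrix.toLinAlgEquiv' g) ζ M
      (c.map (Matrix.toLinAlgEquiv' : Matrix N N k ≃ₐ[k] _).toLinearMap) := by
  obtain ⟨hsub, hcomm, hss, hmax⟩ := hc
  have hss' : ∀ x ∈ c, End.IsSemisimple (Matrix.toLinAlgEquiv' x) := fun x hx =>
    (isSemisimpleMat_iff x).mp (hss x hx)
  constructor
  · rintro _ ⟨x, hx, rfl⟩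
    exact (anti_iff Ω x).mp (hsub hx).1
  · rintro _ ⟨x, hx, rfl⟩
    exact (gr_iff g x hg ζ).mp (hsub hx).2
  · rintro _ ⟨x, hx, rfl⟩ _ ⟨y, hy, rfl⟩
    have := congrArg (Matrix.toLinAlgEquiv' : Matrix N N k ≃ₐ[k] _) (hcomm x hx y hy)
    rwa [map_mul, map_mul] at this
  · rintro _ ⟨x, hx, rfl⟩
    exact hss' x hx
  · intro y' hanti hgr hcy hyM
    obtain ⟨y, rfl⟩ := (Matrix.toLinAlgEquiv' : Matrix N N k ≃ₐ[k] _).surjective y'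
    have hy1 := (anti_iff Ω y).mpr hanti
    have hy2 := (gr_iff g y hg ζ).mpr hgr
    have hy3 : ∀ x ∈ c, x * y = y * x := by
      intro x hx
      apply (Matrix.toLinAlgEquiv' : Matrix N N k ≃ₐ[k] _).injective
      rw [map_mul, map_mul]
      exact hcy _ ⟨x, hx, rfl⟩
    have hy4 : End.IsSemisimple (Matrix.toLinAlgEquiv' y) := isSemisimple_of_pow M hM _ hyM
    have hform : ∀ z ∈ c ⊔ Submodule.span k {y}, ∃ x ∈ c, ∃ t : k, z = x + t • y := by
      intro z hz
      obtain ⟨x, hx, w, hw, rfl⟩ := Submodule.mem_sup.mp hz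
      obtain ⟨t, rfl⟩ := Submodule.mem_span_singleton.mp hw
      exact ⟨x, hx, t, rfl⟩
    have key := hmax (c ⊔ Submodule.span k {y}) ⟨?_, ?_, ?_⟩ le_sup_left
    · refine ⟨y, ?_, rfl⟩
      rw [← key]
      exact Submodule.mem_sup_right (Submodule.mem_span_singleton_self y)
    · intro z hz
      obtain ⟨x, hx, t, rfl⟩ := hform z hz
      obtain ⟨hx1, hx2⟩ := hsub hx
      constructor
      · have : (x + t • y)ᵀ * Ω + Ω * (x + t • y) = (xᵀ * Ω + Ω * x) + t • (yᵀ * Ω + Ω * y) := by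
          simp only [Matrix.transpose_add, Matrix.transpose_smul, add_mul, mul_add,
            smul_mul_assoc, mul_smul_comm, smul_add]
          abel
        rw [this, hx1, hy1, smul_zero, add_zero]
      · rw [mul_add, add_mul, hx2, mul_smul_comm, smul_mul_assoc, hy2, smul_add, smul_comm]
    · intro z hz z' hz'
      obtain ⟨x, hx, t, rfl⟩ := hform z hz
      obtain ⟨x', hx', t', rfl⟩ := hform z' hz'
      simp only [add_mul, mul_add, smul_mul_assoc, mul_smul_comm, hcomm x hx x' hx', hy3 x hx,
        hy3 x' hx', smul_add, smul_comm t t']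
      abel
    · intro z hz
      obtain ⟨x, hx, t, rfl⟩ := hform z hz
      refine (isSemisimpleMat_iff _).mpr ?_
      have h1 : End.IsSemisimple (t • (Matrix.toLinAlgEquiv' y : End k (N → k))) :=
        End.IsSemisimple_smul t hy4
      have h2 : Commute (Matrix.toLinAlgEquiv' x : End k (N → k))
          (t • (Matrix.toLinAlgEquiv' y : End k (N → k))) :=
        Commute.smul_right (hcy _ ⟨x, hx, rfl⟩) t
      have h3 := (hss' x hx).add_of_commute h2 h1
      rw [← map_smul, ← map_add] at h3
      exact h3

theorem core [IsAlgClosed k] {Ω g : Matrix N N k} {ζ κ : k} {m M r : ℕ} (h2 : (2 : k) ≠ 0)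
    (hΩt : Ωᵀ = -Ω) (hΩu : IsUnit Ω.det) (hm : 0 < m) (hM : (M : k) ≠ 0) (hev : Even M)
    (hζ : IsPrimitiveRoot ζ m) (hζM : ζ ^ M = 1)
    (hroot : ∀ ω : k, ω ^ M = 1 → ∃ a : ℕ, ω = ζ ^ a ∨ ω = - ζ ^ a)
    (hgSp : gᵀ * Ω * g = Ω) (hordm : g ^ m = 1 ∨ g ^ m = -1)
    (hcase : (κ = 1 ∧ ∀ i : ℕ, ζ ^ i = -1 → g ^ (2 * i) = 1) ∨
      (κ = 1 / 2 ∧ ∃ s, m = 2 * s ∧ g ^ m = -1))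
    (c : Submodule k (Matrix N N k))
    (hc : IsCartanSubspace {x | x.transpose * Ω + Ω * x = 0 ∧ g * x * g⁻¹ = ζ • x} c)
    (hr : finrank k c = r) :
    ∃ b : Fin r → Matrix N N k,
      LinearIndependent k b ∧ Submodule.span k (Set.range b) = c ∧
        littleWeylSet {h | h.transpose * Ω * h = Ω ∧ h * g = g * h} c b = GmqrSet k M 1 r := by
  have hM0 : M ≠ 0 := fun h => hM (by rw [h, Nat.cast_zero])
  have hgu := det_unit_of_isom hΩu hgSp
  have hcd := cartanData M hM hgu c hc
  let φ : Matrix N N k ≃ₐ[k] End k (N → k) := Matrix.toLinAlgEquiv'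
  change CartanData (Matrix.toLinearMap₂' k Ω) (φ g) ζ M (c.map φ.toLinearMap) at hcd
  have hr' : finrank k (c.map φ.toLinearMap) = r := by
    rw [← hr]
    exact LinearEquiv.finrank_map_eq φ.toLinearEquiv c
  obtain ⟨β, e, hLI, hspan, he0, he, hbb, hbM⟩ :=
    exists_cartan_basis _ _ ζ M hM0 hev hζM _ hcd r hr'
  have hg' := (isom_iff Ω g).mp hgSp
  have hB : ∀ u v : N → k, Matrix.toLinearMap₂' k Ω u v = - Matrix.toLinearMap₂' k Ω v u := by
    intro u v
    simp only [Matrix.toLinearMap₂'_apply']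
    rw [dotProduct_comm, ← Matrix.vecMul_transpose, hΩt, Matrix.vecMul_neg, neg_dotProduct,
      ← Matrix.dotProduct_mulVec]
  have hnd : ∀ u : N → k, (∀ v : N → k, Matrix.toLinearMap₂' k Ω u v = 0) → u = 0 := by
    intro u hu
    have h1 : ∀ v : N → k, (Matrix.vecMul u Ω) ⬝ᵥ v = 0 := by
      intro v
      rw [← Matrix.dotProduct_mulVec, ← Matrix.toLinearMap₂'_apply']
      exact hu v
    have h3 : Matrix.vecMul u Ω = 0 := dotProduct_eq_zero _ h1
    have h4 := congrArg (fun z => Matrix.vecMul z Ω⁻¹) h3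
    simpa [Matrix.vecMul_vecMul, Matrix.mul_nonsing_inv _ hΩu] using h4
  have hordm' : φ g ^ m = 1 ∨ φ g ^ m = -1 := by
    rcases hordm with h | h
    · left; rw [← map_pow, h, map_one]
    · right; rw [← map_pow, h, map_neg, map_one]
  have hcase' : (κ = 1 ∧ ∀ i : ℕ, ζ ^ i = -1 → φ g ^ (2 * i) = 1) ∨
      (κ = 1 / 2 ∧ ∃ s, m = 2 * s ∧ φ g ^ m = -1) := by
    rcases hcase with ⟨h, h'⟩ | ⟨h, s, hs, h'⟩
    · exact Or.inl ⟨h, fun i hi => by rw [← map_pow, h' i hi, map_one]⟩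
    · exact Or.inr ⟨h, s, hs, by rw [← map_pow, h', map_neg, map_one]⟩
  have hmem : ∀ j, β j ∈ c.map φ.toLinearMap := fun j => by
    rw [← hspan]; exact Submodule.subset_span ⟨j, rfl⟩
  have hgood : ∀ j, ∃ e' f', Good (Matrix.toLinearMap₂' k Ω) (φ g) m κ (β j) e' f' := fun j =>
    exists_good hnd M hM hev h2 hB hζ hm hg' hcase' ⟨hcd.anti _ (hmem j), hcd.gr _ (hmem j)⟩
      (hbM j) (he0 j) (he j)
  choose e' f' hgood using hgood
  let b : Fin r → Matrix N N k := fun j => φ.symm (β j)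
  have hφb : ∀ j, φ (b j) = β j := fun j => φ.apply_symm_apply _
  have hbspan : Submodule.span k (Set.range b) = c := by
    apply Submodule.map_injective_of_injective (f := φ.toLinearMap) φ.injective
    rw [Submodule.map_span, ← hspan, ← Set.range_comp]
    congr 2
    funext j
    exact hφb j
  have hbLI : LinearIndependent k b := by
    apply LinearIndependent.of_comp φ.toLinearMap
    have : (φ.toLinearMap ∘ b) = β := funext hφb
    rw [this]
    exact hLI
  have hbbm : ∀ i j, i ≠ j → b i * b j = 0 := fun i j hij => by
    simp only [b]; rw [← map_mul, hbb i j hij, map_zero]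
  have hbMm : ∀ j, b j ^ (M + 1) = b j := fun j => by
    simp only [b]; rw [← map_pow, hbM]
  refine ⟨b, hbLI, hbspan, Set.Subset.antisymm ?_ ?_⟩
  · rintro w ⟨h, ⟨hh1, hh2⟩, -, -, hw⟩
    have hu := det_unit_of_isom hΩu hh1
    have hi : h⁻¹ * h = 1 := Matrix.nonsing_inv_mul _ hu
    have hconj : ∀ x y : Matrix N N k, h * x * h⁻¹ * (h * y * h⁻¹) = h * (x * y) * h⁻¹ := by
      intro x y
      calc h * x * h⁻¹ * (h * y * h⁻¹) = h * x * (h⁻¹ * h) * y * h⁻¹ := by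
            simp only [Matrix.mul_assoc]
        _ = _ := by rw [hi, Matrix.mul_one]; simp only [Matrix.mul_assoc]
    have hconjp : ∀ (x : Matrix N N k) (p : ℕ), (h * x * h⁻¹) ^ (p + 1) = h * x ^ (p + 1) * h⁻¹ := by
      intro x p
      induction p with
      | zero => simp
      | succ p ih => rw [pow_succ, ih, hconj, ← pow_succ]
    refine forward_mem hM0 hev b (fun j => hbLI.ne_zero j) hbbm hbMm w
      (fun j => h * b j * h⁻¹) hw ?_ ?_ ?_
    · intro j hj
      apply hbLI.ne_zero j
      have : h⁻¹ * (h * b j * h⁻¹) * h = b j := by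
        calc h⁻¹ * (h * b j * h⁻¹) * h = (h⁻¹ * h) * b j * (h⁻¹ * h) := by
              simp only [Matrix.mul_assoc]
          _ = b j := by rw [hi, Matrix.mul_one, Matrix.one_mul]
      rw [← this]
      rw [hj, Matrix.mul_zero, Matrix.zero_mul]
    · intro i j hij
      rw [hconj, hbbm i j hij, Matrix.mul_zero, Matrix.zero_mul]
    · intro j
      rw [hconjp, hbMm]
  · rintro w ⟨σ, hw0, hw1, -⟩
    obtain ⟨h', hh1, hh2, hh3⟩ := exists_h M _ hcd hB h2 hζ hm hg' hordm' β hspan hbb hbM e' f'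
      hgood hroot hM0 σ (fun j => w (σ j) j) hw1
    obtain ⟨h, rfl⟩ := φ.surjective h'
    have hh1' : hᵀ * Ω * h = Ω := (isom_iff Ω h).mpr hh1
    have hu := det_unit_of_isom hΩu hh1'
    have hi : h⁻¹ * h = 1 := Matrix.nonsing_inv_mul _ hu
    have hi' : h * h⁻¹ = 1 := Matrix.mul_nonsing_inv _ hu
    have hω0 : ∀ j, w (σ j) j ≠ 0 := fun j h => by
      have := hw1 j
      rw [h, zero_pow hM0] at this
      exact zero_ne_one this
    have hhb : ∀ j, h * b j = w (σ j) j • (b (σ j) * h) := by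
      intro j
      apply φ.injective
      rw [map_mul, map_smul, map_mul, hφb, hφb]
      exact hh3 j
    have hhb1 : ∀ j, h * b j * h⁻¹ = w (σ j) j • b (σ j) := by
      intro j
      rw [hhb, smul_mul_assoc, Matrix.mul_assoc, hi', Matrix.mul_one]
    have hhb2 : ∀ j, h⁻¹ * b (σ j) * h = (w (σ j) j)⁻¹ • b j := by
      intro j
      have : b (σ j) * h = (w (σ j) j)⁻¹ • (h * b j) := by
        rw [hhb, smul_smul, inv_mul_cancel₀ (hω0 j), one_smul]
      rw [Matrix.mul_assoc, this, mul_smul_comm, ← Matrix.mul_assoc, hi, Matrix.one_mul]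
    have hbmem : ∀ j, b j ∈ c := fun j => by
      rw [← hbspan]; exact Submodule.subset_span ⟨j, rfl⟩
    have hind : ∀ p q : Matrix N N k, (∀ j, p * b j * q ∈ c) → ∀ x ∈ c, p * x * q ∈ c := by
      intro p q hpq x hx
      rw [← hbspan] at hx
      induction hx using Submodule.span_induction with
      | mem x hx => obtain ⟨j, rfl⟩ := hx; exact hpq j
      | zero => simp
      | add x y _ _ hx hy => rw [mul_add, add_mul]; exact c.add_mem hx hy
      | smul t x _ hx => rw [mul_smul_comm, smul_mul_assoc]; exact c.smul_mem t hx
    refine ⟨h, ⟨hh1', ?_⟩, ?_, ?_, ?_⟩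
    · apply φ.injective
      rw [map_mul, map_mul]
      exact hh2
    · exact hind _ _ fun j => by rw [hhb1]; exact c.smul_mem _ (hbmem _)
    · refine hind _ _ fun i => ?_
      obtain ⟨j, rfl⟩ := σ.surjective i
      rw [hhb2]; exact c.smul_mem _ (hbmem _)
    · intro j
      rw [hhb1, Finset.sum_eq_single (σ j)]
      · intro i _ hij
        rw [hw0 i j hij, zero_smul]
      · simp

end Final

end Helpers

/-- little Weyl group of an inner automorphism of `Sp(2n,k)` of
order exactly `m`: with respect to a suitable basis of a Cartan subspace `c`
(of dimension `r`) it equals `G(2m,1,r)` if `m` is odd and `G(m,1,r)` if `m`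
is even. -/
theorem stmt11 {k : Type*} [Field k] [IsAlgClosed k]
    (hchar : ringChar k = 0 ∨ 2 < ringChar k)
    (m : ℕ) (hm : 0 < m) (hmchar : ¬ (ringChar k ∣ m))
    (ζ : k) (hζ : IsPrimitiveRoot ζ m)
    (n : ℕ) (g : Matrix (Fin (2 * n)) (Fin (2 * n)) k)
    (hgSp : g.transpose * omegaMat k n * g = omegaMat k n)
    (hordm : g ^ m = 1 ∨ g ^ m = -1)
    (hordleast : ∀ j : ℕ, 0 < j → j < m → g ^ j ≠ 1 ∧ g ^ j ≠ -1)
    (c : Submodule k (Matrix (Fin (2 * n)) (Fin (2 * n)) k))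
    (hc : IsCartanSubspace
      {x | x.transpose * omegaMat k n + omegaMat k n * x = 0 ∧ g * x * g⁻¹ = ζ • x} c)
    (r : ℕ) (hr : Module.finrank k c = r) :
    ∃ b : Fin r → Matrix (Fin (2 * n)) (Fin (2 * n)) k,
      LinearIndependent k b ∧ Submodule.span k (Set.range b) = c ∧
      (Odd m →
        littleWeylSet {h | h.transpose * omegaMat k n * h = omegaMat k n ∧ h * g = g * h}
          c b = GmqrSet k (2 * m) 1 r) ∧
      (Even m →
        littleWeylSet {h | h.transpose * omegaMat k n * h = omegaMat k n ∧ h * g = g * h}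
          c b = GmqrSet k m 1 r) := by
  have h2 : (2 : k) ≠ 0 := by
    intro h
    have h' : ((2 : ℕ) : k) = 0 := by exact_mod_cast h
    have hd := (ringChar.spec k 2).mp h'
    rcases hchar with h0 | h0
    · rw [h0, zero_dvd_iff] at hd
      omega
    · have := Nat.le_of_dvd (by norm_num) hd
      omega
  have : NeZero m := ⟨hm.ne'⟩
  have hmk : (m : k) ≠ 0 := fun h => hmchar ((ringChar.spec k m).mp h)
  have hΩu : IsUnit (omegaMat k n).det := by
    have h := congrArg Matrix.det (omega_mul_self k n)
    rw [Matrix.det_mul, Matrix.det_neg, Matrix.det_one, mul_one] at h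
    have hu : IsUnit ((-1 : k) ^ Fintype.card (Fin (2 * n))) := (isUnit_one.neg).pow _
    rw [← h] at hu
    exact isUnit_of_mul_isUnit_left hu
  rcases Nat.even_or_odd m with hev | hodd
  · have hroot : ∀ ω : k, ω ^ m = 1 → ∃ a : ℕ, ω = ζ ^ a ∨ ω = - ζ ^ a := by
      intro ω hω
      obtain ⟨a, -, ha⟩ := hζ.eq_pow_of_pow_eq_one hω
      exact ⟨a, Or.inl ha.symm⟩
    have hcase : ∃ κ : k, (κ = 1 ∧ ∀ i : ℕ, ζ ^ i = -1 → g ^ (2 * i) = 1) ∨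
        (κ = 1 / 2 ∧ ∃ s, m = 2 * s ∧ g ^ m = -1) := by
      rcases hordm with h | h
      · refine ⟨1, Or.inl ⟨rfl, fun i hi => ?_⟩⟩
        have h1 : ζ ^ (2 * i) = 1 := by rw [mul_comm, pow_mul, hi]; norm_num
        obtain ⟨t, ht⟩ := hζ.dvd_of_pow_eq_one _ h1
        rw [ht, pow_mul, h, one_pow]
      · obtain ⟨s, hs⟩ := hev
        exact ⟨1 / 2, Or.inr ⟨rfl, s, by omega, h⟩⟩
    obtain ⟨κ, hcase⟩ := hcase
    obtain ⟨b, hb1, hb2, hb3⟩ := core h2 (omega_transpose k n) hΩu hm hmk hev hζ hζ.pow_eq_one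
      hroot hgSp hordm hcase c hc hr
    exact ⟨b, hb1, hb2, fun ho => absurd hev (Nat.not_even_iff_odd.mpr ho), fun _ => hb3⟩
  · have hroot : ∀ ω : k, ω ^ (2 * m) = 1 → ∃ a : ℕ, ω = ζ ^ a ∨ ω = - ζ ^ a := by
      intro ω hω
      rw [mul_comm, pow_mul] at hω
      rcases eq_or_eq_neg_of_sq_eq_sq _ _ (hω.trans (one_pow 2).symm) with h | h
      · obtain ⟨a, -, ha⟩ := hζ.eq_pow_of_pow_eq_one h
        exact ⟨a, Or.inl ha.symm⟩
      · have h' : (-ω) ^ m = 1 := by rw [hodd.neg_pow, h, neg_neg]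
        obtain ⟨a, -, ha⟩ := hζ.eq_pow_of_pow_eq_one h'
        exact ⟨a, Or.inr (by rw [ha, neg_neg])⟩
    have hcase : ((1 : k) = 1 ∧ ∀ i : ℕ, ζ ^ i = -1 → g ^ (2 * i) = 1) ∨
        ((1 : k) = 1 / 2 ∧ ∃ s, m = 2 * s ∧ g ^ m = -1) := by
      refine Or.inl ⟨rfl, fun i hi => ?_⟩
      exfalso
      have h1 : (ζ ^ i) ^ m = 1 := by rw [← pow_mul, mul_comm, pow_mul, hζ.pow_eq_one, one_pow]
      rw [hi, hodd.neg_one_pow] at h1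
      apply h2
      calc (2 : k) = 1 - (-1) := by norm_num
        _ = 0 := by rw [h1, sub_self]
    obtain ⟨b, hb1, hb2, hb3⟩ := core (M := 2 * m) h2 (omega_transpose k n) hΩu hm
      (by push_cast; exact mul_ne_zero h2 hmk) (even_two_mul m) hζ
      (by rw [mul_comm, pow_mul, hζ.pow_eq_one, one_pow])
      hroot hgSp hordm hcase c hc hr
    exact ⟨b, hb1, hb2, fun _ => hb3, fun he => absurd he (Nat.not_even_iff_odd.mpr hodd)⟩
end
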